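/- arXiv:1112.5677 — 2 statements merged into one kernel-verified Lean document; each statement's English description precedes it below -/
import Mathlib

section
/- Suppose ω(2δ) < 2ω(δ) for all sufficiently small δ > 0. Then there exists a nowhere linear C^{1,ω}-diffeomorphism h of the circle 𝕋 such that for every p with 1 ≤ p < 2, ‖e^{inh}‖_{A_p(𝕋)} = O(Θ_p(|n|)) as |n| → ∞, n ∈ ℤ, where Θ_1(y) = (y/log y)·χ^{-1}((log y)²/y) and Θ_p(y) = (∫₁^y (χ^{-1}(1/τ))^p dτ)^{1/p} for 1 < p < 2. -/
open MeasureTheory Real Set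
open scoped ENNReal

/-- The k-th Fourier coefficient of a (2π-periodic) function on the circle,
identified with a function on [0, 2π]. -/
noncomputable def fourierCoef (f : ℝ → ℂ) (k : ℤ) : ℂ :=
  (1 / (2 * (Real.pi : ℂ))) *
    ∫ t in (0:ℝ)..(2 * Real.pi), f t * Complex.exp (-Complex.I * (k : ℂ) * (t : ℂ))

/-- The A_p(𝕋) norm: ℓ^p norm of the sequence of Fourier coefficients
(valued in ℝ≥0∞ so that divergence gives ∞). -/
noncomputable def ApNorm (p : ℝ) (f : ℝ → ℂ) : ℝ≥0∞ :=
  (∑' k : ℤ, ((‖fourierCoef f k‖₊ : ℝ≥0∞) ^ p)) ^ (1 / p)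

/-!
The diffeomorphism `h` is the identity plus a sum of bumps whose derivatives are assembled from
Cantor staircases with scales adapted to `ω`. The bumps are placed densely, each on an interval
where all earlier ones are affine, so that adding one to `h` changes the Fourier coefficients of the
exponential by at most the Fourier integral of a single bump. By van der Corput's lemma that
integral is at most `40 * y` unless the frequency lies within `1 / y` of one of the slopes of the
phase on the plateaus of the staircase. Counting these frequencies at the levels `y = χ⁻¹(2⁻ⁱ)`
bounds the `ℓ^p` norm of the change by the growth rate `Θ_p`. The amplitudes decay doubly
exponentially, so that the bounds for the successive bumps decay geometrically, uniformly in `n`.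
-/

/-- A sequence of scales in which each scale is more than twice the next one: the lengths of the
intervals of successive generations in the construction of a Cantor set. -/
structure IsHalvingScale (δ : ℕ → ℝ) : Prop where
  pos : ∀ n, 0 < δ n
  two_mul_succ_lt : ∀ n, 2 * δ (n + 1) < δ n

/-- The Heaviside step at `δ n`, refined `k` times by replacing a step with the average of its
copies on the two subintervals of the next generation. -/
noncomputable def stairApprox (δ : ℕ → ℝ) : ℕ → ℕ → ℝ → ℝ
  | 0, n, t => if δ n ≤ t then 1 else 0
  | k + 1, n, t =>
      (stairApprox δ k (n + 1) t + stairApprox δ k (n + 1) (t - (δ n - δ (n + 1)))) / 2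

/-- The Cantor staircase climbing from `0` to `1` on `[0, δ n]`, whose graph over each of the two
subintervals of length `δ (n + 1)` at the ends of `[0, δ n]` is a copy of the staircase of index
`n + 1` at half the height. -/
noncomputable def cantorStair (δ : ℕ → ℝ) (n : ℕ) (t : ℝ) : ℝ :=
  ⨆ k, stairApprox δ k n t

theorem stairApprox_mono (δ : ℕ → ℝ) (k n : ℕ) : Monotone (stairApprox δ k n) := by
  induction k generalizing n with
  | zero =>
    intro s t hst
    simp only [stairApprox]
    split_ifs <;> linarith
  | succ k ih =>
    intro s t hst
    have h₁ := ih (n + 1) hst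
    have h₂ := ih (n + 1) (sub_le_sub_right hst (δ n - δ (n + 1)))
    simp only [stairApprox]
    linarith

theorem stairApprox_mem_Icc (δ : ℕ → ℝ) (k n : ℕ) (t : ℝ) : stairApprox δ k n t ∈ Icc 0 1 := by
  induction k generalizing n t with
  | zero => simp only [stairApprox]; split_ifs <;> simp
  | succ k ih =>
    obtain ⟨h₁, h₂⟩ := ih (n + 1) t
    obtain ⟨h₃, h₄⟩ := ih (n + 1) (t - (δ n - δ (n + 1)))
    constructor <;> simp only [stairApprox] <;> linarith

namespace IsHalvingScale

variable {δ : ℕ → ℝ} (hδ : IsHalvingScale δ)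
include hδ

theorem antitone : Antitone δ :=
  antitone_nat_of_succ_le fun n ↦ by linarith [hδ.pos (n + 1), hδ.two_mul_succ_lt n]

theorem add_le (n k : ℕ) : δ (n + k) ≤ δ n * (1 / 2) ^ k := by
  induction k with
  | zero => simp
  | succ k ih =>
    have := hδ.two_mul_succ_lt (n + k)
    rw [← add_assoc, pow_succ]
    linarith

theorem exists_add_lt (n : ℕ) {ε : ℝ} (hε : 0 < ε) : ∃ k, δ (n + k) < ε := by
  obtain ⟨k, hk⟩ := exists_pow_lt_of_lt_one (div_pos hε (hδ.pos n)) one_half_lt_one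
  rw [lt_div_iff₀' (hδ.pos n)] at hk
  exact ⟨k, (hδ.add_le n k).trans_lt hk⟩

theorem stairApprox_of_nonpos (k n : ℕ) {t : ℝ} (ht : t ≤ 0) : stairApprox δ k n t = 0 := by
  induction k generalizing n t with
  | zero => simp [stairApprox, ht.trans_lt (hδ.pos n)]
  | succ k ih =>
    have := hδ.antitone n.le_succ
    simp [stairApprox, ih (n + 1) ht, ih (n + 1) (t := t - (δ n - δ (n + 1))) (by linarith)]

theorem stairApprox_of_le (k n : ℕ) {t : ℝ} (ht : δ n ≤ t) : stairApprox δ k n t = 1 := by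
  induction k generalizing n t with
  | zero => simp [stairApprox, ht]
  | succ k ih =>
    have := hδ.antitone n.le_succ
    norm_num [stairApprox, ih (n + 1) (this.trans ht),
      ih (n + 1) (t := t - (δ n - δ (n + 1))) (by linarith)]

theorem stairApprox_le_succ (k n : ℕ) (t : ℝ) :
    stairApprox δ k n t ≤ stairApprox δ (k + 1) n t := by
  induction k generalizing n t with
  | zero =>
    by_cases h : δ n ≤ t
    · rw [hδ.stairApprox_of_le _ _ h, hδ.stairApprox_of_le _ _ h]
    · simpa [stairApprox.eq_1, h] using (stairApprox_mem_Icc δ 1 n t).1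
  | succ k ih =>
    have h₁ := ih (n + 1) t
    have h₂ := ih (n + 1) (t - (δ n - δ (n + 1)))
    rw [stairApprox, stairApprox]
    linarith

theorem tendsto_stairApprox (n : ℕ) (t : ℝ) :
    Filter.Tendsto (fun k ↦ stairApprox δ k n t) Filter.atTop (nhds (cantorStair δ n t)) :=
  tendsto_atTop_ciSup (monotone_nat_of_le_succ fun k ↦ hδ.stairApprox_le_succ k n t)
    ⟨1, by rintro _ ⟨k, rfl⟩; exact (stairApprox_mem_Icc δ k n t).2⟩

theorem cantorStair_mono (n : ℕ) : Monotone (cantorStair δ n) := fun s t hst ↦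
  le_of_tendsto_of_tendsto' (hδ.tendsto_stairApprox n s) (hδ.tendsto_stairApprox n t)
    fun k ↦ stairApprox_mono δ k n hst

theorem cantorStair_of_nonpos (n : ℕ) {t : ℝ} (ht : t ≤ 0) : cantorStair δ n t = 0 := by
  simp [cantorStair, hδ.stairApprox_of_nonpos _ n ht]

theorem cantorStair_of_le (n : ℕ) {t : ℝ} (ht : δ n ≤ t) : cantorStair δ n t = 1 := by
  simp [cantorStair, hδ.stairApprox_of_le _ n ht]

theorem cantorStair_nonneg (n : ℕ) (t : ℝ) : 0 ≤ cantorStair δ n t := by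
  rw [← hδ.cantorStair_of_nonpos n (min_le_right t 0)]
  exact hδ.cantorStair_mono n (min_le_left _ _)

theorem cantorStair_le_one (n : ℕ) (t : ℝ) : cantorStair δ n t ≤ 1 := by
  rw [← hδ.cantorStair_of_le n (le_max_right t (δ n))]
  exact hδ.cantorStair_mono n (le_max_left _ _)

theorem cantorStair_eq_average (n : ℕ) (t : ℝ) :
    cantorStair δ n t =
      (cantorStair δ (n + 1) t + cantorStair δ (n + 1) (t - (δ n - δ (n + 1)))) / 2 :=
  tendsto_nhds_unique ((hδ.tendsto_stairApprox n t).comp (Filter.tendsto_add_atTop_nat 1))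
    (((hδ.tendsto_stairApprox (n + 1) t).add
      (hδ.tendsto_stairApprox (n + 1) (t - (δ n - δ (n + 1))))).div_const 2)

theorem cantorStair_left (n : ℕ) {t : ℝ} (ht : t ≤ δ n - δ (n + 1)) :
    cantorStair δ n t = cantorStair δ (n + 1) t / 2 := by
  rw [hδ.cantorStair_eq_average, hδ.cantorStair_of_nonpos (n + 1) (sub_nonpos.2 ht), add_zero]

theorem cantorStair_right (n : ℕ) {t : ℝ} (ht : δ (n + 1) ≤ t) :
    cantorStair δ n t = (1 + cantorStair δ (n + 1) (t - (δ n - δ (n + 1)))) / 2 := by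
  rw [hδ.cantorStair_eq_average, hδ.cantorStair_of_le (n + 1) ht]

theorem cantorStair_le_pow (n k : ℕ) {t : ℝ} (ht : t ≤ δ (n + k)) :
    cantorStair δ n t ≤ (1 / 2) ^ k := by
  induction k generalizing n t with
  | zero => simpa using hδ.cantorStair_le_one n t
  | succ k ih =>
    rw [← Nat.succ_add_eq_add_succ] at ht
    have := ih (n + 1) ht
    rw [hδ.cantorStair_left n, pow_succ]
    · linarith
    · linarith [hδ.antitone (Nat.le_add_right (n + 1) k), hδ.two_mul_succ_lt n]

theorem one_sub_cantorStair_le_pow (n k : ℕ) {t : ℝ} (ht : δ n - δ (n + k) ≤ t) :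
    1 - cantorStair δ n t ≤ (1 / 2) ^ k := by
  induction k generalizing n t with
  | zero => simpa using hδ.cantorStair_nonneg n t
  | succ k ih =>
    rw [← Nat.succ_add_eq_add_succ] at ht
    have := ih (n + 1) (t := t - (δ n - δ (n + 1))) (by linarith)
    rw [hδ.cantorStair_right n, pow_succ]
    · linarith
    · linarith [hδ.antitone (Nat.le_add_right (n + 1) k), hδ.two_mul_succ_lt n]

theorem cantorStair_sub_le (n k : ℕ) {s t : ℝ} (hst : s ≤ t) (ht : t - s ≤ δ (n + k)) :
    cantorStair δ n t - cantorStair δ n s ≤ 2 * (1 / 2) ^ k := by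
  induction k generalizing n s t with
  | zero => linarith [hδ.cantorStair_nonneg n s, hδ.cantorStair_le_one n t]
  | succ k ih =>
    rw [← Nat.succ_add_eq_add_succ] at ht
    have hgap := hδ.two_mul_succ_lt n
    rw [pow_succ]
    rcases le_or_gt t (δ n - δ (n + 1)) with hleft | hleft
    · have := ih (n + 1) hst ht
      rw [hδ.cantorStair_left n hleft, hδ.cantorStair_left n (hst.trans hleft)]
      linarith
    rcases le_or_gt (δ (n + 1)) s with hright | hright
    · have := ih (n + 1) (sub_le_sub_right hst (δ n - δ (n + 1))) (by linarith)
      rw [hδ.cantorStair_right n (hright.trans hst), hδ.cantorStair_right n hright]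
      linarith
    have h₁ := hδ.cantorStair_le_pow (n + 1) k (t := t - (δ n - δ (n + 1))) (by linarith)
    have h₂ := hδ.one_sub_cantorStair_le_pow (n + 1) k (t := s) (by linarith)
    rw [hδ.cantorStair_right n (by linarith), hδ.cantorStair_left n (by linarith)]
    linarith

theorem continuous_cantorStair (n : ℕ) : Continuous (cantorStair δ n) := by
  refine Metric.continuous_iff.2 fun t ε hε ↦ ?_
  obtain ⟨k, hk⟩ := exists_pow_lt_of_lt_one (half_pos hε) one_half_lt_one
  refine ⟨δ (n + k), hδ.pos _, fun s hs ↦ ?_⟩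
  rw [Real.dist_eq, abs_lt] at hs ⊢
  rcases le_total s t with hst | hst
  · have h₁ := hδ.cantorStair_sub_le n k hst (by linarith)
    have h₂ := hδ.cantorStair_mono n hst
    constructor <;> linarith
  · have h₁ := hδ.cantorStair_sub_le n k hst (by linarith)
    have h₂ := hδ.cantorStair_mono n hst
    constructor <;> linarith

theorem exists_plateau (n k : ℕ) {s t : ℝ} (hst : s < t) (ht : δ (n + k) < t - s) :
    ∃ (j : ℤ) (u v : ℝ), s ≤ u ∧ u < v ∧ v ≤ t ∧ ∀ x ∈ Ioo u v, cantorStair δ n x = j / 2 ^ k := by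
  induction k generalizing n s t with
  | zero =>
    rcases lt_or_ge s 0 with hs | hs
    · refine ⟨0, s, min t 0, le_rfl, lt_min hst hs, min_le_left _ _, fun x hx ↦ ?_⟩
      simp [hδ.cantorStair_of_nonpos n (hx.2.le.trans (min_le_right _ _))]
    · refine ⟨1, max s (δ n), t, le_max_left _ _, max_lt hst ?_, le_rfl, fun x hx ↦ ?_⟩
      · rw [add_zero] at ht
        linarith
      · simp [hδ.cantorStair_of_le n ((le_max_right _ _).trans hx.1.le)]
  | succ k ih =>
    rw [← Nat.succ_add_eq_add_succ] at ht
    have hgap := hδ.two_mul_succ_lt n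
    rcases le_or_gt t (δ n - δ (n + 1)) with hleft | hleft
    · obtain ⟨j, u, v, hsu, huv, hvt, hj⟩ := ih (n + 1) hst ht
      refine ⟨j, u, v, hsu, huv, hvt, fun x hx ↦ ?_⟩
      rw [hδ.cantorStair_left n (by linarith [hx.2]), hj x hx, pow_succ, div_div]
    rcases le_or_gt (δ (n + 1)) s with hright | hright
    · obtain ⟨j, u, v, hsu, huv, hvt, hj⟩ :=
        ih (n + 1) (sub_lt_sub_right hst (δ n - δ (n + 1))) (by linarith)
      refine ⟨2 ^ k + j, u + (δ n - δ (n + 1)), v + (δ n - δ (n + 1)), by linarith, by linarith,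
        by linarith, fun x hx ↦ ?_⟩
      rw [hδ.cantorStair_right n (by linarith [hx.1]),
        hj _ ⟨by linarith [hx.1], by linarith [hx.2]⟩, pow_succ]
      push_cast
      field
    · refine ⟨2 ^ k, δ (n + 1), δ n - δ (n + 1), hright.le, by linarith, hleft.le, fun x hx ↦ ?_⟩
      rw [hδ.cantorStair_left n hx.2.le, hδ.cantorStair_of_le _ hx.1.le, pow_succ]
      push_cast
      field

end IsHalvingScale

section VanDerCorput

open Topology

theorem norm_sub_le_of_eventually_nhdsGT {E : Type*} [NormedAddCommGroup E] {f : ℝ → E} {g : ℝ → ℝ}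
    {a b : ℝ} (hab : a ≤ b) (hf : ContinuousOn f (Icc a b)) (hg : ContinuousOn g (Icc a b))
    (h : ∀ x ∈ Ico a b, ∀ᶠ y in 𝓝[>] x, ‖f y - f x‖ ≤ g y - g x) :
    ‖f b - f a‖ ≤ g b - g a := by
  suffices Icc a b ⊆ {x | ‖f x - f a‖ ≤ g x - g a} from this ⟨hab, le_rfl⟩
  refine IsClosed.Icc_subset_of_forall_mem_nhdsWithin ?_ (by simp) fun x ⟨hx, hxab⟩ ↦ ?_
  · rw [inter_comm]
    exact isClosed_Icc.isClosed_le (hf.sub continuousOn_const).norm (hg.sub continuousOn_const)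
  · filter_upwards [h x hxab] with y hy
    rw [mem_ofPred_eq] at hx
    linarith [norm_sub_le_norm_sub_add_norm_sub (f y) (f x) (f a)]

theorem monotoneOn_or_antitoneOn_inv {f : ℝ → ℝ} {s : Set ℝ} [OrdConnected s]
    (hc : ContinuousOn f s) (hne : ∀ t ∈ s, f t ≠ 0) (hf : MonotoneOn f s ∨ AntitoneOn f s) :
    MonotoneOn (fun t ↦ (f t)⁻¹) s ∨ AntitoneOn (fun t ↦ (f t)⁻¹) s := by
  have hsign : MapsTo f s (Ioi 0) ∨ MapsTo f s (Iio 0) := by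
    by_contra! hcon
    simp only [MapsTo, mem_Ioi, mem_Iio, not_forall, not_lt] at hcon
    obtain ⟨⟨u, hu, hfu⟩, v, hv, hfv⟩ := hcon
    obtain ⟨x, hx, hx0⟩ :=
      (OrdConnected.isPreconnected ‹_›).intermediate_value hu hv hc ⟨hfu, hfv⟩
    exact hne x hx hx0
  rcases hsign with h | h <;> rcases hf with hf | hf
  · exact .inr (inv_antitoneOn_Ioi.comp_MonotoneOn hf h)
  · exact .inl (inv_antitoneOn_Ioi.comp hf h)
  · exact .inr (inv_antitoneOn_Iio.comp_MonotoneOn hf h)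
  · exact .inl (inv_antitoneOn_Iio.comp hf h)

variable {φ φ' V : ℝ → ℝ} {a b ρ : ℝ}

theorem norm_integral_cexp_le (φ : ℝ → ℝ) (hab : a ≤ b) :
    ‖∫ t in a..b, Complex.exp (Complex.I * φ t)‖ ≤ b - a := by
  simpa [abs_of_nonneg (sub_nonneg.2 hab)] using
    intervalIntegral.norm_integral_le_of_norm_le_const (a := a) (b := b) (C := 1)
      (f := fun t ↦ Complex.exp (Complex.I * φ t)) fun t _ ↦ (Complex.norm_exp_I_mul_ofReal _).le

variable (hφ : ∀ t, HasDerivAt φ (φ' t) t) (hφ' : Continuous φ')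
include hφ

theorem intervalIntegrable_cexp_phase (a b : ℝ) :
    IntervalIntegrable (fun t ↦ Complex.exp (Complex.I * φ t)) volume a b := by
  have hc : Continuous φ := continuous_iff_continuousAt.2 fun t ↦ (hφ t).continuousAt
  exact Continuous.intervalIntegrable (by fun_prop) a b

include hφ'

theorem integral_cexp_phase_eq (a b c d : ℝ) :
    (∫ t in a..b, Complex.exp (Complex.I * φ t)) +
        Complex.I * Complex.exp (Complex.I * φ b) * (d : ℂ) -
        Complex.I * Complex.exp (Complex.I * φ a) * (c : ℂ) =
      Complex.I * Complex.exp (Complex.I * φ b) * ((d - c : ℝ) : ℂ) +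
        ∫ t in a..b, Complex.exp (Complex.I * φ t) * ((1 - φ' t * c : ℝ) : ℂ) := by
  have hc : Continuous φ := continuous_iff_continuousAt.2 fun t ↦ (hφ t).continuousAt
  have hftc : ∫ t in a..b, Complex.exp (Complex.I * φ t) * (Complex.I * φ' t) =
      Complex.exp (Complex.I * φ b) - Complex.exp (Complex.I * φ a) :=
    intervalIntegral.integral_eq_sub_of_hasDerivAt
      (fun t _ ↦ ((hφ t).ofReal_comp.const_mul Complex.I).cexp)
      (Continuous.intervalIntegrable (by fun_prop) a b)
  have hsplit : ∫ t in a..b, Complex.exp (Complex.I * φ t) * ((1 - φ' t * c : ℝ) : ℂ) =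
      (∫ t in a..b, Complex.exp (Complex.I * φ t)) + Complex.I * c *
        ∫ t in a..b, Complex.exp (Complex.I * φ t) * (Complex.I * φ' t) := by
    rw [← intervalIntegral.integral_const_mul, ← intervalIntegral.integral_add
      (intervalIntegrable_cexp_phase hφ a b) (Continuous.intervalIntegrable (by fun_prop) a b)]
    congr 1
    ext t
    push_cast
    linear_combination (-Complex.exp (Complex.I * φ t) * φ' t * c) * Complex.I_sq
  rw [hsplit, hftc]
  push_cast
  ring

theorem norm_integral_cexp_add_boundary_le_local {c d ε : ℝ} (hab : a ≤ b)
    (hε : ∀ t ∈ Icc a b, |1 - φ' t * c| ≤ ε) :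
    ‖(∫ t in a..b, Complex.exp (Complex.I * φ t)) +
      Complex.I * Complex.exp (Complex.I * φ b) * (d : ℂ) -
      Complex.I * Complex.exp (Complex.I * φ a) * (c : ℂ)‖ ≤ |d - c| + ε * (b - a) := by
  rw [integral_cexp_phase_eq hφ hφ']
  refine (norm_add_le _ _).trans (add_le_add (by simp [-Complex.ofReal_sub]) ?_)
  refine (intervalIntegral.norm_integral_le_of_norm_le_const fun t ht ↦ ?_).trans_eq
    (by rw [abs_of_nonneg (sub_nonneg.2 hab)])
  rw [uIoc_of_le hab] at ht
  rw [norm_mul, Complex.norm_exp_I_mul_ofReal, one_mul, Complex.norm_real, Real.norm_eq_abs]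
  exact hε t (Ioc_subset_Icc_self ht)

/- The amplitude `1 / φ'` of the boundary terms only has bounded variation, so integration by parts
is replaced by a mean value argument, with an error `ε` per unit of length. -/
theorem norm_integral_cexp_add_boundary_le (hab : a ≤ b) (hne : ∀ t ∈ Icc a b, φ' t ≠ 0)
    (hV : ContinuousOn V (Icc a b))
    (hVφ : ∀ s ∈ Icc a b, ∀ t ∈ Icc a b, s ≤ t → |(φ' t)⁻¹ - (φ' s)⁻¹| ≤ V t - V s) :
    ‖(∫ t in a..b, Complex.exp (Complex.I * φ t)) +
      Complex.I * Complex.exp (Complex.I * φ b) * ((φ' b)⁻¹ : ℝ) -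
      Complex.I * Complex.exp (Complex.I * φ a) * ((φ' a)⁻¹ : ℝ)‖ ≤ V b - V a := by
  have hc : Continuous φ := continuous_iff_continuousAt.2 fun t ↦ (hφ t).continuousAt
  have hint := intervalIntegrable_cexp_phase hφ
  set F : ℝ → ℂ := fun x ↦ (∫ t in a..x, Complex.exp (Complex.I * φ t)) +
    Complex.I * Complex.exp (Complex.I * φ x) * ((φ' x)⁻¹ : ℝ) with hF
  have hFc : ContinuousOn F (Icc a b) := by
    have hprim := (intervalIntegral.continuous_primitive hint a).continuousOn (s := Icc a b)
    have hinv := Complex.continuous_ofReal.comp_continuousOn (hφ'.continuousOn.inv₀ hne)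
    exact hprim.add ((Continuous.continuousOn (by fun_prop)).mul hinv)
  have hFsub (x y : ℝ) : F y - F x = (∫ t in x..y, Complex.exp (Complex.I * φ t)) +
      Complex.I * Complex.exp (Complex.I * φ y) * ((φ' y)⁻¹ : ℝ) -
      Complex.I * Complex.exp (Complex.I * φ x) * ((φ' x)⁻¹ : ℝ) := by
    simp only [hF]
    rw [← intervalIntegral.integral_add_adjacent_intervals (hint a x) (hint x y)]
    ring
  have happrox : ∀ ε > 0, ‖F b - F a‖ ≤ (V b + ε * b) - (V a + ε * a) := by
    intro ε hε
    refine norm_sub_le_of_eventually_nhdsGT (g := fun t ↦ V t + ε * t) hab hFc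
      (by fun_prop) fun x hx ↦ ?_
    have hnear : ∀ᶠ t in 𝓝 x, |1 - φ' t * (φ' x)⁻¹| < ε :=
      Filter.Tendsto.eventually_lt_const (by simpa [hne x (Ico_subset_Icc_self hx)] using hε)
        (show ContinuousAt (fun t ↦ |1 - φ' t * (φ' x)⁻¹|) x by fun_prop)
    obtain ⟨η, hη, hball⟩ := Metric.eventually_nhds_iff.1 hnear
    filter_upwards [Ioo_mem_nhdsGT hx.2, Ioo_mem_nhdsGT (lt_add_of_pos_right x hη)] with y hyb hyη
    have hstep := norm_integral_cexp_add_boundary_le_local hφ hφ' (c := (φ' x)⁻¹) (d := (φ' y)⁻¹)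
      hyb.1.le fun t ht ↦ (hball (y := t) (abs_lt.2
        ⟨by linarith [ht.1], by linarith [ht.2, hyη.2]⟩)).le
    have hvar := hVφ x (Ico_subset_Icc_self hx) y ⟨hx.1.trans hyb.1.le, hyb.2.le⟩ hyb.1.le
    rw [hFsub]
    linarith
  rw [← hFsub]
  refine le_of_forall_pos_le_add fun ε hε ↦
    (happrox (ε / (b - a + 1)) (div_pos hε (by linarith))).trans ?_
  have : ε / (b - a + 1) * (b - a) ≤ ε := by
    rw [div_mul_eq_mul_div, div_le_iff₀ (by linarith)]
    nlinarith
  linarith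

theorem norm_integral_cexp_le_of_variation (hab : a ≤ b) (hρ : 0 < ρ)
    (hρφ : ∀ t ∈ Icc a b, ρ ≤ |φ' t|) (hV : ContinuousOn V (Icc a b))
    (hVφ : ∀ s ∈ Icc a b, ∀ t ∈ Icc a b, s ≤ t → |(φ' t)⁻¹ - (φ' s)⁻¹| ≤ V t - V s) :
    ‖∫ t in a..b, Complex.exp (Complex.I * φ t)‖ ≤ V b - V a + 2 / ρ := by
  have hmain := norm_integral_cexp_add_boundary_le hφ hφ' hab
    (fun t ht ↦ abs_pos.1 (hρ.trans_le (hρφ t ht))) hV hVφ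
  have hbdry : ∀ t ∈ Icc a b,
      ‖Complex.I * Complex.exp (Complex.I * φ t) * ((φ' t)⁻¹ : ℝ)‖ ≤ 1 / ρ := fun t ht ↦ by
    simpa [abs_inv] using inv_anti₀ hρ (hρφ t ht)
  have ha := hbdry a ⟨le_rfl, hab⟩
  have hb := hbdry b ⟨hab, le_rfl⟩
  set X := ∫ t in a..b, Complex.exp (Complex.I * φ t)
  set Y := Complex.I * Complex.exp (Complex.I * φ b) * ((φ' b)⁻¹ : ℝ)
  set Z := Complex.I * Complex.exp (Complex.I * φ a) * ((φ' a)⁻¹ : ℝ)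
  calc ‖X‖ = ‖X + Y - Z - Y + Z‖ := by congr 1; ring
    _ ≤ ‖X + Y - Z‖ + ‖Y‖ + ‖Z‖ :=
      (norm_add_le _ _).trans (add_le_add_left (norm_sub_le _ _) _)
    _ ≤ V b - V a + 1 / ρ + 1 / ρ := by gcongr
    _ = V b - V a + 2 / ρ := by ring

theorem norm_integral_cexp_le_of_monotone (hab : a ≤ b) (hρ : 0 < ρ)
    (hmono : MonotoneOn φ' (Icc a b) ∨ AntitoneOn φ' (Icc a b))
    (hρφ : ∀ t ∈ Ioo a b, ρ ≤ |φ' t|) :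
    ‖∫ t in a..b, Complex.exp (Complex.I * φ t)‖ ≤ 4 / ρ := by
  rcases hab.eq_or_lt with rfl | hlt
  · simp only [intervalIntegral.integral_same, norm_zero]
    positivity
  replace hρφ : ∀ t ∈ Icc a b, ρ ≤ |φ' t| := by
    rw [← closure_Ioo hlt.ne]
    exact closure_minimal hρφ (isClosed_le continuous_const hφ'.abs)
  have hne : ∀ t ∈ Icc a b, φ' t ≠ 0 := fun t ht ↦ abs_pos.1 (hρ.trans_le (hρφ t ht))
  have : ContinuousOn (fun t ↦ (φ' t)⁻¹) (Icc a b) := hφ'.continuousOn.inv₀ hne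
  obtain ⟨σ, hσ, hσmono⟩ : ∃ σ : ℝ, |σ| = 1 ∧ MonotoneOn (fun t ↦ σ * (φ' t)⁻¹) (Icc a b) := by
    rcases monotoneOn_or_antitoneOn_inv hφ'.continuousOn hne hmono with h | h
    · exact ⟨1, abs_one, by simpa using h⟩
    · exact ⟨-1, by simp, by simpa using h.neg⟩
  have hle : ∀ t ∈ Icc a b, |σ * (φ' t)⁻¹| ≤ 1 / ρ := fun t ht ↦ by
    simpa [abs_mul, hσ, abs_inv] using inv_anti₀ hρ (hρφ t ht)
  have hbound := norm_integral_cexp_le_of_variation (V := fun t ↦ σ * (φ' t)⁻¹) hφ hφ' hab hρ hρφ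
    (by fun_prop) fun s hs t ht hst ↦ by
      rw [← one_mul |_|, ← hσ, ← abs_mul, mul_sub,
        abs_of_nonneg (sub_nonneg.2 (hσmono hs ht hst))]
  have ha := abs_le.1 (hle a ⟨le_rfl, hab⟩)
  have hb := abs_le.1 (hle b ⟨hab, le_rfl⟩)
  calc _ ≤ _ := hbound
    _ ≤ 1 / ρ + 1 / ρ + 2 / ρ := by linarith
    _ = 4 / ρ := by ring

theorem norm_integral_cexp_le_of_sublevel {y : ℝ} (hab : a ≤ b) (hρ : 0 < ρ) (hy : 0 ≤ y)
    (hmono : MonotoneOn φ' (Icc a b) ∨ AntitoneOn φ' (Icc a b))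
    (hsub : ∀ s ∈ Icc a b, ∀ t ∈ Icc a b, s ≤ t → |φ' s| ≤ ρ → |φ' t| ≤ ρ → t - s ≤ y) :
    ‖∫ t in a..b, Complex.exp (Complex.I * φ t)‖ ≤ y + 8 / ρ := by
  have h8 : 8 / ρ = 4 / ρ + 4 / ρ := by ring
  have h4 : 0 < 4 / ρ := by positivity
  set E := Icc a b ∩ {t | |φ' t| ≤ ρ}
  have hEc : IsCompact E := isCompact_Icc.inter_right (isClosed_le hφ'.abs continuous_const)
  have hout {t : ℝ} (ht : t ∈ Icc a b) (htE : t ∉ E) : ρ ≤ |φ' t| :=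
    le_of_not_ge fun h ↦ htE ⟨ht, h⟩
  rcases E.eq_empty_or_nonempty with hempty | hnonempty
  · have := norm_integral_cexp_le_of_monotone hφ hφ' hab hρ hmono
      fun t ht ↦ hout (Ioo_subset_Icc_self ht) (by simp [hempty])
    linarith
  obtain ⟨s, hs, hleast⟩ := hEc.exists_isLeast hnonempty
  obtain ⟨t, ht, hgreatest⟩ := hEc.exists_isGreatest hnonempty
  have hrestrict {c d : ℝ} (hac : a ≤ c) (hdb : d ≤ b) :
      MonotoneOn φ' (Icc c d) ∨ AntitoneOn φ' (Icc c d) :=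
    hmono.imp (·.mono (Icc_subset_Icc hac hdb)) (·.mono (Icc_subset_Icc hac hdb))
  have hleft := norm_integral_cexp_le_of_monotone hφ hφ' hs.1.1 hρ (hrestrict le_rfl hs.1.2)
    fun x hx ↦ hout ⟨hx.1.le, hx.2.le.trans hs.1.2⟩ fun hxE ↦ (hleast hxE).not_gt hx.2
  have hright := norm_integral_cexp_le_of_monotone hφ hφ' ht.1.2 hρ (hrestrict ht.1.1 le_rfl)
    fun x hx ↦ hout ⟨ht.1.1.trans hx.1.le, hx.2.le⟩ fun hxE ↦ (hgreatest hxE).not_gt hx.1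
  have hmid := norm_integral_cexp_le φ (hleast ht)
  have hlen := hsub s hs.1 t ht.1 (hleast ht) hs.2 ht.2
  have hint := intervalIntegrable_cexp_phase hφ
  rw [← intervalIntegral.integral_add_adjacent_intervals (hint a s) (hint s b),
    ← intervalIntegral.integral_add_adjacent_intervals (hint s t) (hint t b),
    ← add_assoc]
  refine norm_add₃_le.trans ?_
  linarith

end VanDerCorput

/-- A continuous monotone function climbing from `0` to `1` on `[0, ℓ]`. -/
structure IsRamp (G : ℝ → ℝ) (ℓ : ℝ) : Prop where
  length_pos : 0 < ℓ
  mono : Monotone G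
  of_nonpos : ∀ t, t ≤ 0 → G t = 0
  of_le : ∀ t, ℓ ≤ t → G t = 1
  continuous : Continuous G

theorem IsHalvingScale.isRamp {δ : ℕ → ℝ} (hδ : IsHalvingScale δ) (n : ℕ) :
    IsRamp (cantorStair δ n) (δ n) where
  length_pos := hδ.pos n
  mono := hδ.cantorStair_mono n
  of_nonpos _ := hδ.cantorStair_of_nonpos n
  of_le _ := hδ.cantorStair_of_le n
  continuous := hδ.continuous_cantorStair n

/-- The derivative of `bump`: it climbs to `1` along the ramp `G`, descends to `-1` in two steps and
climbs back to `0`, each step taking a length `ℓ`. -/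
def bumpProfile (G : ℝ → ℝ) (ℓ t : ℝ) : ℝ := G t - G (t - ℓ) - G (t - 2 * ℓ) + G (t - 3 * ℓ)

/-- The bump supported in `[0, 4 * ℓ]` built from the ramp `G` of length `ℓ`. -/
noncomputable def bump (G : ℝ → ℝ) (ℓ t : ℝ) : ℝ := ∫ x in (0 : ℝ)..t, bumpProfile G ℓ x

/-- The Fourier integral, at frequency `-μ`, of the perturbation that adding the bump with
amplitude `κ` to a phase produces. -/
noncomputable def bumpFourier (G : ℝ → ℝ) (ℓ κ μ : ℝ) : ℂ :=
  ∫ t in (0 : ℝ)..(4 * ℓ), (Complex.exp (Complex.I * ↑(κ * bump G ℓ t)) - 1) *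
    Complex.exp (Complex.I * ↑(μ * t))

theorem abs_mul_add_le_of_mem_uIcc {κ μ ρ x y z : ℝ} (hz : z ∈ uIcc x y) (hx : |κ * x + μ| ≤ ρ)
    (hy : |κ * y + μ| ≤ ρ) : |κ * z + μ| ≤ ρ := by
  rw [abs_le] at *
  rcases mem_uIcc.1 hz with ⟨h₁, h₂⟩ | ⟨h₁, h₂⟩ <;> rcases le_total 0 κ with hκ | hκ <;>
    constructor <;> nlinarith

namespace IsRamp

variable {G : ℝ → ℝ} {ℓ : ℝ} (h : IsRamp G ℓ)
include h

theorem nonneg (t : ℝ) : 0 ≤ G t := by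
  rw [← h.of_nonpos _ (min_le_right t 0)]
  exact h.mono (min_le_left _ _)

theorem le_one (t : ℝ) : G t ≤ 1 := by
  rw [← h.of_le _ (le_max_right t ℓ)]
  exact h.mono (le_max_left _ _)

theorem continuous_bumpProfile : Continuous (bumpProfile G ℓ) := by
  have := h.continuous
  unfold bumpProfile
  fun_prop

theorem abs_bumpProfile_le_one (t : ℝ) : |bumpProfile G ℓ t| ≤ 1 := by
  have hℓ := h.length_pos
  have h₁ := h.mono (show t - ℓ ≤ t by linarith)
  have h₂ := h.mono (show t - 2 * ℓ ≤ t - ℓ by linarith)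
  have h₃ := h.mono (show t - 3 * ℓ ≤ t - 2 * ℓ by linarith)
  rw [bumpProfile, abs_le]
  rcases le_total t (2 * ℓ) with ht | ht
  · have := h.of_nonpos (t - 2 * ℓ) (by linarith)
    constructor <;> linarith [h.nonneg (t - 3 * ℓ), h.le_one t, h.nonneg (t - ℓ), h.nonneg t]
  · have := h.of_le (t - ℓ) (by linarith)
    have := h.of_le t (by linarith)
    constructor <;>
      linarith [h.nonneg (t - 3 * ℓ), h.le_one (t - 2 * ℓ)]

theorem bumpProfile_of_nonpos {t : ℝ} (ht : t ≤ 0) : bumpProfile G ℓ t = 0 := by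
  have hℓ := h.length_pos
  simp [bumpProfile, h.of_nonpos t ht, h.of_nonpos (t - ℓ) (by linarith),
    h.of_nonpos (t - 2 * ℓ) (by linarith), h.of_nonpos (t - 3 * ℓ) (by linarith)]

theorem bumpProfile_of_le {t : ℝ} (ht : 4 * ℓ ≤ t) : bumpProfile G ℓ t = 0 := by
  have hℓ := h.length_pos
  simp [bumpProfile, h.of_le t (by linarith), h.of_le (t - ℓ) (by linarith),
    h.of_le (t - 2 * ℓ) (by linarith), h.of_le (t - 3 * ℓ) (by linarith)]

theorem bumpProfile_length : bumpProfile G ℓ ℓ = 1 := by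
  have hℓ := h.length_pos
  simp [bumpProfile, h.of_le ℓ le_rfl, h.of_nonpos 0 le_rfl,
    h.of_nonpos (ℓ - 2 * ℓ) (by linarith), h.of_nonpos (ℓ - 3 * ℓ) (by linarith)]

theorem bumpProfile_add_two_mul {t : ℝ} (ht : t ∈ Icc 0 (2 * ℓ)) :
    bumpProfile G ℓ (t + 2 * ℓ) = -bumpProfile G ℓ t := by
  have hℓ := h.length_pos
  obtain ⟨ht₀, ht₂⟩ := ht
  simp only [bumpProfile]
  rw [h.of_le (t + 2 * ℓ) (by linarith), h.of_le (t + 2 * ℓ - ℓ) (by linarith),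
    h.of_nonpos (t - 2 * ℓ) (by linarith), h.of_nonpos (t - 3 * ℓ) (by linarith),
    show t + 2 * ℓ - 2 * ℓ = t by ring, show t + 2 * ℓ - 3 * ℓ = t - ℓ by ring]
  ring

theorem exists_bumpProfile_eq {i : ℕ} (hi : i < 4) : ∃ c ε : ℤ, (ε = 1 ∨ ε = -1) ∧
    ∀ t ∈ Icc (i * ℓ) ((i + 1 : ℕ) * ℓ), bumpProfile G ℓ t = c + ε * G (t - i * ℓ) := by
  have hℓ := h.length_pos
  unfold bumpProfile
  interval_cases i
  · refine ⟨0, 1, .inl rfl, fun t ht ↦ ?_⟩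
    norm_num at ht
    simp [h.of_nonpos (t - ℓ) (by linarith), h.of_nonpos (t - 2 * ℓ) (by linarith),
      h.of_nonpos (t - 3 * ℓ) (by linarith)]
  · refine ⟨1, -1, .inr rfl, fun t ht ↦ ?_⟩
    norm_num at ht
    simp [h.of_le t (by linarith), h.of_nonpos (t - 2 * ℓ) (by linarith),
      h.of_nonpos (t - 3 * ℓ) (by linarith), ← sub_eq_add_neg]
  · refine ⟨0, -1, .inr rfl, fun t ht ↦ ?_⟩
    norm_num at ht
    simp [h.of_le t (by linarith), h.of_le (t - ℓ) (by linarith),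
      h.of_nonpos (t - 3 * ℓ) (by linarith)]
  · refine ⟨-1, 1, .inl rfl, fun t ht ↦ ?_⟩
    norm_num at ht
    simp [h.of_le t (by linarith), h.of_le (t - ℓ) (by linarith),
      h.of_le (t - 2 * ℓ) (by linarith)]

theorem hasDerivAt_bump (t : ℝ) : HasDerivAt (bump G ℓ) (bumpProfile G ℓ t) t :=
  h.continuous_bumpProfile.integral_hasStrictDerivAt 0 t |>.hasDerivAt

theorem continuous_bump : Continuous (bump G ℓ) :=
  continuous_iff_continuousAt.2 fun t ↦ (h.hasDerivAt_bump t).continuousAt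

theorem bump_of_nonpos {t : ℝ} (ht : t ≤ 0) : bump G ℓ t = 0 :=
  intervalIntegral.integral_zero_ae <| .of_forall fun _ hx ↦
    h.bumpProfile_of_nonpos (uIoc_of_ge ht ▸ hx).2

theorem bump_four_mul : bump G ℓ (4 * ℓ) = 0 := by
  have hint (a b : ℝ) : IntervalIntegrable (bumpProfile G ℓ) volume a b :=
    h.continuous_bumpProfile.intervalIntegrable a b
  have hhalf : ∫ x in (2 * ℓ)..(4 * ℓ), bumpProfile G ℓ x =
      -∫ x in (0 : ℝ)..(2 * ℓ), bumpProfile G ℓ x := by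
    calc _ = ∫ x in (0 : ℝ)..(2 * ℓ), bumpProfile G ℓ (x + 2 * ℓ) := by
          rw [intervalIntegral.integral_comp_add_right (bumpProfile G ℓ)]
          ring_nf
      _ = ∫ x in (0 : ℝ)..(2 * ℓ), -bumpProfile G ℓ x :=
          intervalIntegral.integral_congr fun t ht ↦
            h.bumpProfile_add_two_mul (by rwa [uIcc_of_le (by linarith [h.length_pos])] at ht)
      _ = _ := intervalIntegral.integral_neg
  rw [bump, ← intervalIntegral.integral_add_adjacent_intervals (hint 0 (2 * ℓ)) (hint _ _), hhalf,
    add_neg_cancel]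

theorem bump_of_le {t : ℝ} (ht : 4 * ℓ ≤ t) : bump G ℓ t = 0 := by
  have hint (a b : ℝ) : IntervalIntegrable (bumpProfile G ℓ) volume a b :=
    h.continuous_bumpProfile.intervalIntegrable a b
  have hend := h.bump_four_mul
  rw [bump] at hend ⊢
  rw [← intervalIntegral.integral_add_adjacent_intervals (hint 0 (4 * ℓ)) (hint _ t), hend,
    zero_add]
  exact intervalIntegral.integral_zero_ae <| .of_forall fun _ hx ↦
    h.bumpProfile_of_le (uIoc_of_le ht ▸ hx).1.le

theorem hasDerivAt_phase (κ μ t : ℝ) :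
    HasDerivAt (fun t ↦ κ * bump G ℓ t + μ * t) (κ * bumpProfile G ℓ t + μ) t := by
  simpa using ((h.hasDerivAt_bump t).const_mul κ).fun_add ((hasDerivAt_id t).const_mul μ)

theorem continuous_phase_deriv (κ μ : ℝ) : Continuous (fun t ↦ κ * bumpProfile G ℓ t + μ) :=
  (h.continuous_bumpProfile.const_mul κ).add_const μ

theorem bumpFourier_eq_sub (κ μ : ℝ) : bumpFourier G ℓ κ μ =
    (∫ t in (0 : ℝ)..(4 * ℓ), Complex.exp (Complex.I * ↑(κ * bump G ℓ t + μ * t))) -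
      ∫ t in (0 : ℝ)..(4 * ℓ), Complex.exp (Complex.I * ↑(μ * t)) := by
  rw [← intervalIntegral.integral_sub (intervalIntegrable_cexp_phase (h.hasDerivAt_phase κ μ) _ _)
    (Continuous.intervalIntegrable (by fun_prop) _ _), bumpFourier]
  congr 1
  ext t
  rw [sub_mul, one_mul, ← Complex.exp_add, ← mul_add, Complex.ofReal_add]

theorem norm_bumpFourier_le_length (κ μ : ℝ) : ‖bumpFourier G ℓ κ μ‖ ≤ 8 * ℓ := by
  have hℓ : (0 : ℝ) ≤ 4 * ℓ := by linarith [h.length_pos]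
  rw [h.bumpFourier_eq_sub]
  refine (norm_sub_le _ _).trans ?_
  linarith [norm_integral_cexp_le (fun t ↦ κ * bump G ℓ t + μ * t) hℓ,
    norm_integral_cexp_le (fun t ↦ μ * t) hℓ]

theorem half_abs_le_abs_phase_deriv {κ μ : ℝ} (hμ : 2 * |κ| < |μ|) (t : ℝ) :
    |μ| / 2 ≤ |κ * bumpProfile G ℓ t + μ| := by
  have hκ : |κ * bumpProfile G ℓ t| ≤ |κ| := by
    rw [abs_mul]
    exact mul_le_of_le_one_right (abs_nonneg _) (h.abs_bumpProfile_le_one t)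
  have := abs_sub_abs_le_abs_sub μ (-(κ * bumpProfile G ℓ t))
  rw [abs_neg, sub_neg_eq_add, add_comm μ] at this
  linarith

theorem abs_bumpProfile_sub_le {s t : ℝ} (hst : s ≤ t) :
    |bumpProfile G ℓ t - bumpProfile G ℓ s| ≤
      (G t + G (t - ℓ) + G (t - 2 * ℓ) + G (t - 3 * ℓ)) -
        (G s + G (s - ℓ) + G (s - 2 * ℓ) + G (s - 3 * ℓ)) := by
  have h₀ := h.mono hst
  have h₁ := h.mono (sub_le_sub_right hst ℓ)
  have h₂ := h.mono (sub_le_sub_right hst (2 * ℓ))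
  have h₃ := h.mono (sub_le_sub_right hst (3 * ℓ))
  rw [bumpProfile, bumpProfile, abs_le]
  constructor <;> linarith

theorem abs_inv_phase_deriv_sub_le {κ μ : ℝ} (hμ : 2 * |κ| < |μ|) (s t : ℝ) :
    |(κ * bumpProfile G ℓ t + μ)⁻¹ - (κ * bumpProfile G ℓ s + μ)⁻¹| ≤
      4 * |κ| / μ ^ 2 * |bumpProfile G ℓ t - bumpProfile G ℓ s| := by
  have hμ₀ : 0 < |μ| := (by positivity : 0 ≤ 2 * |κ|).trans_lt hμ
  have hge := h.half_abs_le_abs_phase_deriv hμ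
  have hne (t : ℝ) : κ * bumpProfile G ℓ t + μ ≠ 0 := abs_pos.1 ((half_pos hμ₀).trans_le (hge t))
  have hprod := mul_le_mul (hge t) (hge s) (by positivity) (abs_nonneg _)
  calc _ = |κ| * |bumpProfile G ℓ t - bumpProfile G ℓ s| /
        (|κ * bumpProfile G ℓ t + μ| * |κ * bumpProfile G ℓ s + μ|) := by
        rw [inv_sub_inv (hne t) (hne s), abs_div, abs_mul, add_sub_add_right_eq_sub, ← mul_sub,
          abs_mul, abs_sub_comm (bumpProfile G ℓ t)]
    _ ≤ |κ| * |bumpProfile G ℓ t - bumpProfile G ℓ s| / (|μ| / 2 * (|μ| / 2)) := by gcongr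
    _ = _ := by
        rw [← sq_abs μ]
        field

/- The boundary terms at `0` and `4 * ℓ` are those of the linear phase `μ * t`, whose Fourier
integral they cancel. -/
theorem norm_bumpFourier_le_of_lt {κ μ : ℝ} (hμ : 2 * |κ| < |μ|) :
    ‖bumpFourier G ℓ κ μ‖ ≤ 16 * |κ| / μ ^ 2 := by
  have hℓ := h.length_pos
  have hGc := h.continuous
  have hμ₀ : 0 < |μ| := (by positivity : 0 ≤ 2 * |κ|).trans_lt hμ
  have hne (t : ℝ) : κ * bumpProfile G ℓ t + μ ≠ 0 :=
    abs_pos.1 ((half_pos hμ₀).trans_le (h.half_abs_le_abs_phase_deriv hμ t))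
  have hbump := norm_integral_cexp_add_boundary_le (h.hasDerivAt_phase κ μ)
    (V := fun t ↦ 4 * |κ| / μ ^ 2 * (G t + G (t - ℓ) + G (t - 2 * ℓ) + G (t - 3 * ℓ)))
    (h.continuous_phase_deriv κ μ) (by linarith : 0 ≤ 4 * ℓ) (fun t _ ↦ hne t) (by fun_prop)
    fun s _ t _ hst ↦ (h.abs_inv_phase_deriv_sub_le hμ s t).trans <| by
      rw [← mul_sub]
      exact mul_le_mul_of_nonneg_left (h.abs_bumpProfile_sub_le hst) (by positivity)
  have hlinear := norm_integral_cexp_add_boundary_le (φ := fun t ↦ μ * t) (φ' := fun _ ↦ μ)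
    (V := fun _ ↦ 0) (fun t ↦ by simpa using (hasDerivAt_id t).const_mul μ) continuous_const
    (by linarith : 0 ≤ 4 * ℓ) (fun _ _ ↦ abs_pos.1 hμ₀) continuousOn_const (by simp)
  rw [sub_self, norm_le_zero_iff] at hlinear
  rw [h.bump_of_nonpos le_rfl, h.bump_four_mul, h.bumpProfile_of_nonpos le_rfl,
    h.bumpProfile_of_le le_rfl, h.of_le (4 * ℓ) (by linarith), h.of_le (4 * ℓ - ℓ) (by linarith),
    h.of_le (4 * ℓ - 2 * ℓ) (by linarith), h.of_le (4 * ℓ - 3 * ℓ) (by linarith),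
    h.of_nonpos 0 le_rfl, h.of_nonpos (0 - ℓ) (by linarith),
    h.of_nonpos (0 - 2 * ℓ) (by linarith), h.of_nonpos (0 - 3 * ℓ) (by linarith)] at hbump
  rw [h.bumpFourier_eq_sub]
  calc _ = _ := ?_
    _ ≤ _ := hbump
    _ = _ := by ring
  congr 1
  simp only [mul_zero, zero_add] at hlinear ⊢
  linear_combination -hlinear

theorem monotoneOn_or_antitoneOn_phase_deriv (κ μ : ℝ) {i : ℕ} (hi : i < 4) :
    MonotoneOn (fun t ↦ κ * bumpProfile G ℓ t + μ) (Icc (i * ℓ) ((i + 1 : ℕ) * ℓ)) ∨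
      AntitoneOn (fun t ↦ κ * bumpProfile G ℓ t + μ) (Icc (i * ℓ) ((i + 1 : ℕ) * ℓ)) := by
  obtain ⟨c, ε, -, hpiece⟩ := h.exists_bumpProfile_eq hi
  have hGmono (s t : ℝ) (hst : s ≤ t) := h.mono (sub_le_sub_right hst (i * ℓ))
  rcases le_total 0 (κ * ε) with hκ | hκ
  · refine .inl fun s hs t ht hst ↦ ?_
    have := mul_le_mul_of_nonneg_left (hGmono s t hst) hκ
    simp only [hpiece s hs, hpiece t ht]
    linarith
  · refine .inr fun s hs t ht hst ↦ ?_
    have := mul_le_mul_of_nonpos_left (hGmono s t hst) hκ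
    simp only [hpiece s hs, hpiece t ht]
    linarith

theorem exists_div_mem_uIcc_bumpProfile {N : ℕ} (hN : 0 < N) {y : ℝ}
    (hG : ∀ s t, y < t - s → ∃ j : ℤ, (j / N : ℝ) ∈ uIcc (G s) (G t)) {i : ℕ} (hi : i < 4)
    {s t : ℝ} (hs : s ∈ Icc (i * ℓ) ((i + 1 : ℕ) * ℓ)) (ht : t ∈ Icc (i * ℓ) ((i + 1 : ℕ) * ℓ))
    (hst : y < t - s) :
    ∃ j : ℤ, |j| ≤ N ∧ (j / N : ℝ) ∈ uIcc (bumpProfile G ℓ s) (bumpProfile G ℓ t) := by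
  have hN' : (0 : ℝ) < N := by exact_mod_cast hN
  obtain ⟨c, ε, hε, hpiece⟩ := h.exists_bumpProfile_eq hi
  obtain ⟨j, hj⟩ := hG (s - i * ℓ) (t - i * ℓ) (by linarith)
  have hcast : ((c * N + ε * j : ℤ) / N : ℝ) = c + ε * (j / N) := by
    push_cast
    field
  have hmem : ((c * N + ε * j : ℤ) / N : ℝ) ∈ uIcc (bumpProfile G ℓ s) (bumpProfile G ℓ t) := by
    rw [hcast, hpiece s hs, hpiece t ht]
    rw [mem_uIcc] at hj ⊢
    rcases hε with rfl | rfl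
    · push_cast
      exact hj.imp (by grind) (by grind)
    · push_cast
      exact hj.symm.imp (by grind) (by grind)
  refine ⟨c * N + ε * j, ?_, hmem⟩
  have hle := abs_mul_add_le_of_mem_uIcc (κ := 1) (μ := 0) hmem
    (by simpa using h.abs_bumpProfile_le_one s) (by simpa using h.abs_bumpProfile_le_one t)
  rw [one_mul, add_zero, abs_div, abs_of_pos hN', div_le_one hN'] at hle
  exact_mod_cast hle

theorem norm_bumpFourier_le_of_grid {N : ℕ} (hN : 0 < N) {κ μ y : ℝ} (hy : 0 < y)
    (hG : ∀ s t, y < t - s → ∃ j : ℤ, (j / N : ℝ) ∈ uIcc (G s) (G t))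
    (hgrid : ∀ j : ℤ, |j| ≤ N → 1 / y < |κ * (j / N) + μ|) :
    ‖bumpFourier G ℓ κ μ‖ ≤ 40 * y := by
  have hℓ := h.length_pos
  have hy' : 0 < 1 / y := by positivity
  have hpiece : ∀ i ∈ Finset.range 4, ‖∫ t in (i * ℓ)..((i + 1 : ℕ) * ℓ),
      Complex.exp (Complex.I * ↑(κ * bump G ℓ t + μ * t))‖ ≤ 9 * y := by
    intro i hi
    have hi4 := Finset.mem_range.1 hi
    calc _ ≤ y + 8 / (1 / y) := by
          refine norm_integral_cexp_le_of_sublevel (h.hasDerivAt_phase κ μ)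
            (h.continuous_phase_deriv κ μ) (by push_cast; nlinarith) hy' hy.le
            (h.monotoneOn_or_antitoneOn_phase_deriv κ μ hi4) fun s hs t ht _ hsρ htρ ↦ ?_
          by_contra! hst
          obtain ⟨j, hjN, hj⟩ := h.exists_div_mem_uIcc_bumpProfile hN hG hi4 hs ht hst
          exact (abs_mul_add_le_of_mem_uIcc hj hsρ htρ).not_gt (hgrid j hjN)
      _ = 9 * y := by field
  have hlinear : ‖∫ t in (0 : ℝ)..(4 * ℓ), Complex.exp (Complex.I * ↑(μ * t))‖ ≤ 4 * y := by
    have h₀ := hgrid 0 (by simp)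
    simp only [Int.cast_zero, zero_div, mul_zero, zero_add] at h₀
    refine (norm_integral_cexp_le_of_monotone (φ := fun t ↦ μ * t) (φ' := fun _ ↦ μ)
      (fun t ↦ by simpa using (hasDerivAt_id t).const_mul μ) continuous_const (by linarith) hy'
      (.inl monotoneOn_const) fun _ _ ↦ h₀.le).trans_eq (by field)
  have hsum := intervalIntegral.sum_integral_adjacent_intervals (n := 4)
    (a := fun i : ℕ ↦ (i : ℝ) * ℓ) fun k _ ↦
      intervalIntegrable_cexp_phase (h.hasDerivAt_phase κ μ) (k * ℓ) ((k + 1 : ℕ) * ℓ)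
  simp only [Nat.cast_zero, zero_mul, Nat.cast_ofNat] at hsum
  rw [h.bumpFourier_eq_sub, ← hsum]
  refine (norm_sub_le _ _).trans ?_
  have := (norm_sum_le _ _).trans (Finset.sum_le_card_nsmul _ _ _ hpiece)
  rw [Finset.card_range, nsmul_eq_mul, Nat.cast_ofNat] at this
  linarith

end IsRamp

section Counting

theorem card_filter_abs_sub_le (F : Finset ℤ) (η : ℝ) {r : ℝ} (hr : 0 ≤ r) :
    ((F.filter fun k : ℤ ↦ |(k : ℝ) - η| ≤ r).card : ℝ) ≤ 2 * r + 1 := by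
  have hsub : F.filter (fun k : ℤ ↦ |(k : ℝ) - η| ≤ r) ⊆ Finset.Icc ⌈η - r⌉ ⌊η + r⌋ := by
    intro k hk
    obtain ⟨hleft, hright⟩ := abs_le.1 (Finset.mem_filter.1 hk).2
    exact Finset.mem_Icc.2 ⟨Int.ceil_le.2 (by linarith), Int.le_floor.2 (by linarith)⟩
  have hcard : ((F.filter fun k : ℤ ↦ |(k : ℝ) - η| ≤ r).card : ℤ) ≤
      max (⌊η + r⌋ + 1 - ⌈η - r⌉) 0 := by
    rw [← Int.toNat_eq_max, ← Int.card_Icc]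
    exact_mod_cast Finset.card_le_card hsub
  calc ((F.filter fun k : ℤ ↦ |(k : ℝ) - η| ≤ r).card : ℝ)
      ≤ max ((⌊η + r⌋ : ℝ) + 1 - ⌈η - r⌉) 0 := by exact_mod_cast hcard
    _ ≤ 2 * r + 1 :=
      max_le (by linarith [Int.floor_le (η + r), Int.le_ceil (η - r)]) (by linarith)

theorem sum_inv_sq_le_of_lt_sub {F : Finset ℤ} {η R : ℝ} (hR : 1 ≤ R)
    (hF : ∀ k ∈ F, R < k - η) : ∑ k ∈ F, (((k : ℝ) - η) ^ 2)⁻¹ ≤ 4 / R := by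
  have hfloor : 1 ≤ ⌊R⌋₊ := (Nat.one_le_floor_iff R).2 hR
  have hle : ∀ k ∈ F, ⌊R⌋₊ ≤ ⌊(k : ℝ) - η⌋₊ := fun k hk ↦ Nat.floor_mono (hF k hk).le
  have hinj : Set.InjOn (fun k : ℤ ↦ ⌊(k : ℝ) - η⌋₊) F := by
    intro a ha b hb hab
    have ha' := (Nat.floor_eq_iff (by linarith [hF a ha])).1 hab
    have hb' := (Nat.floor_eq_iff (by linarith [hF b hb])).1 (Eq.refl ⌊(b : ℝ) - η⌋₊)
    have hab₁ : (a : ℝ) < b + 1 := by linarith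
    have hba₁ : (b : ℝ) < a + 1 := by linarith
    norm_cast at hab₁ hba₁
    lia
  obtain ⟨N, hN⟩ := (F.image fun k : ℤ ↦ ⌊(k : ℝ) - η⌋₊).exists_nat_subset_range
  calc ∑ k ∈ F, (((k : ℝ) - η) ^ 2)⁻¹
      ≤ ∑ k ∈ F, ((⌊(k : ℝ) - η⌋₊ : ℝ) ^ 2)⁻¹ := by
        refine Finset.sum_le_sum fun k hk ↦ ?_
        have hpos : (0 : ℝ) < ⌊(k : ℝ) - η⌋₊ := by exact_mod_cast hfloor.trans (hle k hk)
        gcongr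
        exact Nat.floor_le (by linarith [hF k hk])
    _ = ∑ m ∈ F.image fun k : ℤ ↦ ⌊(k : ℝ) - η⌋₊, ((m : ℝ) ^ 2)⁻¹ :=
        (Finset.sum_image (f := fun m : ℕ ↦ ((m : ℝ) ^ 2)⁻¹) hinj).symm
    _ ≤ ∑ m ∈ Finset.Ioo (⌊R⌋₊ - 1) N, ((m : ℝ) ^ 2)⁻¹ := by
        refine Finset.sum_le_sum_of_subset_of_nonneg (fun m hm ↦ ?_) fun _ _ _ ↦ by positivity
        obtain ⟨k, hk, rfl⟩ := Finset.mem_image.1 hm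
        have := hle k hk
        exact Finset.mem_Ioo.2 ⟨by lia, Finset.mem_range.1 (hN hm)⟩
    _ ≤ 2 / ((⌊R⌋₊ - 1 : ℕ) + 1) := sum_Ioo_inv_sq_le _ _
    _ = 2 / ⌊R⌋₊ := by rw [Nat.cast_sub hfloor]; simp
    _ ≤ 2 / (R / 2) := by
        have h₁ : (1 : ℝ) ≤ ⌊R⌋₊ := by exact_mod_cast hfloor
        gcongr
        linarith [Nat.lt_floor_add_one R]
    _ = 4 / R := by ring

theorem sum_inv_sq_le_of_lt_abs_sub {F : Finset ℤ} {η R : ℝ} (hR : 1 ≤ R)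
    (hF : ∀ k ∈ F, R < |(k : ℝ) - η|) : ∑ k ∈ F, (((k : ℝ) - η) ^ 2)⁻¹ ≤ 8 / R := by
  have hright : ∑ k ∈ F with η < ((k : ℤ) : ℝ), (((k : ℝ) - η) ^ 2)⁻¹ ≤ 4 / R := by
    refine sum_inv_sq_le_of_lt_sub hR fun k hk ↦ ?_
    obtain ⟨hkF, hηk⟩ := Finset.mem_filter.1 hk
    simpa only [abs_of_pos (sub_pos.2 hηk)] using hF k hkF
  have hleft : ∑ k ∈ F with ¬ η < ((k : ℤ) : ℝ), (((k : ℝ) - η) ^ 2)⁻¹ ≤ 4 / R := by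
    have := sum_inv_sq_le_of_lt_sub (F := (F.filter fun k : ℤ ↦ ¬ η < (k : ℝ)).map
      (Equiv.neg ℤ).toEmbedding) (η := -η) hR fun k hk ↦ ?_
    · simpa [Finset.sum_map, neg_add_eq_sub, sub_sq_comm] using this
    · obtain ⟨j, hj, rfl⟩ := Finset.mem_map.1 hk
      obtain ⟨hjF, hηj⟩ := Finset.mem_filter.1 hj
      have := hF j hjF
      rw [abs_of_nonpos (by linarith)] at this
      simp only [Equiv.coe_toEmbedding, Equiv.neg_apply, Int.cast_neg]
      linarith
  calc _ = _ := (Finset.sum_filter_add_sum_filter_not F (fun k : ℤ ↦ η < (k : ℝ)) _).symm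
    _ ≤ 4 / R + 4 / R := add_le_add hright hleft
    _ = 8 / R := by ring

theorem rpow_le_layer_sum {v M p : ℝ} {y : ℕ → ℝ} (hv : 0 ≤ v) (hvM : v ≤ M)
    (hy : ∀ i, 0 ≤ y i) (hp : 0 ≤ p) (I : ℕ) :
    v ^ p ≤ (if y 0 < v then M ^ p else 0) +
      ∑ i ∈ Finset.range I, (if y (i + 1) < v then y i ^ p else 0) + y I ^ p := by
  have hy' : ∀ i, 0 ≤ y i ^ p := fun i ↦ rpow_nonneg (hy i) p
  have hfirst : 0 ≤ if y 0 < v then M ^ p else 0 :=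
    ite_nonneg (rpow_nonneg (hv.trans hvM) p) le_rfl
  induction I with
  | zero =>
    split_ifs with hlt
    · simpa using (rpow_le_rpow hv hvM hp).trans (le_add_of_nonneg_right (hy' 0))
    · simpa using rpow_le_rpow hv (not_lt.1 hlt) hp
  | succ I ih =>
    rw [Finset.sum_range_succ]
    by_cases hlt : y (I + 1) < v
    · rw [if_pos hlt]
      linarith [hy' (I + 1)]
    · have hsum : 0 ≤ ∑ i ∈ Finset.range I, if y (i + 1) < v then y i ^ p else 0 :=
        Finset.sum_nonneg fun i _ ↦ ite_nonneg (hy' i) le_rfl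
      rw [if_neg hlt]
      linarith [rpow_le_rpow hv (not_lt.1 hlt) hp]

theorem sum_rpow_le_of_card_filter_le {ι : Type*} {S : Finset ι} {v : ι → ℝ} {M p Q : ℝ}
    {y : ℕ → ℝ} {I : ℕ} (hv : ∀ k, 0 ≤ v k) (hvM : ∀ k, v k ≤ M) (hM : 0 ≤ M) (hy : ∀ i, 0 ≤ y i)
    (hp : 0 ≤ p) (hcount : ∀ i ≤ I, ((S.filter fun k ↦ y i < v k).card : ℝ) ≤ Q * 2 ^ i) :
    ∑ k ∈ S, v k ^ p ≤
      Q * M ^ p + ∑ i ∈ Finset.range I, Q * 2 ^ (i + 1) * y i ^ p + S.card * y I ^ p := by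
  refine (Finset.sum_le_sum fun k _ ↦ rpow_le_layer_sum (hv k) (hvM k) hy hp I).trans ?_
  rw [Finset.sum_add_distrib, Finset.sum_add_distrib, Finset.sum_comm, ← Finset.sum_filter]
  simp only [← Finset.sum_filter, Finset.sum_const, nsmul_eq_mul]
  gcongr with i hi
  · simpa using hcount 0 (Nat.zero_le _)
  · exact rpow_nonneg (hy i) p
  · exact hcount (i + 1) (Finset.mem_range.1 hi)

theorem sum_rpow_le_of_tail {F : Finset ℤ} {v : ℤ → ℝ} {M p c η R : ℝ} (hv : ∀ k, 0 ≤ v k)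
    (hvM : ∀ k, v k ≤ M) (hp : 1 ≤ p) (hc : 0 ≤ c) (hR : 1 ≤ R)
    (hF : ∀ k ∈ F, R < |(k : ℝ) - η|) (htail : ∀ k ∈ F, v k ≤ c / ((k : ℝ) - η) ^ 2) :
    ∑ k ∈ F, v k ^ p ≤ 8 * M ^ (p - 1) * (c / R) := by
  have hM : 0 ≤ M := (hv 0).trans (hvM 0)
  have hterm : ∀ k ∈ F, v k ^ p ≤ M ^ (p - 1) * c * (((k : ℝ) - η) ^ 2)⁻¹ := fun k hk ↦
    calc v k ^ p = v k ^ (p - 1) * v k := by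
          rw [← rpow_add_one' (hv k) (by linarith), sub_add_cancel]
      _ ≤ M ^ (p - 1) * (c / ((k : ℝ) - η) ^ 2) :=
          mul_le_mul (rpow_le_rpow (hv k) (hvM k) (by linarith)) (htail k hk) (hv k)
            (by positivity)
      _ = _ := by ring
  calc _ ≤ ∑ k ∈ F, M ^ (p - 1) * c * (((k : ℝ) - η) ^ 2)⁻¹ := Finset.sum_le_sum hterm
    _ = M ^ (p - 1) * c * ∑ k ∈ F, (((k : ℝ) - η) ^ 2)⁻¹ := (Finset.mul_sum ..).symm
    _ ≤ M ^ (p - 1) * c * (8 / R) := by gcongr; exact sum_inv_sq_le_of_lt_abs_sub hR hF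
    _ = _ := by ring

theorem sum_rpow_le_of_counts_of_tail {v : ℤ → ℝ} {M p κ c η Q : ℝ} {y : ℕ → ℝ} {I : ℕ}
    (hv : ∀ k, 0 ≤ v k) (hvM : ∀ k, v k ≤ M) (hy : ∀ i, 0 ≤ y i) (hp : 1 ≤ p) (hκ : 0 ≤ κ)
    (hc : 0 ≤ c)
    (hcount : ∀ i ≤ I, ∀ S : Finset ℤ, ((S.filter fun k ↦ y i < v k).card : ℝ) ≤ Q * 2 ^ i)
    (htail : ∀ k : ℤ, 2 * κ < |(k : ℝ) - η| → v k ≤ c / ((k : ℝ) - η) ^ 2) (F : Finset ℤ) :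
    ∑ k ∈ F, v k ^ p ≤ (Q + 3) * M ^ p +
      (∑ i ∈ Finset.range I, Q * 2 ^ (i + 1) * y i ^ p + 6 * κ * y I ^ p) +
      8 * M ^ (p - 1) * (c / max 1 (2 * κ)) := by
  have hM : 0 ≤ M := (hv 0).trans (hvM 0)
  have hp₀ : 0 ≤ p := by linarith
  set E := F.filter fun k : ℤ ↦ ¬ |(k : ℝ) - η| ≤ 1
  set S := E.filter fun k : ℤ ↦ |(k : ℝ) - η| ≤ 2 * κ
  have hnear : ∑ k ∈ F with |((k : ℤ) : ℝ) - η| ≤ 1, v k ^ p ≤ 3 * M ^ p := by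
    refine (Finset.sum_le_card_nsmul _ _ (M ^ p) fun k _ ↦
      rpow_le_rpow (hv k) (hvM k) hp₀).trans ?_
    rw [nsmul_eq_mul]
    gcongr
    linarith [card_filter_abs_sub_le F η zero_le_one]
  have hScard : (S.card : ℝ) ≤ 6 * κ := by
    rcases le_total (2 * κ) 1 with hκ₁ | hκ₁
    · have hS : S = ∅ := Finset.filter_eq_empty_iff.2 fun k hk hk' ↦
        (Finset.mem_filter.1 hk).2 (hk'.trans hκ₁)
      rw [hS, Finset.card_empty, Nat.cast_zero]
      positivity
    · linarith [card_filter_abs_sub_le E η (r := 2 * κ) (by positivity)]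
  have hmiddle : ∑ k ∈ S, v k ^ p ≤ Q * M ^ p +
      ∑ i ∈ Finset.range I, Q * 2 ^ (i + 1) * y i ^ p + 6 * κ * y I ^ p := by
    refine (sum_rpow_le_of_card_filter_le hv hvM hM hy hp₀ fun i hi ↦ hcount i hi S).trans ?_
    have := rpow_nonneg (hy I) p
    gcongr
  have hfar : ∑ k ∈ E with ¬ |((k : ℤ) : ℝ) - η| ≤ 2 * κ, v k ^ p ≤
      8 * M ^ (p - 1) * (c / max 1 (2 * κ)) := by
    have hmem : ∀ k ∈ E.filter fun k : ℤ ↦ ¬ |(k : ℝ) - η| ≤ 2 * κ,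
        1 < |(k : ℝ) - η| ∧ 2 * κ < |(k : ℝ) - η| := fun k hk ↦
      ⟨not_le.1 (Finset.mem_filter.1 (Finset.mem_filter.1 hk).1).2,
        not_le.1 (Finset.mem_filter.1 hk).2⟩
    exact sum_rpow_le_of_tail hv hvM hp hc (le_max_left _ _)
      (fun k hk ↦ max_lt (hmem k hk).1 (hmem k hk).2) fun k hk ↦ htail k (hmem k hk).2
  rw [← Finset.sum_filter_add_sum_filter_not F (fun k : ℤ ↦ |(k : ℝ) - η| ≤ 1),
    ← Finset.sum_filter_add_sum_filter_not E (fun k : ℤ ↦ |(k : ℝ) - η| ≤ 2 * κ)]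
  linarith

end Counting

section Modulus

/-- A modulus of continuity: continuous and monotone on `[0, ∞)`, vanishing only at `0`. -/
structure IsModulus (ω : ℝ → ℝ) : Prop where
  continuousOn : ContinuousOn ω (Ici 0)
  monotoneOn : MonotoneOn ω (Ici 0)
  map_zero : ω 0 = 0
  pos : ∀ δ, 0 < δ → 0 < ω δ

/-- The growth condition `ω (2δ) < 2 ω δ` for all sufficiently small `δ`. -/
def IsSubdoubling (ω : ℝ → ℝ) : Prop :=
  ∃ δ₀, 0 < δ₀ ∧ ∀ δ, 0 < δ → δ < δ₀ → ω (2 * δ) < 2 * ω δ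

/-- `χinv` is a right inverse on `[0, ∞)` of the function `χ δ = δ * ω δ`. -/
def IsChiInverse (ω χinv : ℝ → ℝ) : Prop :=
  ∀ y, 0 ≤ y → 0 ≤ χinv y ∧ χinv y * ω (χinv y) = y

/-- A sequence of scales along which `ω` halves exactly and which, `ω` being subdoubling,
more than halves itself. -/
structure IsDyadicScale (ω : ℝ → ℝ) (A : ℝ) (δ : ℕ → ℝ) : Prop extends IsHalvingScale δ where
  const_pos : 0 < A
  zeroth_le_one : δ 0 ≤ 1
  modulus_eq : ∀ m, ω (δ m) = A * (1 / 2) ^ m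

theorem IsDyadicScale.le_pow {ω : ℝ → ℝ} {A : ℝ} {δ : ℕ → ℝ} (hδ : IsDyadicScale ω A δ) (q : ℕ) :
    δ q ≤ (1 / 2) ^ q := by
  have := hδ.add_le 0 q
  rw [zero_add] at this
  exact this.trans (mul_le_of_le_one_left (by positivity) hδ.zeroth_le_one)

namespace IsModulus

variable {ω : ℝ → ℝ}

theorem exists_isDyadicScale (h : IsModulus ω) (hsub : IsSubdoubling ω) :
    ∃ A δ, IsDyadicScale ω A δ := by
  obtain ⟨δ₀, hδ₀, hdouble⟩ := hsub
  set d := min 1 (δ₀ / 2)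
  have hd : 0 < d := lt_min one_pos (by linarith)
  have hωd := h.pos d hd
  have hex : ∀ m : ℕ, ∃ x ∈ Icc 0 d, ω x = ω d * (1 / 2) ^ m := fun m ↦ by
    refine intermediate_value_Icc hd.le (h.continuousOn.mono fun x hx ↦ hx.1) ?_
    rw [h.map_zero]
    exact ⟨by positivity, mul_le_of_le_one_right hωd.le (pow_le_one₀ (by norm_num) (by norm_num))⟩
  choose δ hδ hωδ using hex
  have hpos : ∀ m, 0 < δ m := fun m ↦ (hδ m).1.lt_of_ne' fun hzero ↦ by
    have := hωδ m
    rw [hzero, h.map_zero] at this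
    have : 0 < ω d * (1 / 2) ^ m := by positivity
    linarith
  refine ⟨ω d, δ, ⟨hpos, fun m ↦ ?_⟩, hωd, (hδ 0).2.trans (min_le_left _ _), hωδ⟩
  have hlt := hdouble (δ (m + 1)) (hpos _) (by linarith [(hδ (m + 1)).2, min_le_right 1 (δ₀ / 2)])
  by_contra! hle
  have hmono := h.monotoneOn (hpos m).le (mul_pos two_pos (hpos (m + 1))).le hle
  rw [hωδ, pow_succ] at hlt
  rw [hωδ] at hmono
  linarith

theorem mul_le_of_two_mul_lt (h : IsModulus ω) {δ₀ t : ℝ}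
    (hdouble : ∀ δ, 0 < δ → δ < δ₀ → ω (2 * δ) < 2 * ω δ) (htδ : t < δ₀) (k : ℕ) :
    ∀ s, 0 < s → s ≤ t → t ≤ 2 ^ k * s → ω t * s ≤ 2 * ω s * t := by
  induction k with
  | zero =>
    intro s hs hst hts
    obtain rfl : s = t := le_antisymm hst (by simpa using hts)
    nlinarith [h.pos s hs]
  | succ k ih =>
    intro s hs hst hts
    have hωs := h.pos s hs
    have hω2s := hdouble s hs (by linarith)
    have ht : 0 ≤ t := by linarith
    rcases le_total t (2 * s) with hts₂ | hts₂
    · have hωt : ω t ≤ ω (2 * s) := h.monotoneOn ht (by simpa using hs.le) hts₂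
      calc ω t * s ≤ (2 * ω s) * s := by gcongr; linarith
        _ ≤ 2 * ω s * t := by gcongr
    · have hstep := ih (2 * s) (by linarith) hts₂ (by rw [pow_succ] at hts; linarith)
      have : ω (2 * s) * t ≤ 2 * ω s * t := by gcongr
      linarith

theorem exists_mul_le_mul (h : IsModulus ω) (hsub : IsSubdoubling ω) (T : ℝ) (hT : 0 < T) :
    ∃ C, 0 < C ∧ ∀ s t, 0 < s → s ≤ t → t ≤ T → ω t * s ≤ C * ω s * t := by
  obtain ⟨δ₀, hδ₀, hdouble⟩ := hsub
  have hsmall : ∀ s t, 0 < s → s ≤ t → t < δ₀ → ω t * s ≤ 2 * ω s * t := by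
    intro s t hs hst ht
    obtain ⟨k, hk⟩ := pow_unbounded_of_one_lt (t / s) one_lt_two
    exact h.mul_le_of_two_mul_lt hdouble ht k s hs hst ((div_lt_iff₀ hs).1 hk).le
  have hωδ₀ := h.pos (δ₀ / 2) (by positivity)
  have hωT := h.pos T hT
  refine ⟨2 + 2 * (ω T / ω (δ₀ / 2)), by positivity, fun s t hs hst htT ↦ ?_⟩
  have ht := hs.trans_le hst
  have hωs := h.pos s hs
  rcases lt_or_ge t δ₀ with htδ | htδ
  · refine (hsmall s t hs hst htδ).trans ?_
    gcongr
    exact le_add_of_nonneg_right (by positivity)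
  · have hmid : ω (δ₀ / 2) * s ≤ 2 * ω s * t := by
      rcases le_total s (δ₀ / 2) with hsδ | hsδ
      · refine (hsmall s (δ₀ / 2) hs hsδ (by linarith)).trans ?_
        gcongr
        linarith
      · have : ω (δ₀ / 2) ≤ ω s := h.monotoneOn (half_pos hδ₀).le hs.le hsδ
        calc ω (δ₀ / 2) * s ≤ ω s * t := by gcongr
          _ ≤ 2 * ω s * t := by nlinarith
    calc ω t * s ≤ ω T * s := by gcongr; exact h.monotoneOn ht.le hT.le htT
      _ = ω T / ω (δ₀ / 2) * (ω (δ₀ / 2) * s) := by field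
      _ ≤ ω T / ω (δ₀ / 2) * (2 * ω s * t) := by gcongr
      _ = 2 * (ω T / ω (δ₀ / 2)) * ω s * t := by ring
      _ ≤ _ := by gcongr; linarith

end IsModulus

namespace IsChiInverse

variable {ω χinv : ℝ → ℝ} (hχ : IsChiInverse ω χinv)
include hχ

theorem pos {y : ℝ} (hy : 0 < y) : 0 < χinv y :=
  (hχ y hy.le).1.lt_of_ne' fun hzero ↦ by
    have := (hχ y hy.le).2
    rw [hzero, zero_mul] at this
    linarith

theorem pos_one_div_pow (i : ℕ) : 0 < χinv (1 / 2 ^ i) := hχ.pos (by positivity)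

theorem mul_modulus {y : ℝ} (hy : 0 < y) : χinv y * ω (χinv y) = y := (hχ y hy.le).2

variable (h : IsModulus ω)
include h

theorem monotoneOn : MonotoneOn χinv (Ioi 0) := by
  intro x hx y hy hxy
  by_contra! hlt
  have hω : ω (χinv y) ≤ ω (χinv x) := h.monotoneOn (hχ.pos hy).le (hχ.pos hx).le hlt.le
  have := mul_lt_mul hlt hω (h.pos _ (hχ.pos hy)) (hχ.pos hx).le
  rw [hχ.mul_modulus hx, hχ.mul_modulus hy] at this
  exact this.not_ge hxy

theorem one_div_anti {s t : ℝ} (hs : 0 < s) (hst : s ≤ t) : χinv (1 / t) ≤ χinv (1 / s) :=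
  hχ.monotoneOn h (one_div_pos.2 (hs.trans_le hst)) (one_div_pos.2 hs)
    (one_div_le_one_div_of_le hs hst)

theorem mul_one_div_mono {s t : ℝ} (hs : 0 < s) (hst : s ≤ t) :
    s * χinv (1 / s) ≤ t * χinv (1 / t) := by
  have heq : ∀ {x : ℝ}, 0 < x → x * χinv (1 / x) = 1 / ω (χinv (1 / x)) := fun {x} hx ↦ by
    have hx' := one_div_pos.2 hx
    have hωx := h.pos _ (hχ.pos hx')
    rw [eq_div_iff hωx.ne', mul_assoc, hχ.mul_modulus hx', mul_one_div_cancel hx.ne']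
  have ht := hs.trans_le hst
  have hχs := hχ.pos (one_div_pos.2 hs)
  have hχt := hχ.pos (one_div_pos.2 ht)
  rw [heq hs, heq ht]
  exact one_div_le_one_div_of_le (h.pos _ hχt)
    (h.monotoneOn hχt.le hχs.le (hχ.one_div_anti h hs hst))

theorem exists_le_mul_sqrt (hsub : IsSubdoubling ω) : ∃ C, 0 < C ∧ ∀ s t, 1 ≤ s → s ≤ t →
    χinv (1 / t) ≤ C * χinv (1 / s) * √(s / t) := by
  obtain ⟨C, hC, hquasi⟩ := h.exists_mul_le_mul hsub (χinv (1 / 1)) (hχ.pos (by norm_num))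
  refine ⟨√C, sqrt_pos.2 hC, fun s t hs hst ↦ ?_⟩
  have hs₀ : 0 < s := by linarith
  have ht₀ : 0 < t := by linarith
  have hχs := hχ.pos (one_div_pos.2 hs₀)
  have hχt := hχ.pos (one_div_pos.2 ht₀)
  have hlin := hquasi _ _ hχt (hχ.one_div_anti h hs₀ hst) (hχ.one_div_anti h one_pos hs)
  have hsq : χinv (1 / t) ^ 2 ≤ C * χinv (1 / s) ^ 2 * (s / t) :=
    calc χinv (1 / t) ^ 2 = χinv (1 / t) ^ 2 * (1 / s) * s := by field
      _ = ω (χinv (1 / s)) * χinv (1 / t) * (χinv (1 / t) * χinv (1 / s)) * s := by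
          nth_rw 1 [← hχ.mul_modulus (one_div_pos.2 hs₀)]
          ring
      _ ≤ C * ω (χinv (1 / t)) * χinv (1 / s) * (χinv (1 / t) * χinv (1 / s)) * s := by gcongr
      _ = C * χinv (1 / s) ^ 2 * (χinv (1 / t) * ω (χinv (1 / t))) * s := by ring
      _ = _ := by rw [hχ.mul_modulus (one_div_pos.2 ht₀)]; ring
  calc χinv (1 / t) ≤ √(C * χinv (1 / s) ^ 2 * (s / t)) := le_sqrt_of_sq_le hsq
    _ = _ := by rw [sqrt_mul (by positivity), sqrt_mul hC.le, sqrt_sq hχs.le]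

end IsChiInverse

end Modulus

section BumpEstimate

theorem IsRamp.card_filter_lt_norm_bumpFourier_le {G : ℝ → ℝ} {ℓ : ℝ} (h : IsRamp G ℓ) {N : ℕ}
    (hN : 0 < N) {y : ℝ} (hy : 0 < y) (hy₁ : y ≤ 1)
    (hG : ∀ s t, y < t - s → ∃ j : ℤ, (j / N : ℝ) ∈ uIcc (G s) (G t)) (κ η : ℝ) (F : Finset ℤ) :
    ((F.filter fun k : ℤ ↦ 40 * y < ‖bumpFourier G ℓ κ (η - k)‖).card : ℝ) ≤ 9 * N / y := by
  have hsub : F.filter (fun k : ℤ ↦ 40 * y < ‖bumpFourier G ℓ κ (η - k)‖) ⊆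
      (Finset.Icc (-(N : ℤ)) N).biUnion fun j ↦
        F.filter fun k : ℤ ↦ |(k : ℝ) - (κ * (j / N) + η)| ≤ 1 / y := by
    intro k hk
    obtain ⟨hkF, hlt⟩ := Finset.mem_filter.1 hk
    by_contra hfar
    refine hlt.not_ge (h.norm_bumpFourier_le_of_grid hN hy hG fun j hj ↦ ?_)
    by_contra! hnear
    refine hfar (Finset.mem_biUnion.2 ⟨j, Finset.mem_Icc.2 (abs_le.1 hj),
      Finset.mem_filter.2 ⟨hkF, ?_⟩⟩)
    rwa [abs_sub_comm, add_sub_assoc]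
  have hone : 1 ≤ 1 / y := (one_le_div hy).2 hy₁
  have hN₁ : (1 : ℝ) ≤ N := by exact_mod_cast hN
  calc ((F.filter fun k : ℤ ↦ 40 * y < ‖bumpFourier G ℓ κ (η - k)‖).card : ℝ)
      ≤ ∑ j ∈ Finset.Icc (-(N : ℤ)) N,
          ((F.filter fun k : ℤ ↦ |(k : ℝ) - (κ * (j / N) + η)| ≤ 1 / y).card : ℝ) := by
        exact_mod_cast (Finset.card_le_card hsub).trans Finset.card_biUnion_le
    _ ≤ ∑ j ∈ Finset.Icc (-(N : ℤ)) N, 3 * (1 / y) := Finset.sum_le_sum fun j _ ↦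
        (card_filter_abs_sub_le F _ (by positivity)).trans (by linarith)
    _ = (2 * N + 1) * (3 * (1 / y)) := by
        rw [Finset.sum_const, nsmul_eq_mul, Int.card_Icc,
          show ((N : ℤ) + 1 - -(N : ℤ)).toNat = 2 * N + 1 by lia]
        push_cast
        rfl
    _ ≤ (3 * N) * (3 * (1 / y)) := by gcongr; linarith
    _ = 9 * N / y := by ring

theorem IsHalvingScale.exists_level {δ : ℕ → ℝ} (hδ : IsHalvingScale δ) (q : ℕ) {y : ℝ}
    (hy : 0 < y) (hyq : y ≤ δ q) : ∃ k, δ (q + k + 1) < y ∧ y ≤ δ (q + k) := by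
  classical
  have hex := hδ.exists_add_lt q hy
  obtain ⟨k, hk⟩ := Nat.exists_eq_succ_of_ne_zero (n := Nat.find hex) fun hzero ↦ by
    have := Nat.find_spec hex
    rw [hzero, add_zero] at this
    exact this.not_ge hyq
  refine ⟨k, ?_, not_lt.1 (Nat.find_min hex (by lia))⟩
  have := Nat.find_spec hex
  rwa [hk] at this

namespace IsDyadicScale

variable {ω χinv : ℝ → ℝ} {A : ℝ} {δ : ℕ → ℝ} (hδ : IsDyadicScale ω A δ) (h : IsModulus ω)
include hδ h

theorem card_filter_lt_norm_bumpFourier_le (q : ℕ) (κ η : ℝ) {y : ℝ} (hy : 0 < y) (F : Finset ℤ) :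
    ((F.filter fun k : ℤ ↦
      40 * y < ‖bumpFourier (cantorStair δ q) (δ q) κ (η - k)‖).card : ℝ) ≤
      18 * A * (1 / 2) ^ q / (y * ω y) := by
  have hωy := h.pos y hy
  have hA := hδ.const_pos
  have hδq := hδ.pos q
  rcases lt_or_ge (δ q) y with hqy | hyq
  · have hle : ∀ k ∈ F, ¬ 40 * y < ‖bumpFourier (cantorStair δ q) (δ q) κ (η - k)‖ := fun k _ ↦
      not_lt.2 (((hδ.isRamp q).norm_bumpFourier_le_length κ (η - k)).trans (by linarith))
    rw [Finset.filter_false_of_mem hle, Finset.card_empty, Nat.cast_zero]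
    positivity
  · obtain ⟨m, hmy, hym⟩ := hδ.exists_level q hy hyq
    have hy₁ : y ≤ 1 :=
      hyq.trans ((hδ.le_pow q).trans (pow_le_one₀ (by norm_num) (by norm_num)))
    have hgrid : ∀ s t, y < t - s → ∃ j : ℤ, (j / (2 ^ (m + 1) : ℕ) : ℝ) ∈
        uIcc (cantorStair δ q s) (cantorStair δ q t) := by
      intro s t hst
      obtain ⟨j, u, v, hsu, huv, hvt, hj⟩ := hδ.exists_plateau q (m + 1) (s := s) (t := t)
        (by linarith) (by rw [← add_assoc]; linarith)
      obtain ⟨x, hux, hxv⟩ := exists_between huv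
      refine ⟨j, ?_⟩
      have hmono := hδ.cantorStair_mono q
      rw [show (j / (2 ^ (m + 1) : ℕ) : ℝ) = cantorStair δ q x by rw [hj x ⟨hux, hxv⟩]; simp]
      exact mem_uIcc_of_le (hmono (hsu.trans hux.le)) (hmono (hxv.le.trans hvt))
    refine ((hδ.isRamp q).card_filter_lt_norm_bumpFourier_le (N := 2 ^ (m + 1)) (by positivity) hy
      hy₁ hgrid κ η F).trans ?_
    have hω : ω y ≤ A * (1 / 2) ^ (q + m) := by
      rw [← hδ.modulus_eq]
      exact h.monotoneOn hy.le (hδ.pos _).le hym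
    rw [div_le_div_iff₀ hy (by positivity)]
    calc 9 * ((2 ^ (m + 1) : ℕ) : ℝ) * (y * ω y)
        ≤ 9 * ((2 ^ (m + 1) : ℕ) : ℝ) * (y * (A * (1 / 2) ^ (q + m))) := by gcongr
      _ = 18 * A * (1 / 2) ^ q * y * (2 ^ m * (1 / 2) ^ m) := by push_cast; ring
      _ = 18 * A * (1 / 2) ^ q * y := by rw [← mul_pow]; norm_num

theorem card_filter_dyadic_le (hχ : IsChiInverse ω χinv) (q : ℕ) (κ η : ℝ) (i : ℕ)
    (F : Finset ℤ) :
    ((F.filter fun k : ℤ ↦ 40 * χinv (1 / 2 ^ i) <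
      ‖bumpFourier (cantorStair δ q) (δ q) κ (η - k)‖).card : ℝ) ≤
      18 * A * (1 / 2) ^ q * 2 ^ i := by
  refine (hδ.card_filter_lt_norm_bumpFourier_le h q κ η (hχ.pos_one_div_pow i) F).trans_eq ?_
  rw [hχ.mul_modulus (by positivity)]
  field

theorem sum_norm_bumpFourier_rpow_le (hχ : IsChiInverse ω χinv) {p : ℝ} (hp : 1 ≤ p) (q : ℕ)
    (κ η : ℝ) (I : ℕ) (F : Finset ℤ) :
    ∑ k ∈ F, ‖bumpFourier (cantorStair δ q) (δ q) κ (η - k)‖ ^ p ≤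
      (18 * A * (1 / 2) ^ q + 3) * (8 * (1 / 2) ^ q) ^ p +
      (∑ i ∈ Finset.range I, 18 * A * (1 / 2) ^ q * 2 ^ (i + 1) * (40 * χinv (1 / 2 ^ i)) ^ p +
        6 * |κ| * (40 * χinv (1 / 2 ^ I)) ^ p) +
      128 * (8 * (1 / 2) ^ q) ^ (p - 1) * min |κ| 1 := by
  have hramp := hδ.isRamp q
  have hsum := sum_rpow_le_of_counts_of_tail (p := p) (κ := |κ|) (c := 16 * |κ|) (η := η) (I := I)
    (v := fun k ↦ ‖bumpFourier (cantorStair δ q) (δ q) κ (η - k)‖) (M := 8 * (1 / 2) ^ q)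
    (y := fun i ↦ 40 * χinv (1 / 2 ^ i)) (fun _ ↦ norm_nonneg _)
    (fun k ↦ (hramp.norm_bumpFourier_le_length κ _).trans (by gcongr; exact hδ.le_pow q))
    (fun i ↦ by have := hχ.pos_one_div_pow i; positivity) hp (abs_nonneg κ) (by positivity)
    (fun i _ S ↦ hδ.card_filter_dyadic_le h hχ q κ η i S)
    (fun k hk ↦ by
      rw [abs_sub_comm] at hk
      rw [sub_sq_comm]
      exact hramp.norm_bumpFourier_le_of_lt hk) F
  have hmin : |κ| / max 1 (2 * |κ|) ≤ min |κ| 1 :=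
    le_min (div_le_self (abs_nonneg κ) (le_max_left _ _)) <|
      (div_le_one (by positivity)).2 <|
        (le_mul_of_one_le_left (abs_nonneg κ) one_le_two).trans (le_max_right _ _)
  refine hsum.trans (add_le_add_right ?_ _)
  calc 8 * (8 * (1 / 2 : ℝ) ^ q) ^ (p - 1) * (16 * |κ| / max 1 (2 * |κ|))
      = 128 * (8 * (1 / 2) ^ q) ^ (p - 1) * (|κ| / max 1 (2 * |κ|)) := by ring
    _ ≤ _ := by gcongr

end IsDyadicScale

end BumpEstimate

section DyadicSum

/-- The dyadic version, at the frequency `2 ^ I`, of the `p`-th power of the growth rate `Θ_p`. -/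
noncomputable def dyadicSum (χinv : ℝ → ℝ) (p : ℝ) (I : ℕ) : ℝ :=
  ∑ i ∈ Finset.range (I + 1), 2 ^ i * χinv (1 / 2 ^ i) ^ p

/-- The amplitude of a bump of length `4 δ q`. It decays doubly exponentially, so that at a
frequency `n` only about `log log n` of the bumps are visible. -/
noncomputable def bumpAmp (q : ℕ) : ℝ := (1 / 2) ^ (2 ^ q + q + 1)

theorem bumpAmp_pos (q : ℕ) : 0 < bumpAmp q := by unfold bumpAmp; positivity

theorem bumpAmp_le_pow (q : ℕ) : bumpAmp q ≤ (1 / 2) ^ (q + 1) :=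
  pow_le_pow_of_le_one (by norm_num) (by norm_num) (by lia)

theorem min_mul_bumpAmp_one_le {x : ℝ} {I : ℕ} (hx : x ≤ 2 ^ (I + 1)) (q : ℕ) :
    min (x * bumpAmp q) 1 ≤ (1 / 2) ^ q * (I + 1) := by
  rcases le_or_gt I (2 ^ q) with hI | hI
  · calc min (x * bumpAmp q) 1 ≤ 2 ^ (2 ^ q + 1) * bumpAmp q := by
          refine (min_le_left _ _).trans ?_
          gcongr
          · exact (bumpAmp_pos q).le
          · exact hx.trans (pow_le_pow_right₀ one_le_two (by lia))
      _ = (1 / 2) ^ q * (2 ^ (2 ^ q + 1) * (1 / 2) ^ (2 ^ q + 1)) := by rw [bumpAmp]; ring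
      _ = (1 / 2) ^ q := by rw [← mul_pow]; norm_num
      _ ≤ (1 / 2) ^ q * (I + 1) := le_mul_of_one_le_right (by positivity) (by simp)
  · have hI' : (2 : ℝ) ^ q ≤ I + 1 := by exact_mod_cast hI.le.trans I.le_succ
    calc min (x * bumpAmp q) 1 ≤ 1 := min_le_right _ _
      _ = (1 / 2) ^ q * 2 ^ q := by rw [← mul_pow]; norm_num
      _ ≤ _ := by gcongr

namespace IsChiInverse

variable {ω χinv : ℝ → ℝ} (hχ : IsChiInverse ω χinv)
include hχ

theorem dyadicTerm_pos (p : ℝ) (i : ℕ) : 0 < 2 ^ i * χinv (1 / 2 ^ i) ^ p :=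
  mul_pos (by positivity) (rpow_pos_of_pos (hχ.pos_one_div_pow i) p)

theorem dyadicTerm_le_dyadicSum (p : ℝ) {i I : ℕ} (hi : i ≤ I) :
    2 ^ i * χinv (1 / 2 ^ i) ^ p ≤ dyadicSum χinv p I :=
  Finset.single_le_sum (f := fun i ↦ 2 ^ i * χinv (1 / 2 ^ i) ^ p)
    (fun i _ ↦ (hχ.dyadicTerm_pos p i).le) (Finset.mem_range.2 (by lia))

theorem rpow_one_le_dyadicSum (p : ℝ) (I : ℕ) : χinv 1 ^ p ≤ dyadicSum χinv p I := by
  simpa using hχ.dyadicTerm_le_dyadicSum p I.zero_le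

theorem dyadicSum_pos (p : ℝ) (I : ℕ) : 0 < dyadicSum χinv p I :=
  (rpow_pos_of_pos (hχ.pos one_pos) p).trans_le (hχ.rpow_one_le_dyadicSum p I)

theorem add_one_mul_le_dyadicSum_one (h : IsModulus ω) (I : ℕ) :
    (I + 1) * χinv 1 ≤ dyadicSum χinv 1 I := by
  have := Finset.card_nsmul_le_sum (Finset.range (I + 1))
    (fun i ↦ (2 : ℝ) ^ i * χinv (1 / 2 ^ i) ^ (1 : ℝ)) (χinv 1) fun i _ ↦ by
      simpa using hχ.mul_one_div_mono h one_pos (one_le_pow₀ one_le_two : (1 : ℝ) ≤ 2 ^ i)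
  simpa [dyadicSum] using this

theorem layers_le_dyadicSum {p c Q x X : ℝ} (hc : 0 ≤ c) (I : ℕ)
    (hx : x ≤ X * 2 ^ I) :
    ∑ i ∈ Finset.range I, Q * 2 ^ (i + 1) * (c * χinv (1 / 2 ^ i)) ^ p +
      x * (c * χinv (1 / 2 ^ I)) ^ p ≤ max (2 * Q) X * c ^ p * dyadicSum χinv p I := by
  have hsplit : ∀ i, (c * χinv (1 / 2 ^ i)) ^ p = c ^ p * χinv (1 / 2 ^ i) ^ p := fun i ↦
    mul_rpow hc (hχ.pos_one_div_pow i).le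
  have : 0 ≤ c ^ p := rpow_nonneg hc p
  have hχp : ∀ i, 0 < χinv (1 / 2 ^ i) ^ p := fun i ↦ rpow_pos_of_pos (hχ.pos_one_div_pow i) p
  rw [dyadicSum, Finset.sum_range_succ, mul_add, Finset.mul_sum]
  refine add_le_add (Finset.sum_le_sum fun i _ ↦ ?_) ?_
  · have := hχp i
    calc Q * 2 ^ (i + 1) * (c * χinv (1 / 2 ^ i)) ^ p
        = 2 * Q * c ^ p * (2 ^ i * χinv (1 / 2 ^ i) ^ p) := by rw [hsplit, pow_succ]; ring
      _ ≤ _ := by gcongr; exact le_max_left _ _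
  · have := hχp I
    calc x * (c * χinv (1 / 2 ^ I)) ^ p
        ≤ X * 2 ^ I * (c * χinv (1 / 2 ^ I)) ^ p := by rw [hsplit]; gcongr
      _ = X * c ^ p * (2 ^ I * χinv (1 / 2 ^ I) ^ p) := by rw [hsplit]; ring
      _ ≤ _ := by gcongr; exact le_max_right _ _

theorem exists_pow_rpow_mul_min_le (h : IsModulus ω) {p : ℝ} (hp : 1 ≤ p) :
    ∃ s : ℝ, 0 < s ∧ s ≤ 1 ∧ ∀ (q I : ℕ) (x : ℝ), 0 ≤ x → x ≤ 2 ^ (I + 1) →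
      ((1 / 2 : ℝ) ^ q) ^ (p - 1) * min (x * bumpAmp q) 1 ≤
        ((1 / 2) ^ q) ^ s * (dyadicSum χinv p I / χinv 1 ^ p) := by
  have hχ₁ := hχ.pos one_pos
  rcases hp.eq_or_lt with rfl | hp
  · refine ⟨1, one_pos, le_rfl, fun q I x _ hx ↦ ?_⟩
    simp only [sub_self, rpow_zero, one_mul, rpow_one]
    refine (min_mul_bumpAmp_one_le hx q).trans ?_
    gcongr
    exact (le_div_iff₀ hχ₁).2 (hχ.add_one_mul_le_dyadicSum_one h I)
  · refine ⟨min (p - 1) 1, lt_min (by linarith) one_pos, min_le_right _ _, fun q I x hx₀ _ ↦ ?_⟩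
    have hone : 1 ≤ dyadicSum χinv p I / χinv 1 ^ p :=
      (one_le_div (rpow_pos_of_pos hχ₁ p)).2 (hχ.rpow_one_le_dyadicSum p I)
    refine mul_le_mul ?_ ((min_le_right _ _).trans hone)
      (le_min (mul_nonneg hx₀ (bumpAmp_pos q).le) zero_le_one) (by positivity)
    exact rpow_le_rpow_of_exponent_ge (by positivity) (pow_le_one₀ (by norm_num) (by norm_num))
      (min_le_left _ _)

end IsChiInverse

namespace IsDyadicScale

variable {ω χinv : ℝ → ℝ} {A : ℝ} {δ : ℕ → ℝ} (hδ : IsDyadicScale ω A δ) (h : IsModulus ω)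
  (hχ : IsChiInverse ω χinv)
include hδ h hχ

theorem exists_sum_norm_bumpFourier_rpow_le {p : ℝ} (hp : 1 ≤ p) :
    ∃ K, 0 < K ∧ ∀ (q I : ℕ) (κ η : ℝ) (F : Finset ℤ), |κ| ≤ 2 ^ (I + 1) * bumpAmp q →
      ∑ k ∈ F, ‖bumpFourier (cantorStair δ q) (δ q) κ (η - k)‖ ^ p ≤
        K * ((1 / 2) ^ q * dyadicSum χinv p I + ((1 / 2) ^ q) ^ (p - 1) * min |κ| 1) := by
  have hA := hδ.const_pos
  have hχ₁ := rpow_pos_of_pos (hχ.pos one_pos) p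
  set K₁ := (18 * A + 3) * 8 ^ p / χinv 1 ^ p + max (36 * A) 12 * 40 ^ p
  have : 0 < K₁ := by positivity
  refine ⟨max K₁ (128 * 8 ^ (p - 1)), by positivity, fun q I κ η F hκ ↦ ?_⟩
  refine (hδ.sum_norm_bumpFourier_rpow_le h hχ hp q κ η I F).trans ?_
  set r : ℝ := (1 / 2) ^ q
  have hr : 0 < r := by positivity
  have hr₁ : r ≤ 1 := pow_le_one₀ (by norm_num) (by norm_num)
  have hS := hχ.dyadicSum_pos p I
  have hnear : (18 * A * r + 3) * (8 * r) ^ p ≤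
      (18 * A + 3) * 8 ^ p / χinv 1 ^ p * (r * dyadicSum χinv p I) := by
    have hrp : r ^ p ≤ r := rpow_le_self_of_le_one hr.le hr₁ hp
    calc (18 * A * r + 3) * (8 * r) ^ p ≤ (18 * A * 1 + 3) * (8 ^ p * r) := by
          rw [mul_rpow (by norm_num) hr.le]; gcongr
      _ = (18 * A + 3) * 8 ^ p / χinv 1 ^ p * (r * χinv 1 ^ p) := by field
      _ ≤ _ := by gcongr; exact hχ.rpow_one_le_dyadicSum p I
  have hlayers := hχ.layers_le_dyadicSum (p := p) (c := 40) (Q := 18 * A * r) (x := 6 * |κ|)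
    (X := 12 * r) (by norm_num) I <| by
      have hamp : bumpAmp q ≤ r := (bumpAmp_le_pow q).trans
        (pow_le_pow_of_le_one (by norm_num) (by norm_num) q.le_succ)
      have hκr : |κ| ≤ 2 ^ (I + 1) * r := hκ.trans (by gcongr)
      calc 6 * |κ| ≤ 6 * (2 ^ (I + 1) * r) := by gcongr
        _ = 12 * r * 2 ^ I := by ring
  rw [show 2 * (18 * A * r) = 36 * A * r by ring, ← max_mul_of_nonneg _ _ hr.le] at hlayers
  calc _ ≤ K₁ * (r * dyadicSum χinv p I) + 128 * 8 ^ (p - 1) * (r ^ (p - 1) * min |κ| 1) := by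
        rw [mul_rpow (by norm_num) hr.le (z := p - 1)]
        linarith [add_mul ((18 * A + 3) * 8 ^ p / χinv 1 ^ p) (max (36 * A) 12 * 40 ^ p)
          (r * dyadicSum χinv p I)]
    _ ≤ max K₁ (128 * 8 ^ (p - 1)) * (r * dyadicSum χinv p I) +
        max K₁ (128 * 8 ^ (p - 1)) * (r ^ (p - 1) * min |κ| 1) := by
        gcongr
        · exact le_max_left _ _
        · exact le_max_right _ _
    _ = _ := by ring

theorem exists_sum_norm_bumpFourier_rpow_le_geometric {p : ℝ} (hp : 1 ≤ p) :
    ∃ C ρ, 0 < C ∧ 0 < ρ ∧ ρ < 1 ∧ ∀ (q I : ℕ) (x η : ℝ) (F : Finset ℤ), |x| ≤ 2 ^ (I + 1) →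
      ∑ k ∈ F, ‖bumpFourier (cantorStair δ q) (δ q) (x * bumpAmp q) (η - k)‖ ^ p ≤
        (C * ρ ^ q) ^ p * dyadicSum χinv p I := by
  obtain ⟨K, hK, hsum⟩ := hδ.exists_sum_norm_bumpFourier_rpow_le h hχ hp
  obtain ⟨s, hs, hs₁, htail⟩ := hχ.exists_pow_rpow_mul_min_le h hp
  have hp₀ : 0 < p := by linarith
  have hχp := rpow_pos_of_pos (hχ.pos one_pos) p
  set B := K * (1 + 1 / χinv 1 ^ p)
  have hB : 0 < B := by positivity
  refine ⟨B ^ p⁻¹, (1 / 2) ^ (s / p), by positivity, by positivity,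
    rpow_lt_one (by norm_num) (by norm_num) (by positivity), fun q I x η F hx ↦ ?_⟩
  have hκ : |x * bumpAmp q| = |x| * bumpAmp q := by rw [abs_mul, abs_of_pos (bumpAmp_pos q)]
  have hS := hχ.dyadicSum_pos p I
  have hr : (1 / 2 : ℝ) ^ q ≤ ((1 / 2) ^ q) ^ s :=
    self_le_rpow_of_le_one (by positivity) (pow_le_one₀ (by norm_num) (by norm_num)) hs₁
  calc _ ≤ K * ((1 / 2) ^ q * dyadicSum χinv p I +
        ((1 / 2) ^ q) ^ (p - 1) * min |x * bumpAmp q| 1) := hsum q I _ η F (by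
          rw [hκ]
          exact mul_le_mul_of_nonneg_right hx (bumpAmp_pos q).le)
    _ ≤ K * (((1 / 2) ^ q) ^ s * dyadicSum χinv p I +
        ((1 / 2) ^ q) ^ s * (dyadicSum χinv p I / χinv 1 ^ p)) := by
        rw [hκ]
        exact mul_le_mul_of_nonneg_left (add_le_add (mul_le_mul_of_nonneg_right hr hS.le)
          (htail q I |x| (abs_nonneg x) hx)) hK.le
    _ = B * ((1 / 2) ^ q) ^ s * dyadicSum χinv p I := by ring
    _ = _ := by
        rw [mul_rpow (by positivity) (by positivity), rpow_inv_rpow hB.le hp₀.ne',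
          ← rpow_natCast (1 / 2) q, ← rpow_natCast ((1 / 2) ^ (s / p)) q,
          ← rpow_mul (by norm_num), ← rpow_mul (by positivity), ← rpow_mul (by positivity)]
        congr 3
        field

end IsDyadicScale

end DyadicSum

section GrowthRates

theorem log_sq_le_self {x : ℝ} (hx : 1 ≤ x) : log x ^ 2 ≤ x := by
  set u := √√x
  have hu : 0 < u := by positivity
  have hx_eq : x = (u ^ 2) ^ 2 := by rw [sq_sqrt (by positivity), sq_sqrt (by positivity)]
  have hlog : log x = 4 * log u := by
    rw [hx_eq, ← pow_mul, log_pow]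
    norm_num
  have hle : log x ≤ u ^ 2 := by
    linarith [log_le_sub_one_of_pos hu, sq_nonneg (u - 2)]
  rw [hx_eq] at hle ⊢
  exact pow_le_pow_left₀ (log_nonneg (hx_eq ▸ hx)) hle 2

theorem sum_sqrt_two_pow_le (I : ℕ) : ∑ i ∈ Finset.range (I + 1), √(2 ^ i) ≤ 4 * √(2 ^ I) := by
  induction I with
  | zero => simp
  | succ I ih =>
    have hsqrt : √(2 ^ (I + 1)) = √2 * √(2 ^ I) := by
      rw [pow_succ, mul_comm, sqrt_mul zero_le_two]
    have hsqrt_two : 4 / 3 ≤ √2 := le_sqrt_of_sq_le (by norm_num)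
    rw [Finset.sum_range_succ, hsqrt]
    linarith [mul_le_mul_of_nonneg_right hsqrt_two (sqrt_nonneg (2 ^ I))]

theorem add_one_le_four_mul_log {y : ℝ} {I : ℕ} (hy : 2 ≤ y) (hI : 2 ^ I ≤ y) :
    (I + 1 : ℝ) ≤ 4 * log y := by
  have hlog_two : log 2 ≤ log y := log_le_log two_pos hy
  have hlog_pow : I * log 2 ≤ log y := by
    rw [← log_pow]
    exact log_le_log (by positivity) hI
  have : (I : ℝ) * (1 / 2) ≤ I * log 2 := by gcongr; linarith [log_two_gt_d9]
  linarith [log_two_gt_d9]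

namespace IsChiInverse

variable {ω χinv : ℝ → ℝ} (hχ : IsChiInverse ω χinv) (h : IsModulus ω)
include hχ h

/- The terms increase up to the index with `2 ^ i = y / (log y) ^ 2` and afterwards grow at most
like `√(2 ^ i)`, so the first range contributes through the number of its terms and the second
through its last term; `χ⁻¹ ((log y) ^ 2 / y)` is the value at the index balancing the two. -/
theorem exists_dyadicSum_one_le (hsub : IsSubdoubling ω) :
    ∃ C, 0 < C ∧ ∀ (y : ℝ) (I : ℕ), 2 ≤ y → 2 ^ I ≤ y →
      dyadicSum χinv 1 I ≤ C * (y / log y * χinv (log y ^ 2 / y)) := by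
  obtain ⟨C, hC, hdecay⟩ := hχ.exists_le_mul_sqrt h hsub
  refine ⟨4 + 4 * C, by positivity, fun y I hy hI ↦ ?_⟩
  have hL : 0 < log y := log_pos (by linarith)
  set s := y / log y ^ 2
  have hs : 1 ≤ s := (one_le_div (by positivity)).2 (log_sq_le_self (by linarith))
  have hY := hχ.pos (show 0 < 1 / s by positivity)
  rw [show log y ^ 2 / y = 1 / s from (one_div_div _ _).symm]
  set Y := χinv (1 / s)
  have hterm : ∀ i ∈ Finset.range (I + 1),
      2 ^ i * χinv (1 / 2 ^ i) ^ (1 : ℝ) ≤ s * Y + C * Y * √s * √(2 ^ i) := fun i _ ↦ by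
    rw [rpow_one]
    rcases le_total (2 ^ i) s with hi | hi
    · exact (hχ.mul_one_div_mono h (by positivity) hi).trans
        (le_add_of_nonneg_right (by positivity))
    · calc (2 : ℝ) ^ i * χinv (1 / 2 ^ i) ≤ 2 ^ i * (C * Y * √(s / 2 ^ i)) := by
            gcongr
            exact hdecay s _ hs hi
        _ = C * Y * √s * (2 ^ i / √(2 ^ i)) := by rw [sqrt_div (by positivity)]; ring
        _ ≤ _ := by rw [div_sqrt]; exact le_add_of_nonneg_left (by positivity)
  have hsqrt : √s * √y = y / log y := by
    rw [sqrt_div' _ (by positivity), sqrt_sq hL.le, div_mul_eq_mul_div, mul_self_sqrt (by linarith)]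
  calc dyadicSum χinv 1 I
      ≤ ∑ i ∈ Finset.range (I + 1), (s * Y + C * Y * √s * √(2 ^ i)) := Finset.sum_le_sum hterm
    _ = (I + 1) * (s * Y) + C * Y * √s * ∑ i ∈ Finset.range (I + 1), √(2 ^ i) := by
        simp [Finset.sum_add_distrib, Finset.mul_sum]
    _ ≤ 4 * log y * (s * Y) + C * Y * √s * (4 * √y) := by
        gcongr
        · exact add_one_le_four_mul_log hy hI
        · exact (sum_sqrt_two_pow_le I).trans (by gcongr)
    _ = 4 * (log y * s) * Y + 4 * C * (√s * √y) * Y := by ring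
    _ = _ := by rw [hsqrt, show log y * s = y / log y by simp only [s]; field]; ring

end IsChiInverse

theorem sum_two_pow_mul_le_integral {f : ℝ → ℝ} (hf : AntitoneOn f (Ici 1)) (I : ℕ) :
    ∑ i ∈ Finset.range I, 2 ^ (i + 1) * f (2 ^ (i + 1)) ≤ 2 * ∫ t in (1 : ℝ)..2 ^ I, f t := by
  have hpow : ∀ i : ℕ, (1 : ℝ) ≤ 2 ^ i := fun i ↦ one_le_pow₀ one_le_two
  have hle : ∀ i : ℕ, (2 : ℝ) ^ i ≤ 2 ^ (i + 1) := fun i ↦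
    pow_le_pow_right₀ one_le_two i.le_succ
  have hint : ∀ i : ℕ, IntervalIntegrable f volume (2 ^ i) (2 ^ (i + 1)) := fun i ↦
    AntitoneOn.intervalIntegrable <| hf.mono <| by
      rw [uIcc_of_le (hle i)]
      exact fun t ht ↦ (hpow i).trans ht.1
  have hblock : ∀ i ∈ Finset.range I,
      2 ^ (i + 1) * f (2 ^ (i + 1)) ≤ 2 * ∫ t in (2 : ℝ) ^ i..2 ^ (i + 1), f t := fun i _ ↦ by
    have hconst := intervalIntegral.integral_mono_on (hle i) (intervalIntegrable_const)
      (hint i) (fun t ht ↦ hf ((hpow i).trans ht.1) (hpow (i + 1)) ht.2)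
    rw [intervalIntegral.integral_const, smul_eq_mul] at hconst
    calc _ = 2 * ((2 ^ (i + 1) - 2 ^ i) * f (2 ^ (i + 1))) := by ring
      _ ≤ _ := by gcongr
  calc _ ≤ ∑ i ∈ Finset.range I, 2 * ∫ t in (2 : ℝ) ^ i..2 ^ (i + 1), f t :=
        Finset.sum_le_sum hblock
    _ = _ := by
        rw [← Finset.mul_sum, intervalIntegral.sum_integral_adjacent_intervals fun i _ ↦ hint i,
          pow_zero]

theorem IsChiInverse.exists_dyadicSum_le_integral {ω χinv : ℝ → ℝ} (hχ : IsChiInverse ω χinv)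
    (h : IsModulus ω) {p : ℝ} (hp : 0 ≤ p) :
    ∃ C, 0 < C ∧ ∀ (y : ℝ) (I : ℕ), 2 ≤ y → 2 ^ I ≤ y →
      dyadicSum χinv p I ≤ C * ∫ t in (1 : ℝ)..y, χinv (1 / t) ^ p := by
  set f : ℝ → ℝ := fun t ↦ χinv (1 / t) ^ p
  have hf_pos : ∀ {t}, 0 < t → 0 < f t := fun ht ↦ rpow_pos_of_pos (hχ.pos (one_div_pos.2 ht)) p
  have hf : AntitoneOn f (Ici 1) := fun s hs t ht hst ↦
    have hs₀ : 0 < s := one_pos.trans_le hs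
    rpow_le_rpow (hχ.pos (one_div_pos.2 (hs₀.trans_le hst))).le (hχ.one_div_anti h hs₀ hst) hp
  have hf₁ : 0 < f 1 := hf_pos one_pos
  have hf₂ : 0 < f 2 := hf_pos two_pos
  refine ⟨f 1 / f 2 + 2, by positivity, fun y I hy hI ↦ ?_⟩
  have hint : ∀ {a b}, 1 ≤ a → a ≤ b → IntervalIntegrable f volume a b := fun {a b} ha hab ↦
    AntitoneOn.intervalIntegrable <| hf.mono <| by
      rw [uIcc_of_le hab]
      exact fun t ht ↦ ha.trans ht.1
  have hmono : ∀ {a}, 1 ≤ a → a ≤ y → ∫ t in (1 : ℝ)..a, f t ≤ ∫ t in (1 : ℝ)..y, f t := by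
    intro a ha hay
    refine intervalIntegral.integral_mono_interval le_rfl ha hay ?_ (hint le_rfl (ha.trans hay))
    filter_upwards [ae_restrict_mem measurableSet_Ioc] with t ht
    exact (hf_pos (one_pos.trans ht.1)).le
  have hfirst : f 2 ≤ ∫ t in (1 : ℝ)..y, f t := by
    refine le_trans ?_ (hmono one_le_two hy)
    simpa using sum_two_pow_mul_le_integral hf 1
  calc dyadicSum χinv p I
      = ∑ i ∈ Finset.range I, 2 ^ (i + 1) * f (2 ^ (i + 1)) + f 1 := by
        rw [dyadicSum, Finset.sum_range_succ']
        simp [f]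
    _ ≤ 2 * (∫ t in (1 : ℝ)..y, f t) + f 1 / f 2 * ∫ t in (1 : ℝ)..y, f t := by
        refine add_le_add ((sum_two_pow_mul_le_integral hf I).trans ?_) ?_
        · have := hmono (one_le_pow₀ one_le_two) hI
          linarith
        · calc f 1 = f 1 / f 2 * f 2 := by field
            _ ≤ _ := by gcongr
    _ = _ := by ring

end GrowthRates

section Placement

open Filter Topology

/-- A function is densely constant if it is locally constant near the points of a dense set. -/
def DenselyConst (f : ℝ → ℝ) : Prop :=
  Dense {t | EventuallyConst f (𝓝 t)}

theorem isOpen_setOf_eventuallyConst (f : ℝ → ℝ) : IsOpen {t | EventuallyConst f (𝓝 t)} := by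
  refine isOpen_iff_mem_nhds.2 fun t ht ↦ ?_
  obtain ⟨c, hc⟩ := eventuallyConst_iff_exists_eventuallyEq.1 ht
  filter_upwards [eventually_eventually_nhds.2 hc] with s hs
  exact eventuallyConst_iff_exists_eventuallyEq.2 ⟨c, hs⟩

namespace DenselyConst

variable {f g : ℝ → ℝ}

theorem comp₂ (hf : DenselyConst f) (hg : DenselyConst g) (F : ℝ → ℝ → ℝ) :
    DenselyConst fun t ↦ F (f t) (g t) :=
  (hf.inter_of_isOpen_left hg (isOpen_setOf_eventuallyConst f)).mono fun _ ht ↦ ht.1.comp₂ F ht.2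

theorem comp_sub_const (hf : DenselyConst f) (a : ℝ) : DenselyConst fun t ↦ f (t - a) := by
  have hdense := hf.preimage (Homeomorph.subRight a).isOpenMap
  refine hdense.mono fun t ht ↦ ?_
  exact EventuallyConst.comp_tendsto ht ((continuous_sub_right a).tendsto t)

end DenselyConst

theorem IsHalvingScale.denselyConst_cantorStair {δ : ℕ → ℝ} (hδ : IsHalvingScale δ) (n : ℕ) :
    DenselyConst (cantorStair δ n) := by
  refine dense_of_exists_between fun s t hst ↦ ?_
  obtain ⟨k, hk⟩ := hδ.exists_add_lt n (sub_pos.2 hst)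
  obtain ⟨j, u, v, hsu, huv, hvt, hj⟩ := hδ.exists_plateau n k hst hk
  refine ⟨(u + v) / 2, ?_, by linarith, by linarith⟩
  refine eventuallyConst_iff_exists_eventuallyEq.2 ⟨j / 2 ^ k, ?_⟩
  have hmem : (u + v) / 2 ∈ Ioo u v := ⟨by linarith, by linarith⟩
  filter_upwards [Ioo_mem_nhds hmem.1 hmem.2] with x hx using hj x hx

theorem DenselyConst.bumpProfile {G : ℝ → ℝ} (hG : DenselyConst G) (ℓ : ℝ) :
    DenselyConst (bumpProfile G ℓ) :=
  ((hG.comp₂ (hG.comp_sub_const ℓ) (· - ·)).comp₂ (hG.comp_sub_const (2 * ℓ)) (· - ·)).comp₂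
    (hG.comp_sub_const (3 * ℓ)) (· + ·)

theorem exists_seq_of_forall_finite_exists {α : Type*} (P : ℕ → α → Prop) (r : α → α → Prop)
    (h : ∀ n (s : Set α), s.Finite → ∃ y, P n y ∧ ∀ x ∈ s, r x y) :
    ∃ f : ℕ → α, (∀ n, P n (f n)) ∧ ∀ m n, m < n → r (f m) (f n) := by
  choose g hg using h
  let f : ℕ → α := WellFounded.fix (C := fun _ ↦ α) Nat.lt_wfRel.wf fun n prev ↦
    g n _ (finite_range fun i : Fin n ↦ prev i i.2)
  have hf : ∀ n, f n = g n _ (finite_range fun i : Fin n ↦ f i) := fun n ↦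
    WellFounded.fix_eq _ _ n
  refine ⟨f, fun n ↦ hf n ▸ (hg n _ _).1, fun m n hmn ↦ ?_⟩
  rw [hf n]
  exact (hg n _ _).2 _ ⟨⟨m, hmn⟩, rfl⟩

/-- Positions `x j` and scales `q j` of a sequence of bumps whose supports
`[x j, x j + 4 * δ (q j)]` occur in every subinterval of `[0, 2π]`. The profile of each bump is
constant on the supports of the later ones, which also stay away from the points `x i` and
`x i + δ (q i)` at which it takes the values `0` and `1`. -/
structure IsBumpPlacement (δ : ℕ → ℝ) (x : ℕ → ℝ) (q : ℕ → ℕ) : Prop where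
  le_scale : ∀ j, j ≤ q j
  pos : ∀ j, 0 < x j
  end_lt : ∀ j, x j + 4 * δ (q j) < 2 * π
  exists_between : ∀ a b, 0 ≤ a → a < b → b ≤ 2 * π → ∃ j, a < x j ∧ x j + 4 * δ (q j) < b
  exists_const : ∀ i j, i < j → ∃ c, ∀ t ∈ Icc (x j) (x j + 4 * δ (q j)),
    bumpProfile (cantorStair δ (q i)) (δ (q i)) (t - x i) = c
  start_notMem : ∀ i j, i < j → x i ∉ Icc (x j) (x j + 4 * δ (q j))
  top_notMem : ∀ i j, i < j → x i + δ (q i) ∉ Icc (x j) (x j + 4 * δ (q j))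

namespace IsHalvingScale

variable {δ : ℕ → ℝ} (hδ : IsHalvingScale δ)
include hδ

theorem exists_eventually_nhds (s : Set (ℝ × ℕ)) (hs : s.Finite) {u v : ℝ} (huv : u < v) :
    ∃ z ∈ Ioo u v, ∀ a ∈ s,
      EventuallyConst (fun t ↦ bumpProfile (cantorStair δ a.2) (δ a.2) (t - a.1)) (𝓝 z) ∧
        ∀ᶠ t in 𝓝 z, t ≠ a.1 ∧ t ≠ a.1 + δ a.2 := by
  let f (a : ℝ × ℕ) (t : ℝ) := bumpProfile (cantorStair δ a.2) (δ a.2) (t - a.1)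
  let U (a : ℝ × ℕ) : Set ℝ := {t | EventuallyConst (f a) (𝓝 t)} ∩ {a.1, a.1 + δ a.2}ᶜ
  have hopen : ∀ a, IsOpen {t | EventuallyConst (f a) (𝓝 t)} := fun a ↦
    isOpen_setOf_eventuallyConst _
  have hcompl : ∀ a : ℝ × ℕ, IsOpen ({a.1, a.1 + δ a.2}ᶜ : Set ℝ) := fun a ↦
    (toFinite _).isClosed.isOpen_compl
  have hdense : ∀ a ∈ s, Dense (U a) := fun a _ ↦
    ((hδ.denselyConst_cantorStair a.2).bumpProfile _ |>.comp_sub_const a.1).inter_of_isOpen_left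
      ((toFinite _).countable.dense_compl ℝ) (hopen a)
  obtain ⟨z, hz, huz, hzv⟩ := (dense_biInter_of_isOpen (fun a _ ↦ (hopen a).inter (hcompl a))
    hs.countable hdense).exists_between huv
  refine ⟨z, ⟨huz, hzv⟩, fun a ha ↦ ?_⟩
  obtain ⟨hconst, havoid⟩ := mem_iInter₂.1 hz a ha
  refine ⟨hconst, ?_⟩
  filter_upwards [(hcompl a).mem_nhds havoid] with t ht
  simpa [not_or] using ht

theorem exists_bump_between (j : ℕ) (s : Set (ℝ × ℕ)) (hs : s.Finite) {u v : ℝ} (huv : u < v) :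
    ∃ b : ℝ × ℕ, (j ≤ b.2 ∧ u < b.1 ∧ b.1 + 4 * δ b.2 < v) ∧ ∀ a ∈ s,
      (∃ c, ∀ t ∈ Icc b.1 (b.1 + 4 * δ b.2),
        bumpProfile (cantorStair δ a.2) (δ a.2) (t - a.1) = c) ∧
      a.1 ∉ Icc b.1 (b.1 + 4 * δ b.2) ∧ a.1 + δ a.2 ∉ Icc b.1 (b.1 + 4 * δ b.2) := by
  obtain ⟨z, hz, hnear⟩ := hδ.exists_eventually_nhds s hs huv
  choose! c hc using fun a ha ↦ eventuallyConst_iff_exists_eventuallyEq.1 (hnear a ha).1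
  have hall : ∀ᶠ t in 𝓝 z, t < v ∧ ∀ a ∈ s,
      bumpProfile (cantorStair δ a.2) (δ a.2) (t - a.1) = c a ∧ t ≠ a.1 ∧ t ≠ a.1 + δ a.2 :=
    (eventually_lt_nhds hz.2).and <| (eventually_all_finite hs).2 fun a ha ↦
      (hc a ha).and (hnear a ha).2
  obtain ⟨ε, hε, hball⟩ := Metric.eventually_nhds_iff.1 hall
  obtain ⟨k, hk⟩ := hδ.exists_add_lt j (show 0 < ε / 4 by positivity)
  have hsupp : ∀ t ∈ Icc z (z + 4 * δ (j + k)), t < v ∧ ∀ a ∈ s,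
      bumpProfile (cantorStair δ a.2) (δ a.2) (t - a.1) = c a ∧ t ≠ a.1 ∧ t ≠ a.1 + δ a.2 :=
    fun t ht ↦ hball <| by
      rw [Real.dist_eq, abs_lt]
      constructor <;> linarith [ht.1, ht.2]
  have hend : z + 4 * δ (j + k) ∈ Icc z (z + 4 * δ (j + k)) :=
    right_mem_Icc.2 (by linarith [hδ.pos (j + k)])
  exact ⟨(z, j + k), ⟨j.le_add_right k, hz.1, (hsupp _ hend).1⟩, fun a ha ↦
    ⟨⟨c a, fun t ht ↦ ((hsupp t ht).2 a ha).1⟩, fun hmem ↦ ((hsupp _ hmem).2 a ha).2.1 rfl,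
      fun hmem ↦ ((hsupp _ hmem).2 a ha).2.2 rfl⟩⟩

theorem exists_isBumpPlacement : ∃ x q, IsBumpPlacement δ x q := by
  let S := {r : ℚ × ℚ // 0 < (r.1 : ℝ) ∧ (r.1 : ℝ) < r.2 ∧ (r.2 : ℝ) < 2 * π}
  have : Nonempty S := ⟨⟨(1, 2), by norm_num, by norm_num, by norm_num; linarith [pi_gt_three]⟩⟩
  obtain ⟨e, he⟩ := exists_surjective_nat S
  obtain ⟨f, hf, hrel⟩ := exists_seq_of_forall_finite_exists _ _ fun n s hs ↦
    hδ.exists_bump_between n s hs (e n).2.2.1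
  refine ⟨fun j ↦ (f j).1, fun j ↦ (f j).2, fun j ↦ (hf j).1, fun j ↦ (e j).2.1.trans (hf j).2.1,
    fun j ↦ (hf j).2.2.trans (e j).2.2.2, fun a b ha hab hb ↦ ?_, fun i j hij ↦ (hrel i j hij).1,
    fun i j hij ↦ (hrel i j hij).2.1, fun i j hij ↦ (hrel i j hij).2.2⟩
  obtain ⟨r, har, hrb⟩ := exists_rat_btwn hab
  obtain ⟨r', hrr', hr'b⟩ := exists_rat_btwn hrb
  obtain ⟨n, hn⟩ := he ⟨(r, r'), ha.trans_lt har, hrr', hr'b.trans_le hb⟩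
  obtain ⟨-, hx, hx'⟩ := hf n
  rw [hn] at hx hx'
  exact ⟨n, har.trans hx, hx'.trans hr'b⟩

end IsHalvingScale

end Placement

section CircleMap

theorem IsModulus.continuous_of_abs_sub_le {ω f : ℝ → ℝ} (h : IsModulus ω) {C : ℝ}
    (hf : ∀ s t, |f s - f t| ≤ C * ω |s - t|) : Continuous f := by
  have hωabs : Continuous fun x : ℝ ↦ ω |x| :=
    h.continuousOn.comp_continuous continuous_abs fun x ↦ abs_nonneg x
  refine continuous_iff_continuousAt.2 fun t ↦ tendsto_iff_dist_tendsto_zero.2 ?_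
  refine squeeze_zero (fun _ ↦ dist_nonneg) (fun s ↦ hf s t) ?_
  have hbound : Continuous fun s ↦ C * ω |s - t| :=
    continuous_const.mul (hωabs.comp (continuous_sub_right t))
  simpa [h.map_zero] using hbound.tendsto t

theorem abs_comp_toIcoMod_sub_le {T : ℝ} (hT : 0 < T) {ω β : ℝ → ℝ} (h : IsModulus ω) {C : ℝ}
    (hC : 0 ≤ C) (hβ : ∀ s t, |β s - β t| ≤ C * ω |s - t|) (hends : β 0 = β T) (s t : ℝ) :
    |β (toIcoMod hT 0 s) - β (toIcoMod hT 0 t)| ≤ 2 * C * ω |s - t| := by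
  wlog hst : s ≤ t generalizing s t with H
  · simpa only [abs_sub_comm] using H t s (le_of_not_ge hst)
  obtain ⟨-, hsT⟩ := toIcoMod_mem_Ico' hT s
  obtain ⟨ht₀, -⟩ := toIcoMod_mem_Ico' hT t
  have hs := toIcoMod_add_toIcoDiv_zsmul hT 0 s
  have ht := toIcoMod_add_toIcoDiv_zsmul hT 0 t
  rw [zsmul_eq_mul] at hs ht
  have hstep : ∀ x y, |x - y| ≤ |s - t| → |β x - β y| ≤ C * ω |s - t| := fun x y hxy ↦
    (hβ x y).trans <| by
      gcongr
      exact h.monotoneOn (mem_Ici.2 (abs_nonneg _)) (mem_Ici.2 (abs_nonneg _)) hxy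
  have hdiv : toIcoDiv hT 0 s ≤ toIcoDiv hT 0 t := by
    simp only [toIcoDiv_eq_floor]
    gcongr
  rcases hdiv.eq_or_lt with heq | hlt
  · rw [← heq] at ht
    have := hstep (toIcoMod hT 0 s) (toIcoMod hT 0 t) (le_of_eq (congrArg _ (by linarith)))
    linarith [abs_nonneg (β (toIcoMod hT 0 s) - β (toIcoMod hT 0 t))]
  · have hturn : (toIcoDiv hT 0 s + 1 : ℝ) * T ≤ toIcoDiv hT 0 t * T := by
      gcongr
      exact_mod_cast hlt
    have hleft := hstep (toIcoMod hT 0 s) T <| by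
      rw [abs_of_neg (by linarith), abs_of_nonpos (by linarith)]
      linarith
    have hright := hstep 0 (toIcoMod hT 0 t) <| by
      rw [abs_of_nonpos (by linarith), abs_of_nonpos (by linarith)]
      linarith
    rw [hends] at hright
    linarith [abs_sub_le (β (toIcoMod hT 0 s)) (β T) (β (toIcoMod hT 0 t))]

/-- The lift of a circle map whose derivative is the `2π`-periodic extension of `1 + β` from
`[0, 2π)`. -/
noncomputable def circleLift (β : ℝ → ℝ) (t : ℝ) : ℝ :=
  ∫ s in (0 : ℝ)..t, (1 + β (toIcoMod two_pi_pos 0 s))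

/-- A perturbation `β` of the constant `1` for which `circleLift β` is a `C^{1,ω}` diffeomorphism of
the circle. -/
structure IsAdmissible (ω : ℝ → ℝ) (C : ℝ) (β : ℝ → ℝ) : Prop where
  const_nonneg : 0 ≤ C
  abs_sub_le : ∀ s t, |β s - β t| ≤ C * ω |s - t|
  map_zero : β 0 = 0
  map_two_pi : β (2 * π) = 0
  neg_one_lt : ∀ t, -1 < β t
  integral_eq_zero : ∫ t in (0 : ℝ)..2 * π, β t = 0

namespace IsAdmissible

variable {ω β : ℝ → ℝ} {C : ℝ} (hβ : IsAdmissible ω C β)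
include hβ

theorem comp_toIcoMod {t : ℝ} (ht : t ∈ Icc 0 (2 * π)) : β (toIcoMod two_pi_pos 0 t) = β t := by
  rcases ht.2.eq_or_lt with rfl | hlt
  · have hzero : toIcoMod two_pi_pos 0 (2 * π) = 0 := by
      simpa using toIcoMod_add_right two_pi_pos 0 0
    rw [hzero, hβ.map_zero, hβ.map_two_pi]
  · rw [(toIcoMod_eq_self two_pi_pos).2 ⟨ht.1, by simpa using hlt⟩]

theorem circleLift_eq_add_integral (hcont : Continuous β) {t : ℝ} (ht : t ∈ Icc 0 (2 * π)) :
    circleLift β t = t + ∫ s in (0 : ℝ)..t, β s := by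
  have hcongr : circleLift β t = ∫ s in (0 : ℝ)..t, (1 + β s) :=
    intervalIntegral.integral_congr fun s hs ↦ by
      rw [uIcc_of_le ht.1] at hs
      simp only [hβ.comp_toIcoMod ⟨hs.1, hs.2.trans ht.2⟩]
  rw [hcongr, intervalIntegral.integral_add (by simp) (hcont.intervalIntegrable _ _),
    integral_one, sub_zero]

variable (h : IsModulus ω)
include h

theorem continuous : Continuous β :=
  h.continuous_of_abs_sub_le hβ.abs_sub_le

theorem abs_comp_toIcoMod_sub_le (s t : ℝ) :
    |β (toIcoMod two_pi_pos 0 s) - β (toIcoMod two_pi_pos 0 t)| ≤ 2 * C * ω |s - t| :=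
  _root_.abs_comp_toIcoMod_sub_le two_pi_pos h hβ.const_nonneg hβ.abs_sub_le
    (hβ.map_zero.trans hβ.map_two_pi.symm) s t

theorem continuous_deriv_circleLift : Continuous fun t ↦ 1 + β (toIcoMod two_pi_pos 0 t) :=
  continuous_const.add (h.continuous_of_abs_sub_le (hβ.abs_comp_toIcoMod_sub_le h))

theorem hasDerivAt_circleLift (t : ℝ) :
    HasDerivAt (circleLift β) (1 + β (toIcoMod two_pi_pos 0 t)) t :=
  (hβ.continuous_deriv_circleLift h).integral_hasStrictDerivAt 0 t |>.hasDerivAt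

theorem deriv_circleLift (t : ℝ) :
    deriv (circleLift β) t = 1 + β (toIcoMod two_pi_pos 0 t) :=
  (hβ.hasDerivAt_circleLift h t).deriv

theorem contDiff_circleLift : ContDiff ℝ 1 (circleLift β) := by
  refine contDiff_one_iff_deriv.2 ⟨fun t ↦ (hβ.hasDerivAt_circleLift h t).differentiableAt, ?_⟩
  rw [funext (hβ.deriv_circleLift h)]
  exact hβ.continuous_deriv_circleLift h

theorem deriv_circleLift_pos (t : ℝ) : 0 < deriv (circleLift β) t := by
  rw [hβ.deriv_circleLift h]
  linarith [hβ.neg_one_lt (toIcoMod two_pi_pos 0 t)]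

theorem abs_deriv_circleLift_sub_le (s t : ℝ) :
    |deriv (circleLift β) s - deriv (circleLift β) t| ≤ 2 * C * ω |s - t| := by
  simpa only [hβ.deriv_circleLift h, add_sub_add_left_eq_sub] using
    hβ.abs_comp_toIcoMod_sub_le h s t

theorem circleLift_add_two_pi (t : ℝ) : circleLift β (t + 2 * π) = circleLift β t + 2 * π := by
  have hcont := hβ.continuous_deriv_circleLift h
  have hper : Function.Periodic (fun s ↦ 1 + β (toIcoMod two_pi_pos 0 s)) (2 * π) := fun s ↦ by
    simp only [toIcoMod_add_right]
  have hturn : circleLift β (2 * π) = 2 * π := by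
    rw [hβ.circleLift_eq_add_integral (hβ.continuous h) ⟨two_pi_pos.le, le_rfl⟩,
      hβ.integral_eq_zero, add_zero]
  calc circleLift β (t + 2 * π)
      = circleLift β t + ∫ s in t..t + 2 * π, (1 + β (toIcoMod two_pi_pos 0 s)) :=
        (intervalIntegral.integral_add_adjacent_intervals (hcont.intervalIntegrable _ _)
          (hcont.intervalIntegrable _ _)).symm
    _ = circleLift β t + circleLift β (2 * π) := by
        rw [hper.intervalIntegral_add_eq t 0, zero_add, circleLift, circleLift]
    _ = circleLift β t + 2 * π := by rw [hturn]

end IsAdmissible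

end CircleMap

section BumpSeries

theorem bumpAmp_mul_two_pow_le {j q : ℕ} (hjq : j ≤ q) : bumpAmp q * 2 ^ q ≤ (1 / 2) ^ j := by
  have hcancel : bumpAmp q * 2 ^ q = (1 / 2) ^ (2 ^ q + 1) := by
    have hone : (1 / 2 : ℝ) ^ q * 2 ^ q = 1 := by rw [← mul_pow]; norm_num
    linear_combination (1 / 2 : ℝ) ^ (2 ^ q + 1) * hone +
      (congrArg (· * (2 : ℝ) ^ q) (show bumpAmp q = (1 / 2) ^ (2 ^ q + 1) * (1 / 2) ^ q by
        rw [bumpAmp]; ring))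
  rw [hcancel]
  exact pow_le_pow_of_le_one (by norm_num) (by norm_num) (by have := q.lt_two_pow_self; lia)

theorem bumpAmp_le_quarter_mul {j q : ℕ} (hjq : j ≤ q) : bumpAmp q ≤ 1 / 4 * (1 / 2) ^ j := by
  have hquarter : (1 / 4 : ℝ) * (1 / 2) ^ j = (1 / 2) ^ (j + 2) := by ring
  rw [hquarter, bumpAmp]
  exact pow_le_pow_of_le_one (by norm_num) (by norm_num)
    (by have := Nat.one_le_two_pow (n := q); lia)

/-- The bump of scale `q` moved to the position `a` and given its amplitude. -/
noncomputable def placedBump (δ : ℕ → ℝ) (q : ℕ) (a t : ℝ) : ℝ :=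
  bumpAmp q * bump (cantorStair δ q) (δ q) (t - a)

/-- The derivative of `placedBump`. -/
noncomputable def placedProfile (δ : ℕ → ℝ) (q : ℕ) (a t : ℝ) : ℝ :=
  bumpAmp q * bumpProfile (cantorStair δ q) (δ q) (t - a)

namespace IsDyadicScale

variable {ω : ℝ → ℝ} {A : ℝ} {δ : ℕ → ℝ} (hδ : IsDyadicScale ω A δ) (h : IsModulus ω)
include hδ h

theorem abs_cantorStair_sub_le (q : ℕ) (s t : ℝ) :
    |cantorStair δ q s - cantorStair δ q t| ≤ 4 / A * 2 ^ q * ω |s - t| := by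
  wlog hst : s ≤ t generalizing s t with H
  · simpa only [abs_sub_comm] using H t s (le_of_not_ge hst)
  rcases hst.eq_or_lt with rfl | hst
  · simp [h.map_zero]
  have hA := hδ.const_pos
  have hr : 0 < t - s := sub_pos.2 hst
  have hone : (2 : ℝ) ^ q * (1 / 2) ^ q = 1 := by rw [← mul_pow]; norm_num
  rw [abs_sub_comm, abs_of_nonneg (sub_nonneg.2 (hδ.cantorStair_mono q hst.le)), abs_sub_comm,
    abs_of_pos hr]
  rcases lt_or_ge (δ q) (t - s) with hlarge | hsmall
  · have hω := h.monotoneOn (hδ.pos q).le hr.le hlarge.le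
    rw [hδ.modulus_eq] at hω
    calc cantorStair δ q t - cantorStair δ q s ≤ 4 * (2 ^ q * (1 / 2) ^ q) := by
          rw [hone]
          linarith [hδ.cantorStair_nonneg q s, hδ.cantorStair_le_one q t]
      _ = 4 / A * 2 ^ q * (A * (1 / 2) ^ q) := by field
      _ ≤ 4 / A * 2 ^ q * ω (t - s) := by gcongr
  · obtain ⟨k, hk, hk'⟩ := hδ.exists_level q hr hsmall
    have hω := h.monotoneOn (hδ.pos _).le hr.le hk.le
    rw [hδ.modulus_eq] at hω
    calc cantorStair δ q t - cantorStair δ q s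
        ≤ 2 * (1 / 2) ^ k * (2 ^ q * (1 / 2) ^ q) := by
          rw [hone, mul_one]
          exact hδ.cantorStair_sub_le q k hst.le hk'
      _ = 4 / A * 2 ^ q * (A * (1 / 2) ^ (q + k + 1)) := by rw [pow_succ, pow_add]; field
      _ ≤ 4 / A * 2 ^ q * ω (t - s) := by gcongr

theorem abs_bumpProfile_sub_le (q : ℕ) (s t : ℝ) :
    |bumpProfile (cantorStair δ q) (δ q) s - bumpProfile (cantorStair δ q) (δ q) t| ≤
      16 / A * 2 ^ q * ω |s - t| := by
  have hshift : ∀ c, |cantorStair δ q (s - c) - cantorStair δ q (t - c)| ≤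
      4 / A * 2 ^ q * ω |s - t| := fun c ↦ by
    simpa only [sub_sub_sub_cancel_right] using hδ.abs_cantorStair_sub_le h q (s - c) (t - c)
  have h₀ := abs_le.1 (hδ.abs_cantorStair_sub_le h q s t)
  have h₁ := abs_le.1 (hshift (δ q))
  have h₂ := abs_le.1 (hshift (2 * δ q))
  have h₃ := abs_le.1 (hshift (3 * δ q))
  have hfour : 16 / A * 2 ^ q * ω |s - t| = 4 * (4 / A * 2 ^ q * ω |s - t|) := by ring
  rw [hfour, bumpProfile, bumpProfile, abs_le]
  constructor <;> linarith

end IsDyadicScale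

namespace IsHalvingScale

variable {δ : ℕ → ℝ} (hδ : IsHalvingScale δ) (q : ℕ) {a t : ℝ}
include hδ

theorem hasDerivAt_placedBump (a t : ℝ) :
    HasDerivAt (placedBump δ q a) (placedProfile δ q a t) t :=
  (((hδ.isRamp q).hasDerivAt_bump (t - a)).comp_sub_const t a).const_mul _

theorem continuous_placedBump (a : ℝ) : Continuous (placedBump δ q a) :=
  continuous_iff_continuousAt.2 fun t ↦ (hδ.hasDerivAt_placedBump q a t).continuousAt

theorem placedBump_of_le (ht : t ≤ a) : placedBump δ q a t = 0 := by
  rw [placedBump, (hδ.isRamp q).bump_of_nonpos (by linarith), mul_zero]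

theorem placedBump_of_ge (ht : a + 4 * δ q ≤ t) : placedBump δ q a t = 0 := by
  rw [placedBump, (hδ.isRamp q).bump_of_le (by linarith), mul_zero]

theorem placedProfile_of_le (ht : t ≤ a) : placedProfile δ q a t = 0 := by
  rw [placedProfile, (hδ.isRamp q).bumpProfile_of_nonpos (by linarith), mul_zero]

theorem placedProfile_of_ge (ht : a + 4 * δ q ≤ t) : placedProfile δ q a t = 0 := by
  rw [placedProfile, (hδ.isRamp q).bumpProfile_of_le (by linarith), mul_zero]

theorem placedProfile_of_notMem (ht : t ∉ Icc a (a + 4 * δ q)) : placedProfile δ q a t = 0 := by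
  rcases le_total t a with hta | hat
  · exact hδ.placedProfile_of_le q hta
  · exact hδ.placedProfile_of_ge q (le_of_not_ge fun hle ↦ ht ⟨hat, hle⟩)

end IsHalvingScale

/-- The sum of the bumps of a placement. -/
noncomputable def bumpSeries (δ x : ℕ → ℝ) (q : ℕ → ℕ) (t : ℝ) : ℝ :=
  ∑' j, placedBump δ (q j) (x j) t

/-- The derivative of `bumpSeries`. -/
noncomputable def profileSeries (δ x : ℕ → ℝ) (q : ℕ → ℕ) (t : ℝ) : ℝ :=
  ∑' j, placedProfile δ (q j) (x j) t

namespace IsBumpPlacement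

variable {ω : ℝ → ℝ} {A : ℝ} {δ x : ℕ → ℝ} {q : ℕ → ℕ} (hp : IsBumpPlacement δ x q)
include hp

section HalvingScale

variable (hδ : IsHalvingScale δ)
include hδ

theorem norm_placedProfile_le (j : ℕ) (t : ℝ) :
    ‖placedProfile δ (q j) (x j) t‖ ≤ 1 / 4 * (1 / 2) ^ j := by
  rw [placedProfile, Real.norm_eq_abs, abs_mul, abs_of_pos (bumpAmp_pos _)]
  exact (mul_le_of_le_one_right (bumpAmp_pos _).le ((hδ.isRamp _).abs_bumpProfile_le_one _)).trans
    (bumpAmp_le_quarter_mul (hp.le_scale j))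

theorem summable_placedProfile (t : ℝ) : Summable fun j ↦ placedProfile δ (q j) (x j) t :=
  .of_norm_bounded (summable_geometric_two.mul_left _) fun j ↦ hp.norm_placedProfile_le hδ j t

theorem summable_placedBump (t : ℝ) : Summable fun j ↦ placedBump δ (q j) (x j) t :=
  summable_of_summable_hasDerivAt (summable_geometric_two.mul_left (1 / 4))
    (fun _ _ ↦ hδ.hasDerivAt_placedBump _ _ _) (fun j t ↦ hp.norm_placedProfile_le hδ j t)
    (y₀ := 0) (summable_zero.congr fun j ↦ (hδ.placedBump_of_le _ (hp.pos j).le).symm) t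

theorem hasDerivAt_bumpSeries (t : ℝ) :
    HasDerivAt (bumpSeries δ x q) (profileSeries δ x q t) t :=
  hasDerivAt_tsum (summable_geometric_two.mul_left (1 / 4))
    (fun _ _ ↦ hδ.hasDerivAt_placedBump _ _ _) (fun j t ↦ hp.norm_placedProfile_le hδ j t)
    (hp.summable_placedBump hδ 0) t

theorem abs_profileSeries_le (t : ℝ) : |profileSeries δ x q t| ≤ 1 / 2 := by
  have hbound := tsum_of_norm_bounded (summable_geometric_two.mul_left (1 / 4 : ℝ)).hasSum
    fun j ↦ hp.norm_placedProfile_le hδ j t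
  rw [tsum_mul_left, tsum_geometric_two] at hbound
  exact hbound.trans_eq (by norm_num)

theorem bumpSeries_zero : bumpSeries δ x q 0 = 0 :=
  (tsum_congr fun j ↦ hδ.placedBump_of_le _ (hp.pos j).le).trans tsum_zero

theorem bumpSeries_two_pi : bumpSeries δ x q (2 * π) = 0 :=
  (tsum_congr fun j ↦ hδ.placedBump_of_ge _ (hp.end_lt j).le).trans tsum_zero

theorem profileSeries_zero : profileSeries δ x q 0 = 0 :=
  (tsum_congr fun j ↦ hδ.placedProfile_of_le _ (hp.pos j).le).trans tsum_zero

theorem profileSeries_two_pi : profileSeries δ x q (2 * π) = 0 :=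
  (tsum_congr fun j ↦ hδ.placedProfile_of_ge _ (hp.end_lt j).le).trans tsum_zero

theorem profileSeries_top_ne (n : ℕ) :
    profileSeries δ x q (x n + δ (q n)) ≠ profileSeries δ x q (x n) := by
  have hsum := hp.summable_placedProfile hδ
  have hδpos := hδ.pos (q n)
  rw [← sub_ne_zero, profileSeries, profileSeries, ← (hsum _).tsum_sub (hsum _),
    tsum_eq_single n fun i hi ↦ ?_]
  · simpa [placedProfile, (hδ.isRamp _).bumpProfile_length,
      (hδ.isRamp _).bumpProfile_of_nonpos le_rfl] using (bumpAmp_pos (q n)).ne'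
  · rcases lt_or_gt_of_ne hi with hlt | hgt
    · obtain ⟨c, hc⟩ := hp.exists_const i n hlt
      rw [placedProfile, placedProfile, hc _ ⟨by linarith, by linarith⟩,
        hc _ ⟨by linarith, by linarith⟩, sub_self]
    · rw [hδ.placedProfile_of_notMem _ (hp.top_notMem n i hgt),
        hδ.placedProfile_of_notMem _ (hp.start_notMem n i hgt), sub_self]

end HalvingScale

variable (hδ : IsDyadicScale ω A δ) (h : IsModulus ω)
include hδ h

theorem norm_placedProfile_sub_le (s t : ℝ) (j : ℕ) :
    ‖placedProfile δ (q j) (x j) s - placedProfile δ (q j) (x j) t‖ ≤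
      16 / A * ω |s - t| * (1 / 2) ^ j := by
  have hA := hδ.const_pos
  have hω : 0 ≤ ω |s - t| := h.map_zero ▸ h.monotoneOn self_mem_Ici
    (mem_Ici.2 (abs_nonneg _)) (abs_nonneg _)
  have hprofile := hδ.abs_bumpProfile_sub_le h (q j) (s - x j) (t - x j)
  rw [sub_sub_sub_cancel_right] at hprofile
  rw [placedProfile, placedProfile, ← mul_sub, Real.norm_eq_abs, abs_mul,
    abs_of_pos (bumpAmp_pos _)]
  calc _ ≤ bumpAmp (q j) * (16 / A * 2 ^ q j * ω |s - t|) :=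
        mul_le_mul_of_nonneg_left hprofile (bumpAmp_pos _).le
    _ = 16 / A * ω |s - t| * (bumpAmp (q j) * 2 ^ q j) := by ring
    _ ≤ 16 / A * ω |s - t| * (1 / 2) ^ j := by
        gcongr
        exact bumpAmp_mul_two_pow_le (hp.le_scale j)

theorem abs_profileSeries_sub_le (s t : ℝ) :
    |profileSeries δ x q s - profileSeries δ x q t| ≤ 32 / A * ω |s - t| := by
  have hsum := hp.summable_placedProfile hδ.toIsHalvingScale
  have hbound := tsum_of_norm_bounded
    (summable_geometric_two.mul_left (16 / A * ω |s - t|)).hasSum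
    (hp.norm_placedProfile_sub_le hδ h s t)
  rw [(hsum s).tsum_sub (hsum t), tsum_mul_left, tsum_geometric_two] at hbound
  exact hbound.trans_eq (by ring)

theorem integral_profileSeries (t : ℝ) :
    ∫ s in (0 : ℝ)..t, profileSeries δ x q s = bumpSeries δ x q t := by
  have hcont := h.continuous_of_abs_sub_le (hp.abs_profileSeries_sub_le hδ h)
  rw [intervalIntegral.integral_eq_sub_of_hasDerivAt
    (fun s _ ↦ hp.hasDerivAt_bumpSeries hδ.toIsHalvingScale s) (hcont.intervalIntegrable _ _),
    hp.bumpSeries_zero hδ.toIsHalvingScale, sub_zero]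

theorem isAdmissible : IsAdmissible ω (32 / A) (profileSeries δ x q) where
  const_nonneg := by have := hδ.const_pos; positivity
  abs_sub_le := hp.abs_profileSeries_sub_le hδ h
  map_zero := hp.profileSeries_zero hδ.toIsHalvingScale
  map_two_pi := hp.profileSeries_two_pi hδ.toIsHalvingScale
  neg_one_lt t := by linarith [neg_le_of_abs_le (hp.abs_profileSeries_le hδ.toIsHalvingScale t)]
  integral_eq_zero := by
    rw [hp.integral_profileSeries hδ h, hp.bumpSeries_two_pi hδ.toIsHalvingScale]

theorem circleLift_profileSeries {t : ℝ} (ht : t ∈ Icc 0 (2 * π)) :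
    circleLift (profileSeries δ x q) t = t + bumpSeries δ x q t := by
  have hβ := hp.isAdmissible hδ h
  rw [hβ.circleLift_eq_add_integral (hβ.continuous h) ht, hp.integral_profileSeries hδ h]

theorem not_affine_circleLift {u v : ℝ} (huv : u < v) :
    ¬ ∃ a b : ℝ, ∀ t ∈ Ioo u v, circleLift (profileSeries δ x q) t = a * t + b := by
  rintro ⟨a, b, hlin⟩
  have hβ := hp.isAdmissible hδ h
  set m := toIcoDiv two_pi_pos 0 u
  have hdecomp := toIcoMod_add_toIcoDiv_zsmul two_pi_pos 0 u
  obtain ⟨hmod₀, hmod⟩ := toIcoMod_mem_Ico' two_pi_pos u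
  obtain ⟨n, hn, hn'⟩ := hp.exists_between (toIcoMod two_pi_pos 0 u)
    (min (toIcoMod two_pi_pos 0 u + (v - u)) (2 * π)) hmod₀ (lt_min (by linarith) hmod)
    (min_le_right _ _)
  have hend := hn'.trans_le (min_le_left _ _)
  have hslope : ∀ t ∈ Icc (x n) (x n + 4 * δ (q n)), 1 + profileSeries δ x q t = a := by
    intro t ht
    have hmem : Ioo u v ∈ nhds (t + m • (2 * π)) :=
      Ioo_mem_nhds (by linarith [ht.1]) (by linarith [ht.2])
    have haffine : circleLift (profileSeries δ x q) =ᶠ[nhds (t + m • (2 * π))]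
        fun s ↦ a * s + b := Filter.mem_of_superset hmem hlin
    have hderiv := haffine.deriv_eq
    rwa [hβ.deriv_circleLift h, toIcoMod_add_zsmul, hβ.comp_toIcoMod
      ⟨by linarith [hp.pos n, ht.1], by linarith [hp.end_lt n, ht.2]⟩, deriv_add_const,
      deriv_const_mul_id] at hderiv
  have hδpos := hδ.pos (q n)
  refine hp.profileSeries_top_ne hδ.toIsHalvingScale n ?_
  linarith [hslope (x n) ⟨le_rfl, by linarith⟩, hslope (x n + δ (q n)) ⟨by linarith, by linarith⟩]

end IsBumpPlacement

end BumpSeries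

section FourierCoefficients

open Filter Topology

theorem apNorm_eq_eLpNorm {p : ℝ} (hp : 0 < p) (f : ℝ → ℂ) :
    ApNorm p f = eLpNorm (fourierCoef f) (ENNReal.ofReal p) Measure.count := by
  rw [eLpNorm_eq_lintegral_rpow_enorm_toReal (by simpa using hp) ENNReal.ofReal_ne_top,
    lintegral_count, ENNReal.toReal_ofReal hp.le]
  rfl

theorem eLpNorm_le_add_tsum_eLpNorm_sub {α E : Type*} [MeasurableSpace α] {μ : Measure α}
    [NormedAddCommGroup E] {p : ℝ≥0∞} (hp : 1 ≤ p) {f : ℕ → α → E} {g : α → E}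
    (hf : ∀ N, AEStronglyMeasurable (f N) μ)
    (hlim : ∀ᵐ x ∂μ, Tendsto (fun N ↦ f N x) atTop (𝓝 (g x))) :
    eLpNorm g p μ ≤ eLpNorm (f 0) p μ + ∑' N, eLpNorm (f (N + 1) - f N) p μ := by
  have hpartial : ∀ N, eLpNorm (f N) p μ ≤
      eLpNorm (f 0) p μ + ∑ i ∈ Finset.range N, eLpNorm (f (i + 1) - f i) p μ := fun N ↦ by
    induction N with
    | zero => simp
    | succ N ih =>
      calc eLpNorm (f (N + 1)) p μ = eLpNorm (f N + (f (N + 1) - f N)) p μ := by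
            rw [add_sub_cancel]
        _ ≤ eLpNorm (f N) p μ + eLpNorm (f (N + 1) - f N) p μ :=
            eLpNorm_add_le (hf N) ((hf _).sub (hf N)) hp
        _ ≤ _ := by
            rw [Finset.sum_range_succ, ← add_assoc]
            gcongr
  refine (Lp.eLpNorm_lim_le_liminf_eLpNorm hf g hlim).trans ?_
  refine liminf_le_of_frequently_le' (.of_forall fun N ↦ (hpartial N).trans ?_)
  gcongr
  exact ENNReal.sum_le_tsum _

theorem eLpNorm_count_le_of_sum_le {α E : Type*} [MeasurableSpace α] [MeasurableSingletonClass α]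
    [NormedAddCommGroup E] {p : ℝ} (hp : 0 < p) {c : α → E} {B : ℝ} (hB : 0 ≤ B)
    (h : ∀ F : Finset α, ∑ k ∈ F, ‖c k‖ ^ p ≤ B ^ p) :
    eLpNorm c (ENNReal.ofReal p) Measure.count ≤ ENNReal.ofReal B := by
  rw [eLpNorm_eq_lintegral_rpow_enorm_toReal (by simpa using hp) ENNReal.ofReal_ne_top,
    lintegral_count, ENNReal.toReal_ofReal hp.le, one_div, ENNReal.rpow_inv_le_iff hp,
    ENNReal.tsum_eq_iSup_sum, ENNReal.ofReal_rpow_of_nonneg hB hp.le]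
  refine iSup_le fun F ↦ ?_
  calc ∑ k ∈ F, ‖c k‖ₑ ^ p = ENNReal.ofReal (∑ k ∈ F, ‖c k‖ ^ p) := by
        rw [ENNReal.ofReal_sum_of_nonneg fun _ _ ↦ by positivity]
        refine Finset.sum_congr rfl fun k _ ↦ ?_
        rw [← ofReal_norm, ENNReal.ofReal_rpow_of_nonneg (norm_nonneg _) hp.le]
    _ ≤ ENNReal.ofReal (B ^ p) := ENNReal.ofReal_le_ofReal (h F)

/-- The unimodular function with phase `φ`. -/
noncomputable def phaseExp (φ : ℝ → ℝ) (t : ℝ) : ℂ := Complex.exp (Complex.I * ↑(φ t))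

theorem norm_phaseExp (φ : ℝ → ℝ) (t : ℝ) : ‖phaseExp φ t‖ = 1 := by
  rw [phaseExp, mul_comm, Complex.norm_exp_ofReal_mul_I]

theorem phaseExp_add (φ ψ : ℝ → ℝ) (t : ℝ) :
    phaseExp (fun t ↦ φ t + ψ t) t = phaseExp φ t * phaseExp ψ t := by
  rw [phaseExp, phaseExp, phaseExp, ← Complex.exp_add]
  push_cast
  ring_nf

theorem continuous_phaseExp {φ : ℝ → ℝ} (hφ : Continuous φ) : Continuous (phaseExp φ) := by
  unfold phaseExp
  fun_prop

theorem fourierCoef_phaseExp (φ : ℝ → ℝ) (k : ℤ) : fourierCoef (phaseExp φ) k =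
    1 / (2 * π) * ∫ t in (0 : ℝ)..(2 * π), phaseExp (fun t ↦ φ t + -k * t) t := by
  rw [fourierCoef]
  congr 2 with t
  rw [phaseExp_add, phaseExp, phaseExp]
  push_cast
  ring_nf

theorem fourierCoef_phaseExp_intCast_mul (n k : ℤ) :
    fourierCoef (phaseExp fun t ↦ n * t) k = if k = n then 1 else 0 := by
  have hphase (t : ℝ) : phaseExp (fun t ↦ n * t + -k * t) t =
      Complex.exp (Complex.I * ↑(n - k) * t) := by
    rw [phaseExp]
    push_cast
    ring_nf
  simp only [fourierCoef_phaseExp, hphase]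
  split_ifs with hk
  · have hπ : (π : ℂ) ≠ 0 := Complex.ofReal_ne_zero.2 pi_ne_zero
    simp only [hk, sub_self, Int.cast_zero, mul_zero, zero_mul, Complex.exp_zero,
      intervalIntegral.integral_const, sub_zero, Complex.real_smul]
    push_cast
    field
  · have hne : Complex.I * ↑(n - k) ≠ 0 :=
      mul_ne_zero Complex.I_ne_zero (Int.cast_ne_zero.2 (sub_ne_zero.2 (Ne.symm hk)))
    have hperiod : Complex.exp (Complex.I * ↑(n - k) * ↑(2 * π)) = 1 :=
      Complex.exp_eq_one_iff.2 ⟨n - k, by push_cast; ring⟩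
    rw [integral_exp_mul_complex hne, hperiod]
    simp

theorem apNorm_phaseExp_intCast_mul {p : ℝ} (hp : 0 < p) (n : ℤ) :
    ApNorm p (phaseExp fun t ↦ n * t) = 1 := by
  rw [ApNorm, tsum_eq_single n fun k hk ↦ by simp [fourierCoef_phaseExp_intCast_mul, hk, hp]]
  simp [fourierCoef_phaseExp_intCast_mul]

theorem tendsto_fourierCoef_phaseExp {φ : ℕ → ℝ → ℝ} {ψ : ℝ → ℝ} (hφ : ∀ N, Continuous (φ N))
    (hlim : ∀ t ∈ Icc 0 (2 * π), Tendsto (fun N ↦ φ N t) atTop (𝓝 (ψ t))) (k : ℤ) :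
    Tendsto (fun N ↦ fourierCoef (phaseExp (φ N)) k) atTop (𝓝 (fourierCoef (phaseExp ψ) k)) := by
  simp only [fourierCoef_phaseExp]
  refine Tendsto.const_mul _ <| intervalIntegral.tendsto_integral_filter_of_dominated_convergence
    (fun _ ↦ 1) (.of_forall fun N ↦ ?_) (.of_forall fun N ↦ .of_forall fun t _ ↦ ?_)
    intervalIntegrable_const (.of_forall fun t ht ↦ ?_)
  · exact (continuous_phaseExp ((hφ N).add (continuous_const_mul _))).aestronglyMeasurable
  · exact (norm_phaseExp _ t).le
  · rw [uIoc_of_le two_pi_pos.le] at ht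
    have hcont : Continuous fun y : ℝ ↦ Complex.exp (Complex.I * ↑(y + -k * t)) := by fun_prop
    exact (hcont.tendsto _).comp (hlim t (Ioc_subset_Icc_self ht))

theorem intervalIntegral_eq_of_eq_zero {g : ℝ → ℂ} (hg : Continuous g) {a b c d : ℝ}
    (hca : c ≤ a) (hbd : b ≤ d) (hleft : ∀ t ≤ a, g t = 0) (hright : ∀ t, b ≤ t → g t = 0) :
    ∫ t in c..d, g t = ∫ t in a..b, g t := by
  have hint (u v : ℝ) : IntervalIntegrable g volume u v := hg.intervalIntegrable u v
  rw [← intervalIntegral.integral_add_adjacent_intervals (hint c a) (hint a d),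
    ← intervalIntegral.integral_add_adjacent_intervals (hint a b) (hint b d),
    intervalIntegral.integral_zero_ae (.of_forall fun t ht ↦ hleft t (uIoc_of_le hca ▸ ht).2),
    intervalIntegral.integral_zero_ae (a := b) (.of_forall fun t ht ↦
      hright t (uIoc_of_le hbd ▸ ht).1.le), zero_add, add_zero]

namespace IsRamp

variable {G : ℝ → ℝ} {ℓ : ℝ} (h : IsRamp G ℓ)
include h

theorem integral_phaseExp_sub {φ : ℝ → ℝ} (hφ : Continuous φ) (κ : ℝ) {a c d : ℝ} (hca : c ≤ a)
    (had : a + 4 * ℓ ≤ d) :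
    (∫ t in c..d, phaseExp (fun t ↦ φ t + κ * bump G ℓ (t - a)) t) - ∫ t in c..d, phaseExp φ t =
      ∫ t in (0 : ℝ)..(4 * ℓ), phaseExp φ (t + a) * (phaseExp (fun t ↦ κ * bump G ℓ t) t - 1) := by
  have hbump := h.continuous_bump
  have hφexp := continuous_phaseExp hφ
  have hκexp : Continuous (phaseExp fun t ↦ κ * bump G ℓ t) :=
    continuous_phaseExp (hbump.const_mul κ)
  have hg : Continuous fun t ↦ phaseExp φ t * (phaseExp (fun t ↦ κ * bump G ℓ t) (t - a) - 1) := by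
    fun_prop
  rw [← intervalIntegral.integral_sub
    (continuous_phaseExp (by fun_prop) |>.intervalIntegrable _ _) (hφexp.intervalIntegrable _ _)]
  calc _ = ∫ t in c..d, phaseExp φ t * (phaseExp (fun t ↦ κ * bump G ℓ t) (t - a) - 1) := by
        congr 1 with t
        rw [phaseExp_add, mul_sub_one]
        rfl
    _ = ∫ t in a..(a + 4 * ℓ), phaseExp φ t * (phaseExp (fun t ↦ κ * bump G ℓ t) (t - a) - 1) := by
        refine intervalIntegral_eq_of_eq_zero hg hca had (fun t ht ↦ ?_) fun t ht ↦ ?_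
        · simp [phaseExp, h.bump_of_nonpos (sub_nonpos.2 ht)]
        · simp [phaseExp, h.bump_of_le (le_sub_iff_add_le'.2 ht)]
    _ = _ := by
        simpa [add_comm (4 * ℓ)] using (intervalIntegral.integral_comp_add_right (fun t ↦
          phaseExp φ t * (phaseExp (fun t ↦ κ * bump G ℓ t) (t - a) - 1)) a (a := 0)
          (b := 4 * ℓ)).symm

theorem integral_phaseExp_mul_eq_bumpFourier {φ : ℝ → ℝ} {a γ μ : ℝ}
    (haffine : ∀ t ∈ Icc a (a + 4 * ℓ), φ t = γ + μ * (t - a)) (κ : ℝ) :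
    ∫ t in (0 : ℝ)..(4 * ℓ), phaseExp φ (t + a) * (phaseExp (fun t ↦ κ * bump G ℓ t) t - 1) =
      Complex.exp (Complex.I * γ) * bumpFourier G ℓ κ μ := by
  rw [bumpFourier, ← intervalIntegral.integral_const_mul]
  refine intervalIntegral.integral_congr fun t ht ↦ ?_
  rw [uIcc_of_le (by linarith [h.length_pos])] at ht
  have hsplit : phaseExp φ (t + a) =
      Complex.exp (Complex.I * γ) * Complex.exp (Complex.I * ↑(μ * t)) := by
    rw [phaseExp, haffine (t + a) ⟨by linarith [ht.1], by linarith [ht.2]⟩, ← Complex.exp_add]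
    push_cast
    ring_nf
  rw [hsplit, phaseExp]
  ring

theorem norm_fourierCoef_phaseExp_sub_le {φ : ℝ → ℝ} (hφ : Continuous φ) {a γ α : ℝ} (ha : 0 ≤ a)
    (hend : a + 4 * ℓ ≤ 2 * π) (haffine : ∀ t ∈ Icc a (a + 4 * ℓ), φ t = γ + α * (t - a))
    (κ : ℝ) (k : ℤ) :
    ‖fourierCoef (phaseExp fun t ↦ φ t + κ * bump G ℓ (t - a)) k - fourierCoef (phaseExp φ) k‖ ≤
      ‖bumpFourier G ℓ κ (α - k)‖ := by
  have hphase : Continuous fun t ↦ φ t + -k * t := by fun_prop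
  have hdiff := h.integral_phaseExp_sub hphase κ ha hend
  have haffine' : ∀ t ∈ Icc a (a + 4 * ℓ), φ t + -k * t = (γ - k * a) + (α - k) * (t - a) :=
    fun t ht ↦ by rw [haffine t ht]; ring
  rw [h.integral_phaseExp_mul_eq_bumpFourier haffine'] at hdiff
  have hcoef : ‖(1 / (2 * π) : ℂ)‖ ≤ 1 := by
    rw [norm_div, norm_mul, norm_one, Complex.norm_real, Complex.norm_ofNat, Real.norm_eq_abs,
      abs_of_pos pi_pos, div_le_one two_pi_pos]
    linarith [pi_gt_three]
  have hcomm : (fun t ↦ φ t + κ * bump G ℓ (t - a) + -k * t) =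
      fun t ↦ φ t + -k * t + κ * bump G ℓ (t - a) := by funext t; ring
  rw [fourierCoef_phaseExp, fourierCoef_phaseExp, ← mul_sub, hcomm, hdiff, norm_mul, norm_mul,
    mul_comm Complex.I, Complex.norm_exp_ofReal_mul_I, one_mul]
  exact mul_le_of_le_one_left (norm_nonneg _) hcoef

end IsRamp

end FourierCoefficients

section NormEstimates

open Filter Topology

theorem eLpNorm_count_le_mul_rpow {α E : Type*} [MeasurableSpace α] [MeasurableSingletonClass α]
    [NormedAddCommGroup E] {p : ℝ} (hp : 0 < p) {c : α → E} {B S : ℝ} (hB : 0 ≤ B) (hS : 0 ≤ S)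
    (h : ∀ F : Finset α, ∑ k ∈ F, ‖c k‖ ^ p ≤ B ^ p * S) :
    eLpNorm c (ENNReal.ofReal p) Measure.count ≤ ENNReal.ofReal (B * S ^ (1 / p)) := by
  have hrpow : (B * S ^ (1 / p)) ^ p = B ^ p * S := by
    rw [mul_rpow hB (by positivity), ← rpow_mul hS, one_div_mul_cancel hp.ne', rpow_one]
  exact eLpNorm_count_le_of_sum_le hp (by positivity) fun F ↦ (h F).trans_eq hrpow.symm

/-- The identity plus the first `N` bumps of a placement. -/
noncomputable def partialLift (δ x : ℕ → ℝ) (q : ℕ → ℕ) (N : ℕ) (t : ℝ) : ℝ :=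
  t + ∑ j ∈ Finset.range N, placedBump δ (q j) (x j) t

theorem partialLift_succ (δ x : ℕ → ℝ) (q : ℕ → ℕ) (N : ℕ) (t : ℝ) :
    partialLift δ x q (N + 1) t = partialLift δ x q N t +
      bumpAmp (q N) * bump (cantorStair δ (q N)) (δ (q N)) (t - x N) := by
  rw [partialLift, partialLift, Finset.sum_range_succ, placedBump, add_assoc]

theorem IsHalvingScale.continuous_partialLift {δ : ℕ → ℝ} (hδ : IsHalvingScale δ) (x : ℕ → ℝ)
    (q : ℕ → ℕ) (N : ℕ) : Continuous (partialLift δ x q N) :=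
  continuous_id.add <| continuous_finsetSum _ fun _ _ ↦ hδ.continuous_placedBump _ _

namespace IsBumpPlacement

variable {δ x : ℕ → ℝ} {q : ℕ → ℕ} (hp : IsBumpPlacement δ x q)
include hp

section HalvingScale

variable (hδ : IsHalvingScale δ)
include hδ

theorem exists_placedBump_eq_affine {i j : ℕ} (hij : i < j) : ∃ γ α : ℝ,
    ∀ t ∈ Icc (x j) (x j + 4 * δ (q j)), placedBump δ (q i) (x i) t = γ + α * (t - x j) := by
  obtain ⟨c, hc⟩ := hp.exists_const i j hij
  refine ⟨placedBump δ (q i) (x i) (x j), bumpAmp (q i) * c,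
    eq_of_has_deriv_right_eq (f' := fun _ ↦ bumpAmp (q i) * c) (fun t ht ↦ ?_) (fun t _ ↦ ?_)
      (hδ.continuous_placedBump _ _).continuousOn (by fun_prop) (by simp)⟩
  · have hderiv := hδ.hasDerivAt_placedBump (q i) (x i) t
    rw [placedProfile, hc t (Ico_subset_Icc_self ht)] at hderiv
    exact hderiv.hasDerivWithinAt
  · simpa using ((((hasDerivAt_id t).sub_const (x j)).const_mul (bumpAmp (q i) * c)).const_add
      (placedBump δ (q i) (x i) (x j))).hasDerivWithinAt

theorem exists_partialLift_eq_affine (N : ℕ) : ∃ γ α : ℝ,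
    ∀ t ∈ Icc (x N) (x N + 4 * δ (q N)), partialLift δ x q N t = γ + α * (t - x N) := by
  choose! γ α haffine using fun i hi ↦ hp.exists_placedBump_eq_affine hδ (i := i) (j := N) hi
  refine ⟨x N + ∑ i ∈ Finset.range N, γ i, 1 + ∑ i ∈ Finset.range N, α i, fun t ht ↦ ?_⟩
  rw [partialLift, Finset.sum_congr rfl fun i hi ↦ haffine i (Finset.mem_range.1 hi) t ht,
    Finset.sum_add_distrib, ← Finset.sum_mul]
  ring

theorem exists_norm_fourierCoef_partialLift_sub_le (n : ℤ) (N : ℕ) : ∃ η : ℝ, ∀ k : ℤ,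
    ‖fourierCoef (phaseExp fun t ↦ n * partialLift δ x q (N + 1) t) k -
        fourierCoef (phaseExp fun t ↦ n * partialLift δ x q N t) k‖ ≤
      ‖bumpFourier (cantorStair δ (q N)) (δ (q N)) (n * bumpAmp (q N)) (η - k)‖ := by
  obtain ⟨γ, α, haffine⟩ := hp.exists_partialLift_eq_affine hδ N
  refine ⟨n * α, fun k ↦ ?_⟩
  have hsucc : (fun t ↦ n * partialLift δ x q (N + 1) t) = fun t ↦ n * partialLift δ x q N t +
      n * bumpAmp (q N) * bump (cantorStair δ (q N)) (δ (q N)) (t - x N) := by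
    funext t
    rw [partialLift_succ]
    ring
  rw [hsucc]
  refine (hδ.isRamp _).norm_fourierCoef_phaseExp_sub_le (γ := n * γ)
    ((hδ.continuous_partialLift x q N).const_mul _) (hp.pos N).le (hp.end_lt N).le
    (fun t ht ↦ ?_) _ k
  rw [haffine t ht]
  ring

theorem tendsto_partialLift (t : ℝ) :
    Tendsto (fun N ↦ partialLift δ x q N t) atTop (𝓝 (t + bumpSeries δ x q t)) :=
  (hp.summable_placedBump hδ t).hasSum.tendsto_sum_nat.const_add t

theorem apNorm_phaseExp_le_one_add_tsum {p : ℝ} (hp1 : 1 ≤ p) {h : ℝ → ℝ}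
    (hh : ∀ t ∈ Icc 0 (2 * π), h t = t + bumpSeries δ x q t) (n : ℤ) :
    ApNorm p (phaseExp fun t ↦ n * h t) ≤ 1 +
      ∑' N, eLpNorm (fourierCoef (phaseExp fun t ↦ n * partialLift δ x q (N + 1) t) -
        fourierCoef (phaseExp fun t ↦ n * partialLift δ x q N t)) (ENNReal.ofReal p)
          Measure.count := by
  have hp0 : 0 < p := one_pos.trans_le hp1
  have hlim (k : ℤ) := tendsto_fourierCoef_phaseExp
    (φ := fun N t ↦ n * partialLift δ x q N t) (ψ := fun t ↦ n * h t)
    (fun N ↦ (hδ.continuous_partialLift x q N).const_mul _)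
    (fun t ht ↦ hh t ht ▸ (hp.tendsto_partialLift hδ t).const_mul _) k
  have hzero : eLpNorm (fourierCoef (phaseExp fun t ↦ n * partialLift δ x q 0 t))
      (ENNReal.ofReal p) Measure.count = 1 := by
    simpa [partialLift, apNorm_eq_eLpNorm hp0] using apNorm_phaseExp_intCast_mul hp0 n
  rw [apNorm_eq_eLpNorm hp0, ← hzero]
  exact eLpNorm_le_add_tsum_eLpNorm_sub (ENNReal.one_le_ofReal.2 hp1)
    (f := fun N ↦ fourierCoef (phaseExp fun t ↦ n * partialLift δ x q N t))
    (fun _ ↦ .of_discrete) (.of_forall hlim)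

end HalvingScale

variable {ω χinv : ℝ → ℝ} {A : ℝ} (hδ : IsDyadicScale ω A δ) (h : IsModulus ω)
  (hχ : IsChiInverse ω χinv)
include hδ h hχ

theorem exists_eLpNorm_fourierCoef_partialLift_sub_le {p : ℝ} (hp1 : 1 ≤ p) :
    ∃ C ρ : ℝ, 0 < C ∧ 0 < ρ ∧ ρ < 1 ∧ ∀ (n : ℤ) (I N : ℕ), |(n : ℝ)| ≤ 2 ^ (I + 1) →
      eLpNorm (fourierCoef (phaseExp fun t ↦ n * partialLift δ x q (N + 1) t) -
          fourierCoef (phaseExp fun t ↦ n * partialLift δ x q N t)) (ENNReal.ofReal p)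
            Measure.count ≤ ENNReal.ofReal (C * dyadicSum χinv p I ^ (1 / p) * ρ ^ N) := by
  obtain ⟨C, ρ, hC, hρ, hρ1, hbump⟩ :=
    hδ.exists_sum_norm_bumpFourier_rpow_le_geometric h hχ hp1
  refine ⟨C, ρ, hC, hρ, hρ1, fun n I N hn ↦ ?_⟩
  have hp0 : 0 < p := one_pos.trans_le hp1
  have hS := hχ.dyadicSum_pos p I
  obtain ⟨η, hη⟩ := hp.exists_norm_fourierCoef_partialLift_sub_le hδ.toIsHalvingScale n N
  calc _ ≤ ENNReal.ofReal (C * ρ ^ q N * dyadicSum χinv p I ^ (1 / p)) := by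
        refine eLpNorm_count_le_mul_rpow hp0 (by positivity) hS.le fun F ↦ ?_
        exact (Finset.sum_le_sum fun k _ ↦ rpow_le_rpow (norm_nonneg _) (hη k) hp0.le).trans
          (hbump (q N) I n η F hn)
    _ ≤ ENNReal.ofReal (C * ρ ^ N * dyadicSum χinv p I ^ (1 / p)) := by
        refine ENNReal.ofReal_le_ofReal ?_
        gcongr ?_ * ?_ * ?_
        exact pow_le_pow_of_le_one hρ.le hρ1.le (hp.le_scale N)
    _ = _ := by rw [mul_right_comm]

theorem exists_apNorm_phaseExp_le_dyadicSum {p : ℝ} (hp1 : 1 ≤ p) :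
    ∃ C : ℝ, 0 < C ∧ ∀ (n : ℤ) (I : ℕ), |(n : ℝ)| ≤ 2 ^ (I + 1) →
      ApNorm p (phaseExp fun t ↦ n * circleLift (profileSeries δ x q) t) ≤
        ENNReal.ofReal (C * dyadicSum χinv p I ^ (1 / p)) := by
  obtain ⟨C, ρ, hC, hρ, hρ1, hstep⟩ :=
    hp.exists_eLpNorm_fourierCoef_partialLift_sub_le hδ h hχ hp1
  have hp0 : 0 < p := one_pos.trans_le hp1
  have hχ1 := hχ.pos one_pos
  have : 0 < 1 - ρ := sub_pos.2 hρ1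
  refine ⟨1 / χinv 1 + C / (1 - ρ), by positivity, fun n I hn ↦ ?_⟩
  set T := dyadicSum χinv p I ^ (1 / p)
  have hone : χinv 1 ≤ T := by
    have hroot := rpow_le_rpow (by positivity) (hχ.rpow_one_le_dyadicSum p I)
      (one_div_nonneg.2 hp0.le)
    rwa [← rpow_mul hχ1.le, mul_one_div_cancel hp0.ne', rpow_one] at hroot
  have hT0 : 0 < T := hχ1.trans_le hone
  calc _ ≤ 1 + ∑' N, ENNReal.ofReal (C * T * ρ ^ N) :=
        (hp.apNorm_phaseExp_le_one_add_tsum hδ.toIsHalvingScale hp1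
          (fun t ht ↦ hp.circleLift_profileSeries hδ h ht) n).trans
          (by gcongr with N; exact hstep n I N hn)
    _ = ENNReal.ofReal (1 + C / (1 - ρ) * T) := by
        rw [← ENNReal.ofReal_tsum_of_nonneg (fun N ↦ by positivity)
          ((summable_geometric_of_lt_one hρ.le hρ1).mul_left _), tsum_mul_left,
          tsum_geometric_of_lt_one hρ.le hρ1, ENNReal.ofReal_add zero_le_one (by positivity),
          ENNReal.ofReal_one]
        congr 2
        ring
    _ ≤ ENNReal.ofReal ((1 / χinv 1 + C / (1 - ρ)) * T) := by
        refine ENNReal.ofReal_le_ofReal ?_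
        rw [add_mul]
        gcongr
        rwa [one_div_mul_eq_div, one_le_div hχ1]

theorem exists_apNorm_one_phaseExp_le (hsub : IsSubdoubling ω) :
    ∃ C : ℝ, 0 < C ∧ ∀ n : ℤ, 2 ≤ |(n : ℝ)| →
      ApNorm 1 (phaseExp fun t ↦ n * circleLift (profileSeries δ x q) t) ≤
        ENNReal.ofReal (C * (|(n : ℝ)| / log |(n : ℝ)| *
          χinv (log |(n : ℝ)| ^ 2 / |(n : ℝ)|))) := by
  obtain ⟨C, hC, hnorm⟩ := hp.exists_apNorm_phaseExp_le_dyadicSum hδ h hχ le_rfl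
  obtain ⟨C', hC', hsum⟩ := hχ.exists_dyadicSum_one_le h hsub
  refine ⟨C * C', by positivity, fun n hn ↦ ?_⟩
  obtain ⟨I, hI, hI'⟩ := exists_nat_pow_near (one_le_two.trans hn) one_lt_two
  refine (hnorm n I hI'.le).trans (ENNReal.ofReal_le_ofReal ?_)
  rw [one_div_one, rpow_one, mul_assoc]
  exact mul_le_mul_of_nonneg_left (hsum _ I hn hI) hC.le

theorem exists_apNorm_phaseExp_le_integral {p : ℝ} (hp1 : 1 ≤ p) :
    ∃ C : ℝ, 0 < C ∧ ∀ n : ℤ, 2 ≤ |(n : ℝ)| →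
      ApNorm p (phaseExp fun t ↦ n * circleLift (profileSeries δ x q) t) ≤
        ENNReal.ofReal (C * (∫ τ in (1 : ℝ)..|(n : ℝ)|, χinv (1 / τ) ^ p) ^ (1 / p)) := by
  have hp0 : 0 < p := one_pos.trans_le hp1
  obtain ⟨C, hC, hnorm⟩ := hp.exists_apNorm_phaseExp_le_dyadicSum hδ h hχ hp1
  obtain ⟨C', hC', hsum⟩ := hχ.exists_dyadicSum_le_integral h hp0.le
  refine ⟨C * C' ^ (1 / p), by positivity, fun n hn ↦ ?_⟩
  obtain ⟨I, hI, hI'⟩ := exists_nat_pow_near (one_le_two.trans hn) one_lt_two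
  refine (hnorm n I hI'.le).trans (ENNReal.ofReal_le_ofReal ?_)
  have hle := hsum _ I hn hI
  have hint : 0 ≤ ∫ τ in (1 : ℝ)..|(n : ℝ)|, χinv (1 / τ) ^ p :=
    (pos_of_mul_pos_right ((hχ.dyadicSum_pos p I).trans_le hle) hC'.le).le
  rw [mul_assoc, ← mul_rpow hC'.le hint]
  have hS := (hχ.dyadicSum_pos p I).le
  gcongr

end IsBumpPlacement

end NormEstimates

/-- Theorem 4: if ω(2δ) < 2ω(δ) for small δ, there exists a nowhere
linear C^{1,ω}-diffeomorphism h of the circle with ‖e^{inh}‖_{A_p} = O(Θ_p(|n|))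
for all 1 ≤ p < 2. -/
theorem statement16
    -- ω is a modulus of continuity: continuous non-decreasing on [0,∞), ω(0)=0, ω(δ)>0 for δ>0,
    -- with χ(δ) = δ·ω(δ) strictly increasing and unbounded, and χinv its inverse.
    (ω : ℝ → ℝ)
    (hω_cont : ContinuousOn ω (Ici 0)) (hω_mono : MonotoneOn ω (Ici 0))
    (hω_zero : ω 0 = 0) (hω_pos : ∀ δ : ℝ, 0 < δ → 0 < ω δ)
    (hχ_mono : StrictMonoOn (fun δ => δ * ω δ) (Ici 0))
    (hχ_unbdd : ∀ y : ℝ, ∃ δ : ℝ, 0 ≤ δ ∧ y < δ * ω δ)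
    (χinv : ℝ → ℝ)
    (hχinv_left : ∀ δ : ℝ, 0 ≤ δ → χinv (δ * ω δ) = δ)
    (hχinv_right : ∀ y : ℝ, 0 ≤ y → 0 ≤ χinv y ∧ χinv y * ω (χinv y) = y)
    (hω_doubling : ∃ δ₀ : ℝ, 0 < δ₀ ∧ ∀ δ : ℝ, 0 < δ → δ < δ₀ → ω (2 * δ) < 2 * ω δ) :
    ∃ h : ℝ → ℝ,
      -- h is a C^{1,ω}-diffeomorphism of the circle
      ContDiff ℝ 1 h ∧
      (∀ t : ℝ, h (t + 2 * Real.pi) = h t + 2 * Real.pi) ∧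
      StrictMono h ∧
      (∀ t : ℝ, 0 < deriv h t) ∧
      (∃ C : ℝ, 0 < C ∧ ∀ s t : ℝ, |deriv h s - deriv h t| ≤ C * ω |s - t|) ∧
      -- h is nowhere linear
      (∀ u v : ℝ, u < v → ¬ ∃ a b : ℝ, ∀ t ∈ Ioo u v, h t = a * t + b) ∧
      -- ‖e^{inh}‖_{A₁} = O(Θ₁(|n|)) with Θ₁(y) = (y/log y)·χ^{-1}((log y)²/y)
      (∃ C : ℝ, 0 < C ∧ ∀ n : ℤ, 2 ≤ |(n : ℝ)| →
        ApNorm 1 (fun t => Complex.exp (Complex.I * (n : ℂ) * (h t : ℂ))) ≤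
          ENNReal.ofReal (C * ((|(n : ℝ)| / Real.log |(n : ℝ)|) *
            χinv ((Real.log |(n : ℝ)|) ^ 2 / |(n : ℝ)|)))) ∧
      -- ‖e^{inh}‖_{A_p} = O(Θ_p(|n|)) for 1 < p < 2
      (∀ p : ℝ, 1 < p → p < 2 →
        ∃ C : ℝ, 0 < C ∧ ∀ n : ℤ, 2 ≤ |(n : ℝ)| →
          ApNorm p (fun t => Complex.exp (Complex.I * (n : ℂ) * (h t : ℂ))) ≤
            ENNReal.ofReal (C * (∫ τ in (1:ℝ)..|(n : ℝ)|, (χinv (1 / τ)) ^ p) ^ (1 / p))) := by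
  have hmod : IsModulus ω := ⟨hω_cont, hω_mono, hω_zero, hω_pos⟩
  obtain ⟨A, δ, hδ⟩ := hmod.exists_isDyadicScale hω_doubling
  obtain ⟨x, q, hp⟩ := hδ.exists_isBumpPlacement
  have hβ := hp.isAdmissible hδ hmod
  have hphase (n : ℤ) : (fun t ↦ Complex.exp (Complex.I * (n : ℂ) *
      (circleLift (profileSeries δ x q) t : ℂ))) =
        phaseExp fun t ↦ n * circleLift (profileSeries δ x q) t := by
    funext t
    rw [phaseExp, Complex.ofReal_mul, Complex.ofReal_intCast, mul_assoc]
  refine ⟨circleLift (profileSeries δ x q), hβ.contDiff_circleLift hmod,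
    hβ.circleLift_add_two_pi hmod, strictMono_of_deriv_pos (hβ.deriv_circleLift_pos hmod),
    hβ.deriv_circleLift_pos hmod, ⟨2 * (32 / A), ?_, hβ.abs_deriv_circleLift_sub_le hmod⟩,
    fun u v huv ↦ hp.not_affine_circleLift hδ hmod huv, ?_, fun p hp1 _ ↦ ?_⟩
  · have := hδ.const_pos
    positivity
  · simpa only [hphase] using hp.exists_apNorm_one_phaseExp_le hδ hmod hχinv_right hω_doubling
  · simpa only [hphase] using hp.exists_apNorm_phaseExp_le_integral hδ hmod hχinv_right hp1.le
end

section
/- Let 1 ≤ p < 2 and let φ be an absolutely continuous real 2π-periodic function whose derivative φ′ belongs to L²(𝕋) (in particular, this holds for every real φ ∈ C¹(𝕋)). Then ‖e^{iλφ}‖_{A_p(𝕋)} = O(|λ|^{1/p − 1/2}) as |λ| → ∞, λ ∈ ℝ. -/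
open MeasureTheory Real Set
open scoped ENNReal

/-!
The function `f = e^{iλφ}` is absolutely continuous with `|f| = 1` and `|f'| = |λ| |φ'|`, so
Parseval's identity for `f` and for `f'` shows that `∑ (1 + (k/λ)²) |f̂(k)|²` is independent of `λ`.
Let `1/r = 1/p - 1/2`. Hölder's inequality with exponents `2` and `r` against the weight
`(1 + (k/λ)²)^{1/2}` bounds `‖f‖_{A_p}` by a constant times `(∑ (1 + (k/λ)²)^{-r/2})^{1/r}`.
Compared with an integral, this lattice sum is `O(|λ|)` as soon as `r > 1`, that is `p > 2/3`.
-/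

section AbsolutelyContinuous

variable {E F : Type*} {f : ℝ → E} {a b : ℝ}

lemma absolutelyContinuousOnInterval_lipschitzWith_comp [PseudoMetricSpace E] [PseudoMetricSpace F]
    {g : E → F} {K : NNReal} (hg : LipschitzWith K g) (hf : AbsolutelyContinuousOnInterval f a b) :
    AbsolutelyContinuousOnInterval (fun t ↦ g (f t)) a b := by
  have hlim := Filter.Tendsto.const_mul (K : ℝ) hf
  rw [mul_zero] at hlim
  refine squeeze_zero (fun _ ↦ Finset.sum_nonneg fun _ _ ↦ dist_nonneg) (fun I ↦ ?_) hlim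
  rw [Finset.mul_sum]
  exact Finset.sum_le_sum fun i _ ↦ hg.dist_le_mul _ _

lemma memLp_of_absolutelyContinuousOnInterval [NormedAddCommGroup E]
    (hf : AbsolutelyContinuousOnInterval f a b) (q : ℝ≥0∞) :
    MemLp f q (volume.restrict (uIoc a b)) := by
  obtain ⟨C, hC⟩ := hf.exists_bound
  have : IsFiniteMeasure (volume.restrict (uIoc a b)) := by rw [uIoc]; infer_instance
  exact MemLp.of_bound
    ((hf.continuousOn.mono uIoc_subset_uIcc).aestronglyMeasurable measurableSet_uIoc) C
    ((ae_restrict_mem measurableSet_uIoc).mono fun t ht ↦ hC t (uIoc_subset_uIcc ht))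

lemma integral_eq_sub_of_absolutelyContinuousOnInterval [NormedAddCommGroup E] [NormedSpace ℝ E]
    [CompleteSpace E] {f' : ℝ → E} (hf : AbsolutelyContinuousOnInterval f a b)
    (hderiv : ∀ᵐ x, x ∈ uIcc a b → HasDerivAt f (f' x) x)
    (hint : IntervalIntegrable f' volume a b) :
    ∫ x in a..b, f' x = f b - f a := by
  -- Continuous real functionals reduce this to the fundamental theorem for real functions.
  refine (SeparatingDual.eq_iff_forall_dual_eq (R := ℝ)).2 fun ℓ ↦ ?_
  have hℓf : AbsolutelyContinuousOnInterval (fun t ↦ ℓ (f t)) a b :=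
    absolutelyContinuousOnInterval_lipschitzWith_comp ℓ.lipschitz hf
  rw [map_sub, ← hℓf.integral_deriv_eq_sub, ← ℓ.intervalIntegral_comp_comm hint]
  refine intervalIntegral.integral_congr_ae ?_
  filter_upwards [hderiv] with x hx hxab
  exact (ℓ.hasFDerivAt.comp_hasDerivAt x (hx (uIoc_subset_uIcc hxab))).deriv.symm

section Primitive

variable {g g' : ℝ → ℝ} {c : ℝ} (hg' : IntervalIntegrable g' volume a b)
  (hg : ∀ t, g t = c + ∫ s in a..t, g' s)
include hg' hg

lemma absolutelyContinuousOnInterval_of_eq_const_add_integral :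
    AbsolutelyContinuousOnInterval g a b := by
  rw [funext hg]
  exact contDiffOn_const.absolutelyContinuousOnInterval.fun_add
    (hg'.absolutelyContinuousOnInterval_intervalIntegral left_mem_uIcc)

lemma ae_hasDerivAt_of_eq_const_add_integral :
    ∀ᵐ x, x ∈ uIcc a b → HasDerivAt g (g' x) x := by
  rw [funext hg]
  filter_upwards [hg'.ae_hasDerivAt_integral] with x hx hxab
  exact (hx hxab a left_mem_uIcc).const_add c

end Primitive

end AbsolutelyContinuous

lemma hasDerivAt_exp_mul_ofReal (c : ℂ) {φ : ℝ → ℝ} {φ' x : ℝ} (hφ : HasDerivAt φ φ' x) :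
    HasDerivAt (fun t ↦ Complex.exp (c * φ t)) (c * φ' * Complex.exp (c * φ x)) x := by
  simpa only [mul_comm (Complex.exp _)] using (hφ.ofReal_comp.const_mul c).cexp

section FourierCoef

lemma fourierCoef_eq_fourierCoeffOn (f : ℝ → ℂ) (k : ℤ) :
    fourierCoef f k = fourierCoeffOn two_pi_pos f k := by
  rw [fourierCoeffOn_eq_integral, fourierCoef, Complex.real_smul]
  congr 1
  · push_cast
    simp only [sub_zero]
  · refine intervalIntegral.integral_congr fun t _ ↦ ?_
    have hπ : (π : ℂ) ≠ 0 := Complex.ofReal_ne_zero.2 pi_ne_zero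
    simp only [smul_eq_mul, fourier_coe_apply, sub_zero]
    rw [mul_comm]
    congr 2
    push_cast
    field_simp

lemma hasSum_sq_norm_fourierCoef {f : ℝ → ℂ} (hf : MemLp f 2 (volume.restrict (Ioc 0 (2 * π)))) :
    HasSum (fun k : ℤ ↦ ‖fourierCoef f k‖ ^ 2) ((2 * π)⁻¹ * ∫ t in (0 : ℝ)..2 * π, ‖f t‖ ^ 2) := by
  simpa only [fourierCoef_eq_fourierCoeffOn, sub_zero, smul_eq_mul]
    using hasSum_sq_fourierCoeffOn two_pi_pos hf

variable {f f' : ℝ → ℂ} (hf : AbsolutelyContinuousOnInterval f 0 (2 * π))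
  (hderiv : ∀ᵐ x, x ∈ uIcc 0 (2 * π) → HasDerivAt f (f' x) x) (hper : f (2 * π) = f 0)
include hf hderiv hper

lemma fourierCoef_of_ae_hasDerivAt (hint : IntervalIntegrable f' volume 0 (2 * π)) (k : ℤ) :
    fourierCoef f' k = Complex.I * k * fourierCoef f k := by
  set e : ℝ → ℂ := fun t ↦ Complex.exp (-Complex.I * k * t) with he
  have he_deriv (t : ℝ) : HasDerivAt e (-Complex.I * k * e t) t := by
    simpa [he] using hasDerivAt_exp_mul_ofReal (-Complex.I * k) (hasDerivAt_id t)
  have he_cont : Continuous e := by fun_prop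
  have he_ac : AbsolutelyContinuousOnInterval e 0 (2 * π) :=
    (contDiff_const.mul Complex.ofRealCLM.contDiff).cexp.contDiffOn.absolutelyContinuousOnInterval
  have he_per : e (2 * π) = e 0 := by
    have := Complex.exp_int_mul_two_pi_mul_I (-k)
    simp only [he]
    simpa [mul_comm, mul_assoc, mul_left_comm] using this
  have hf'e : IntervalIntegrable (fun t ↦ f' t * e t) volume 0 (2 * π) :=
    hint.mul_continuousOn he_cont.continuousOn
  have hfe : IntervalIntegrable (fun t ↦ f t * e t) volume 0 (2 * π) :=
    (hf.continuousOn.mul he_cont.continuousOn).intervalIntegrable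
  have hprod_deriv : ∀ᵐ x, x ∈ uIcc 0 (2 * π) →
      HasDerivAt (f * e) (f' x * e x - Complex.I * k * (f x * e x)) x := by
    filter_upwards [hderiv] with x hx hx0
    exact ((hx hx0).mul (he_deriv x)).congr_deriv (by ring)
  have hzero := integral_eq_sub_of_absolutelyContinuousOnInterval (hf.smul he_ac) hprod_deriv
    (hf'e.sub (hfe.const_mul _))
  rw [intervalIntegral.integral_sub hf'e (hfe.const_mul _), intervalIntegral.integral_const_mul,
    smul_eq_mul, Pi.mul_apply, Pi.mul_apply, hper, he_per, sub_self, sub_eq_zero] at hzero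
  rw [fourierCoef, fourierCoef, hzero]
  ring

lemma hasSum_one_add_sq_mul_sq_norm_fourierCoef
    (hf' : MemLp f' 2 (volume.restrict (Ioc 0 (2 * π)))) (L : ℝ) :
    HasSum (fun k : ℤ ↦ (1 + (k / L) ^ 2) * ‖fourierCoef f k‖ ^ 2)
      ((2 * π)⁻¹ * (∫ t in (0 : ℝ)..2 * π, ‖f t‖ ^ 2) +
        (L ^ 2)⁻¹ * ((2 * π)⁻¹ * ∫ t in (0 : ℝ)..2 * π, ‖f' t‖ ^ 2)) := by
  have hint : IntervalIntegrable f' volume 0 (2 * π) :=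
    (intervalIntegrable_iff_integrableOn_Ioc_of_le two_pi_pos.le).2 (hf'.integrable one_le_two)
  have hf_mem : MemLp f 2 (volume.restrict (Ioc 0 (2 * π))) := by
    simpa only [uIoc_of_le two_pi_pos.le] using memLp_of_absolutelyContinuousOnInterval hf 2
  convert (hasSum_sq_norm_fourierCoef hf_mem).add
    ((hasSum_sq_norm_fourierCoef hf').mul_left (L ^ 2)⁻¹) using 2 with k
  rw [fourierCoef_of_ae_hasDerivAt hf hderiv hper hint, norm_mul, norm_mul, Complex.norm_I,
    Complex.norm_intCast, one_mul, mul_pow, sq_abs]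
  ring

end FourierCoef

section WeightedSequences

lemma tsum_rpow_le_mul_tsum_inv_rpow {ι : Type*} {p q r : ℝ} (hp : 0 < p) (hpq : p < q)
    (hpqr : 1 / p = 1 / q + 1 / r) (a w : ι → ℝ≥0∞) (hw₀ : ∀ i, w i ≠ 0) (hw : ∀ i, w i ≠ ∞) :
    (∑' i, a i ^ p) ^ (1 / p) ≤
      (∑' i, (w i * a i) ^ q) ^ (1 / q) * (∑' i, (w i)⁻¹ ^ r) ^ (1 / r) := by
  let _ : MeasurableSpace ι := ⊤
  have hcancel (i : ι) : w i * a i * (w i)⁻¹ = a i := by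
    rw [mul_right_comm, ENNReal.mul_inv_cancel (hw₀ i) (hw i), one_mul]
  simpa only [lintegral_count, Pi.mul_apply, hcancel] using
    ENNReal.lintegral_Lp_mul_le_Lq_mul_Lr hp hpq hpqr Measure.count
      (f := fun i ↦ w i * a i) (g := fun i ↦ (w i)⁻¹)
      Measurable.of_discrete.aemeasurable Measurable.of_discrete.aemeasurable

lemma one_add_sq_rpow_neg_le_of_abs_sub_le_one {r x y : ℝ} (hr : 0 ≤ r) (hxy : |y - x| ≤ 1) :
    (1 + x ^ 2) ^ (-r / 2) ≤ 3 ^ (r / 2) * (1 + y ^ 2) ^ (-r / 2) := by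
  have hle : (1 + y ^ 2) / 3 ≤ 1 + x ^ 2 := by
    nlinarith [sq_nonneg (y - 2 * x), (sq_le_one_iff_abs_le_one _).2 hxy]
  calc (1 + x ^ 2) ^ (-r / 2) ≤ ((1 + y ^ 2) / 3) ^ (-r / 2) :=
        rpow_le_rpow_of_nonpos (by positivity) hle (by linarith)
    _ = 3 ^ (r / 2) * (1 + y ^ 2) ^ (-r / 2) := by
        rw [div_rpow (by positivity) zero_le_three, neg_div, rpow_neg zero_le_three,
          div_inv_eq_mul, mul_comm]

lemma exists_tsum_one_add_sq_rpow_neg_le {r : ℝ} (hr : 1 < r) :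
    ∃ C : ℝ, 0 < C ∧ ∀ L : ℝ, 1 ≤ L →
      ∑' k : ℤ, ENNReal.ofReal ((1 + (k / L) ^ 2) ^ (-r / 2)) ≤ ENNReal.ofReal (C * L) := by
  set g : ℝ → ℝ := fun x ↦ (1 + x ^ 2) ^ (-r / 2)
  have hg_pos (x : ℝ) : 0 < g x := by positivity
  have hg_int : Integrable g := by
    simpa only [norm_eq_abs, sq_abs] using
      integrable_rpow_neg_one_add_norm_sq (E := ℝ) (μ := volume) (by simpa using hr)
  have hg_integral_pos : 0 < ∫ x, g x := by
    rw [integral_pos_iff_support_of_nonneg (fun x ↦ (hg_pos x).le) hg_int,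
      Function.support_eq_univ fun x ↦ (hg_pos x).ne']
    simp
  refine ⟨3 ^ (r / 2) * ∫ x, g x, by positivity, fun L hL ↦ ?_⟩
  have hL₀ : 0 < L := by linarith
  have hsum : HasSum (fun k : ℤ ↦ ∫ t in (k : ℝ)..k + 1, g (t / L)) (L * ∫ x, g x) := by
    simpa [Measure.integral_comp_div, abs_of_pos hL₀] using
      (hg_int.comp_div hL₀.ne').hasSum_intervalIntegral 0
  have hterm (k : ℤ) : g (k / L) ≤ 3 ^ (r / 2) * ∫ t in (k : ℝ)..k + 1, g (t / L) := by
    have hle := intervalIntegral.integral_mono_on (a := (k : ℝ)) (b := k + 1) (by linarith)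
      (intervalIntegrable_const (c := g (k / L)))
      ((hg_int.comp_div hL₀.ne').intervalIntegrable.const_mul (3 ^ (r / 2))) fun t ht ↦ by
        refine one_add_sq_rpow_neg_le_of_abs_sub_le_one (by linarith) ?_
        rw [← sub_div, abs_div, abs_of_pos hL₀, div_le_one hL₀, abs_le]
        constructor <;> linarith [ht.1, ht.2]
    simpa using hle
  have hterm_nonneg (k : ℤ) : 0 ≤ 3 ^ (r / 2) * ∫ t in (k : ℝ)..k + 1, g (t / L) :=
    (hg_pos _).le.trans (hterm k)
  calc ∑' k : ℤ, ENNReal.ofReal (g (k / L))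
      ≤ ∑' k : ℤ, ENNReal.ofReal (3 ^ (r / 2) * ∫ t in (k : ℝ)..k + 1, g (t / L)) :=
        ENNReal.tsum_le_tsum fun k ↦ ENNReal.ofReal_le_ofReal (hterm k)
    _ = ENNReal.ofReal (3 ^ (r / 2) * (L * ∫ x, g x)) := by
        rw [← ENNReal.ofReal_tsum_of_nonneg hterm_nonneg (hsum.mul_left _).summable,
          (hsum.mul_left _).tsum_eq]
    _ = ENNReal.ofReal (3 ^ (r / 2) * (∫ x, g x) * L) := by ring_nf

lemma exists_apNorm_le_of_hasSum {p : ℝ} (hp : 2 / 3 < p) (hp2 : p < 2) :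
    ∃ C : ℝ, 0 < C ∧ ∀ (f : ℝ → ℂ) (L B : ℝ), 1 ≤ L →
      HasSum (fun k : ℤ ↦ (1 + (k / L) ^ 2) * ‖fourierCoef f k‖ ^ 2) B →
      ApNorm p f ≤ ENNReal.ofReal (√B * (C * L) ^ (1 / p - 1 / 2)) := by
  have hp₀ : 0 < p := by linarith
  have hp2' : 0 < 2 - p := by linarith
  set r : ℝ := 2 * p / (2 - p) with hr_def
  have hr : 1 < r := by rw [hr_def, lt_div_iff₀ hp2']; linarith
  have hr_inv : 1 / r = 1 / p - 1 / 2 := by rw [hr_def]; field_simp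
  obtain ⟨C, hC, hC_tsum⟩ := exists_tsum_one_add_sq_rpow_neg_le hr
  refine ⟨C, hC, fun f L B hL hB ↦ ?_⟩
  set w : ℤ → ℝ≥0∞ := fun k ↦ ENNReal.ofReal (√(1 + (k / L) ^ 2))
  have hweighted (k : ℤ) : (w k * ‖fourierCoef f k‖₊) ^ (2 : ℝ) =
      ENNReal.ofReal ((1 + (k / L) ^ 2) * ‖fourierCoef f k‖ ^ 2) := by
    rw [← enorm_eq_nnnorm, ← ofReal_norm, ← ENNReal.ofReal_mul (by positivity), ENNReal.rpow_two,
      ← ENNReal.ofReal_pow (by positivity), mul_pow, sq_sqrt (by positivity)]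
  have hinv (k : ℤ) : (w k)⁻¹ ^ r = ENNReal.ofReal ((1 + (k / L) ^ 2) ^ (-r / 2)) := by
    rw [← ENNReal.ofReal_inv_of_pos (by positivity),
      ENNReal.ofReal_rpow_of_nonneg (by positivity) (by linarith), sqrt_eq_rpow,
      ← rpow_neg (by positivity), ← rpow_mul (by positivity)]
    ring_nf
  calc ApNorm p f
      ≤ (∑' k, (w k * ‖fourierCoef f k‖₊) ^ (2 : ℝ)) ^ (1 / 2 : ℝ) *
          (∑' k, (w k)⁻¹ ^ r) ^ (1 / r) := by
        refine tsum_rpow_le_mul_tsum_inv_rpow hp₀ hp2 (by rw [hr_inv]; ring) _ w (fun k ↦ ?_)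
          fun k ↦ ENNReal.ofReal_ne_top
        exact (ENNReal.ofReal_pos.2 (by positivity)).ne'
    _ ≤ ENNReal.ofReal B ^ (1 / 2 : ℝ) * ENNReal.ofReal (C * L) ^ (1 / r) := by
        simp only [hweighted, hinv]
        gcongr
        · rw [← ENNReal.ofReal_tsum_of_nonneg (fun k ↦ by positivity) hB.summable, hB.tsum_eq]
        · exact hC_tsum L hL
    _ = ENNReal.ofReal (√B * (C * L) ^ (1 / p - 1 / 2)) := by
        rw [ENNReal.ofReal_rpow_of_nonneg (hB.nonneg fun k ↦ by positivity) (by positivity),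
          ENNReal.ofReal_rpow_of_nonneg (by positivity) (by positivity), ← sqrt_eq_rpow,
          ← ENNReal.ofReal_mul (sqrt_nonneg B), hr_inv]

end WeightedSequences

section UnimodularExponential

lemma norm_exp_I_mul_ofReal_mul_ofReal (lam x : ℝ) :
    ‖Complex.exp (Complex.I * lam * x)‖ = 1 := by
  rw [mul_assoc, ← Complex.ofReal_mul, Complex.norm_exp_I_mul_ofReal]

lemma lipschitzWith_exp_I_mul (lam : ℝ) :
    LipschitzWith ‖lam‖₊ (fun x : ℝ ↦ Complex.exp (Complex.I * lam * x)) := by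
  have hd (x : ℝ) : HasDerivAt (fun x : ℝ ↦ Complex.exp (Complex.I * lam * x))
      (Complex.I * lam * Complex.exp (Complex.I * lam * x)) x := by
    simpa using hasDerivAt_exp_mul_ofReal (Complex.I * lam) (hasDerivAt_id x)
  refine lipschitzWith_of_nnnorm_deriv_le (fun x ↦ (hd x).differentiableAt) fun x ↦ ?_
  rw [(hd x).deriv, ← NNReal.coe_le_coe]
  simp [norm_exp_I_mul_ofReal_mul_ofReal]

lemma hasSum_one_add_sq_mul_sq_norm_fourierCoef_exp {φ φ' : ℝ → ℝ}
    (hφ : AbsolutelyContinuousOnInterval φ 0 (2 * π))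
    (hderiv : ∀ᵐ x, x ∈ uIcc 0 (2 * π) → HasDerivAt φ (φ' x) x) (hper : φ (2 * π) = φ 0)
    (hφ' : MemLp φ' 2 (volume.restrict (Ioc 0 (2 * π)))) {lam : ℝ} (hlam : lam ≠ 0) :
    HasSum (fun k : ℤ ↦
        (1 + (k / |lam|) ^ 2) * ‖fourierCoef (fun t ↦ Complex.exp (Complex.I * lam * φ t)) k‖ ^ 2)
      (1 + (2 * π)⁻¹ * ∫ t in (0 : ℝ)..2 * π, φ' t ^ 2) := by
  set f : ℝ → ℂ := fun t ↦ Complex.exp (Complex.I * lam * φ t) with hf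
  set f' : ℝ → ℂ := fun t ↦ Complex.I * lam * φ' t * f t with hf'
  have hf_ac : AbsolutelyContinuousOnInterval f 0 (2 * π) :=
    absolutelyContinuousOnInterval_lipschitzWith_comp (f := φ) (lipschitzWith_exp_I_mul lam) hφ
  have hf_deriv : ∀ᵐ x, x ∈ uIcc 0 (2 * π) → HasDerivAt f (f' x) x := by
    filter_upwards [hderiv] with x hx hx0
    exact hasDerivAt_exp_mul_ofReal (Complex.I * lam) (hx hx0)
  have hf_norm (t : ℝ) : ‖f t‖ = 1 := norm_exp_I_mul_ofReal_mul_ofReal lam (φ t)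
  have hf'_norm (t : ℝ) : ‖f' t‖ = ‖lam * φ' t‖ := by
    simp [hf', hf_norm]
  have hf'_mem : MemLp f' 2 (volume.restrict (Ioc 0 (2 * π))) := by
    refine (hφ'.const_mul lam).of_le ?_ (.of_forall fun t ↦ (hf'_norm t).le)
    have hf_meas : AEStronglyMeasurable f (volume.restrict (Ioc 0 (2 * π))) := by
      simpa only [uIoc_of_le two_pi_pos.le] using
        (memLp_of_absolutelyContinuousOnInterval hf_ac 2).aestronglyMeasurable
    exact (hφ'.ofReal.aestronglyMeasurable.const_mul _).mul hf_meas
  convert hasSum_one_add_sq_mul_sq_norm_fourierCoef hf_ac hf_deriv (by simp only [hf, hper]) hf'_mem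
    |lam| using 2
  · simp only [hf_norm, one_pow, intervalIntegral.integral_const, sub_zero, smul_eq_mul, mul_one]
    rw [inv_mul_cancel₀ two_pi_pos.ne']
  · simp only [hf'_norm, norm_eq_abs, sq_abs, mul_pow, intervalIntegral.integral_const_mul]
    field_simp

theorem statement17_general {p : ℝ} (hp : 2 / 3 < p) (hp2 : p < 2) {φ φ' : ℝ → ℝ}
    (hφ : AbsolutelyContinuousOnInterval φ 0 (2 * π))
    (hderiv : ∀ᵐ x, x ∈ uIcc 0 (2 * π) → HasDerivAt φ (φ' x) x) (hper : φ (2 * π) = φ 0)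
    (hφ' : MemLp φ' 2 (volume.restrict (Ioc 0 (2 * π)))) :
    ∃ C : ℝ, 0 < C ∧ ∀ lam : ℝ, 1 ≤ |lam| →
      ApNorm p (fun t ↦ Complex.exp (Complex.I * lam * φ t)) ≤
        ENNReal.ofReal (C * |lam| ^ (1 / p - 1 / 2)) := by
  obtain ⟨C, hC, hC_le⟩ := exists_apNorm_le_of_hasSum hp hp2
  set B := 1 + (2 * π)⁻¹ * ∫ t in (0 : ℝ)..2 * π, φ' t ^ 2
  have hB : 0 < B := by
    have := intervalIntegral.integral_nonneg (μ := volume) two_pi_pos.le fun t _ ↦ sq_nonneg (φ' t)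
    positivity
  refine ⟨√B * C ^ (1 / p - 1 / 2), by positivity, fun lam hlam ↦ ?_⟩
  rw [mul_assoc, ← mul_rpow hC.le (abs_nonneg lam)]
  exact hC_le _ _ B hlam (hasSum_one_add_sq_mul_sq_norm_fourierCoef_exp hφ hderiv hper hφ'
    (abs_pos.1 (by linarith)))

end UnimodularExponential

/-- estimate (1): for an absolutely continuous real 2π-periodic φ with
φ′ ∈ L²(𝕋), ‖e^{iλφ}‖_{A_p} = O(|λ|^{1/p − 1/2}) as |λ| → ∞, for 1 ≤ p < 2. -/
theorem statement17
    (p : ℝ) (hp1 : 1 ≤ p) (hp2 : p < 2)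
    (φ φ' : ℝ → ℝ)
    (hφ_per : ∀ t : ℝ, φ (t + 2 * Real.pi) = φ t)
    -- φ is absolutely continuous with derivative φ′
    (hφ'_locint : ∀ t : ℝ, IntervalIntegrable φ' volume 0 t)
    (hφ_ac : ∀ t : ℝ, φ t = φ 0 + ∫ s in (0:ℝ)..t, φ' s)
    -- φ′ ∈ L²(𝕋)
    (hφ'_L2 : IntervalIntegrable (fun s => (φ' s) ^ 2) volume 0 (2 * Real.pi)) :
    ∃ C : ℝ, 0 < C ∧ ∃ Λ : ℝ, 1 ≤ Λ ∧ ∀ lam : ℝ, Λ ≤ |lam| →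
      ApNorm p (fun t => Complex.exp (Complex.I * (lam : ℂ) * (φ t : ℂ))) ≤
        ENNReal.ofReal (C * |lam| ^ (1 / p - 1 / 2)) := by
  have hint := hφ'_locint (2 * π)
  have hφ'_memLp : MemLp φ' 2 (volume.restrict (Ioc 0 (2 * π))) :=
    (memLp_two_iff_integrable_sq hint.1.aestronglyMeasurable).2 hφ'_L2.1
  obtain ⟨C, hC, hC_le⟩ := statement17_general (by linarith) hp2
    (absolutelyContinuousOnInterval_of_eq_const_add_integral hint hφ_ac)
    (ae_hasDerivAt_of_eq_const_add_integral hint hφ_ac) (by simpa using hφ_per 0) hφ'_memLp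
  exact ⟨C, hC, 1, le_rfl, hC_le⟩
end
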